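/- There exists ε₀ > 0 such that for every ε ∈ (0, ε₀) and every c > 0 there exist thresholds q₀(ε, c) and Q₀(c) with the following property. Let q ≥ q₀ be a natural number, let Q₁ ∈ [B(q), q^{ε²}] with Q₁ ≥ Q₀, let h : ℕ → ℝ∖{0} be a multiplicative function, adopt the General set-up, and let Δ ∈ {+,−} and a ∈ (ℤ/qℤ)^×. If there exist Δ̄ = (Δ₁, …, Δ₆) ∈ {+,−}⁶ with Δ₁Δ₂Δ₃Δ₄Δ₅Δ₆ = Δ (product of signs in {±1}), a set 𝒦 ⊆ (ℤ ∩ [−K, K])³, and B₄, B₅, B₆ ⊆ (ℤ/qℤ)^× such that S^{Δ̄,𝒦}_{B₄,B₅,B₆}(a) ≥ c · (φ(q)/q) · (log q)³ / (q · Q₁^{1/100} · (log Q₁)²), then a ∈ E_h^{Δ}(q² Q₁). -/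

import Mathlib

/-!
Suppose `a ∉ E_h^Δ(q²Q₁)`.  A six-tuple `(n₁, n₂, n₃, p, u, m)` counted by `S` has product congruent
to `a` and at most `q²Q₁`, since `R·U = R²·M = q`.  If the product is squarefree, multiplicativity
gives it the sign `Δ₁⋯Δ₆ = Δ`, so it would put `a` into `E_h^Δ(q²Q₁)`.  Hence only tuples whose
product is not squarefree contribute (`conv_le`).  Each has weight `W³`, where `W` is the Mertens
factor, `W ≪ √ε · log q · φ(q)/q` (`mertens_bound`), while the normalisation is `≫ q²Q₁`
(`le_Skbar`).  The theorem therefore follows from the bound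
`#{tuples with non-squarefree product} ≪ ε⁻¹ q Q₁^(2/3) (log Q₁)⁴` (`count_bad`): the factor `ε⁻¹` is
cancelled by `(√ε)³ ≤ ε`, and `S ≪ (φ(q)/q) (log q)³ Q₁^(-1/3) (log Q₁)⁴ / q` is incompatible with
the assumed lower bound once `Q₁` is large in terms of `c` alone.

Put `z = q^√ε`.  The `n_i` are composed of primes `≥ z`, and `p, m < z`.  So there are four ways to
fail to be squarefree (`GoodK.bad_cases`).

* `r²` divides the product for a prime `r ≥ z`.  Then `r ≤ √q`, the integers `≤ q²Q₁` in the class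
  `a` modulo `q` divisible by `r²` number `≪ qQ₁/r² + 1`, and an integer of this size has boundedly
  many divisors composed of primes `≥ z` (`count_large_prime`).
* `p ∣ u` or `p ∣ m` (`count_p_dvd_u`, `count_p_dvd_m`).
* A prime `r` divides both `u` and `m` (`count_um`).

The last three cases rest on `core_count`.  After the common prime has been taken out, the tuple is
split into two blocks, one containing `n₁ u` and the other `n₂ n₃ m`, each at most `q`.  The
congruence modulo `q` then makes each block determine the other, so the product of the numbers of
factorisations of the two blocks is summed over a partial matching of `[1, q]` with itself.
Hölder's inequality reduces this to the number of triples `(n₂, n₃, m)` and to moments of `τ_P`, the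
number of divisors composed of primes in `P` (`sum_tauP_pow_le`).  Here `P` consists of the primes
`≥ z` and at most two `e`-adic blocks of primes, so that `∑ 1/d` over `d ≤ q` composed of primes in
`P` is `O(1/√ε)`, with no power of `log q` lost.

For `r ∣ gcd(u, m)` the core estimate gives `≪ ε⁻¹ q Q₁^(1/3) / r`, which is summable over
`log r ≪ (log Q₁)⁴`.  For larger `r`, membership of `m` in the ladder set `𝒮` provides a further
prime `l ∣ m` with `(log r)⁹ ≤ l < r/Q₁` (`ladder_claim`).  Moving `l` from the second block to the
first one keeps both blocks below `q` and gains `l^(-1/3)`, which makes the sum over `r` converge.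
-/

open scoped BigOperators Classical

noncomputable section

/-- `h` is a multiplicative arithmetic function. -/
def IsMultFn (h : ℕ → ℝ) : Prop :=
  h 1 = 1 ∧ ∀ m n : ℕ, Nat.Coprime m n → h (m * n) = h m * h n

/-- `P(z)`: the product of all primes `p < z`. -/
def primorialLT (z : ℝ) : ℕ :=
  ∏ p ∈ (Finset.range ⌈z⌉₊).filter Nat.Prime, p

/-- The Mertens-type factor `∏_{p < z, p ∤ q} (1 - 1/p)⁻¹`. -/
def mertensFactor (q : ℕ) (z : ℝ) : ℝ :=
  ∏ p ∈ (Finset.range ⌈z⌉₊).filter (fun p : ℕ => p.Prime ∧ ¬ p ∣ q), (1 - 1 / (p : ℝ))⁻¹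

/-- The residue of `n` modulo `q` lies (as a unit) in `B ⊆ (ℤ/qℤ)ˣ`. -/
def memUnit (q : ℕ) (B : Set ((ZMod q)ˣ)) (n : ℕ) : Prop :=
  ∃ u : (ZMod q)ˣ, ((u : ZMod q) = (n : ZMod q)) ∧ u ∈ B

/-- `B(q)`: the least `B ≥ 2` such that for every `z ≥ B` the number of primes `p ≤ z`
dividing `q` is at most `z / (10 log z)`. -/
def Bq (q : ℕ) : ℕ :=
  sInf {B : ℕ | 2 ≤ B ∧ ∀ z : ℝ, (B : ℝ) ≤ z →
    (((Finset.range (q + 1)).filter (fun p : ℕ => p.Prime ∧ p ∣ q ∧ (p : ℝ) ≤ z)).card : ℝ)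
      ≤ z / (10 * Real.log z)}

/-- `P_j = exp(j^(4j) (log Q₁)^j)` for `j ≥ 2`. -/
def Pj (Q₁ : ℝ) (j : ℕ) : ℝ := Real.exp ((j : ℝ) ^ (4 * j) * Real.log Q₁ ^ j)

/-- `Q_j = exp(100 j^(4j+2) (log Q₁)^j)` for `j ≥ 2`. -/
def Qj (Q₁ : ℝ) (j : ℕ) : ℝ := Real.exp (100 * (j : ℝ) ^ (4 * j + 2) * Real.log Q₁ ^ j)

/-- `J`: the largest index `j ≥ 2` with `Q_j ≤ exp((log q)^(1/2))`. -/
def Jmax (q : ℕ) (Q₁ : ℝ) : ℕ :=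
  sSup {j : ℕ | 2 ≤ j ∧ Qj Q₁ j ≤ Real.exp (Real.sqrt (Real.log q))}

/-- `𝒮`: integers having at least one prime factor in each interval `(P_j, Q_j]`,
`2 ≤ j ≤ J`. -/
def ladderSet (q : ℕ) (Q₁ : ℝ) : Set ℕ :=
  {m : ℕ | ∀ j : ℕ, 2 ≤ j → j ≤ Jmax q Q₁ →
    ∃ p : ℕ, p.Prime ∧ p ∣ m ∧ Pj Q₁ j < (p : ℝ) ∧ (p : ℝ) ≤ Qj Q₁ j}

/-- Membership of `n` in the `e`-adic interval `I_y(k) = (e^(k-1) y, e^k y]`. -/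
def inIyk (y : ℝ) (k : ℤ) (n : ℕ) : Prop :=
  Real.exp ((k : ℝ) - 1) * y < (n : ℝ) ∧ (n : ℝ) ≤ Real.exp (k : ℝ) * y

/-- The length `|I_y(k)| = e^k y - e^(k-1) y` of the interval `I_y(k)`. -/
def lenIyk (y : ℝ) (k : ℤ) : ℝ := Real.exp (k : ℝ) * y - Real.exp ((k : ℝ) - 1) * y

/-- `f_k^Δ` of the General set-up, with `R = q^(1/2 - ε/4)` and `z = q^√ε`;
the sign `Δ` is encoded as `±1 : ℝ` and `sgn(h(n)) = Δ` as `0 < Δ · h n`. -/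
def fG (q : ℕ) (ε : ℝ) (h : ℕ → ℝ) (Δ : ℝ) (k : ℤ) (n : ℕ) : ℝ :=
  mertensFactor q ((q : ℝ) ^ Real.sqrt ε) *
    (if 0 < Δ * h n ∧ Nat.gcd n (primorialLT ((q : ℝ) ^ Real.sqrt ε)) = 1 ∧
        inIyk ((q : ℝ) ^ ((1 : ℝ) / 2 - ε / 4)) k n ∧ Nat.Coprime n q
      then 1 else 0)

/-- `𝒬_B^Δ` (General set-up): primes in `(Q₁/e, Q₁]` landing in `B` with sign `Δ`. -/
def QG (q : ℕ) (Q₁ : ℝ) (h : ℕ → ℝ) (B : Set ((ZMod q)ˣ)) (Δ : ℝ) : Set ℕ :=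
  {p : ℕ | p.Prime ∧ Q₁ / Real.exp 1 < (p : ℝ) ∧ (p : ℝ) ≤ Q₁ ∧
    memUnit q B p ∧ 0 < Δ * h p}

/-- `𝒰_{B,v}^Δ` (General set-up), with `U = q^(1/2 + ε/4)`. -/
def UG (q : ℕ) (ε : ℝ) (h : ℕ → ℝ) (B : Set ((ZMod q)ˣ)) (Δ : ℝ) (v : ℤ) : Set ℕ :=
  {u : ℕ | inIyk ((q : ℝ) ^ ((1 : ℝ) / 2 + ε / 4)) v u ∧ Squarefree u ∧
    memUnit q B u ∧ 0 < Δ * h u}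

/-- `ℳ_{B,v}^Δ` (General set-up), with `M = q^(ε/2)`. -/
def MG (q : ℕ) (ε Q₁ : ℝ) (h : ℕ → ℝ) (B : Set ((ZMod q)ˣ)) (Δ : ℝ) (v : ℤ) : Set ℕ :=
  {m : ℕ | inIyk ((q : ℝ) ^ (ε / 2)) v m ∧ Squarefree m ∧ m ∈ ladderSet q Q₁ ∧
    memUnit q B m ∧ 0 < Δ * h m ∧ Nat.gcd m (primorialLT Q₁) = 1}

/-- Indicator function of a set of naturals. -/
def ind (S : Set ℕ) (n : ℕ) : ℝ := if n ∈ S then 1 else 0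

/-- `∑_{n ≡ a (mod q)} (g₁ ∗ ⋯ ∗ g₆)(n)` for the Dirichlet convolution `∗` on `ℕ`. -/
def conv6Sum (q : ℕ) (g₁ g₂ g₃ g₄ g₅ g₆ : ℕ → ℝ) (a : ZMod q) : ℝ :=
  ∑ᶠ t : ℕ × ℕ × ℕ × ℕ × ℕ × ℕ,
    if ((t.1 * t.2.1 * t.2.2.1 * t.2.2.2.1 * t.2.2.2.2.1 * t.2.2.2.2.2 : ℕ) : ZMod q) = a then
      g₁ t.1 * g₂ t.2.1 * g₃ t.2.2.1 * g₄ t.2.2.2.1 * g₅ t.2.2.2.2.1 * g₆ t.2.2.2.2.2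
    else 0

/-- The normalisation `S_{k̄} = |I_R(k₁)|·|I_R(k₂)|·|I_R(k₃)|·Q₁·U e^(-k₁)·M e^(-k₂-k₃)`. -/
def Skbar (q : ℕ) (ε Q₁ : ℝ) (kbar : ℤ × ℤ × ℤ) : ℝ :=
  lenIyk ((q : ℝ) ^ ((1 : ℝ) / 2 - ε / 4)) kbar.1 *
    lenIyk ((q : ℝ) ^ ((1 : ℝ) / 2 - ε / 4)) kbar.2.1 *
    lenIyk ((q : ℝ) ^ ((1 : ℝ) / 2 - ε / 4)) kbar.2.2 * Q₁ *
    ((q : ℝ) ^ ((1 : ℝ) / 2 + ε / 4) * Real.exp (-(kbar.1 : ℝ))) *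
    ((q : ℝ) ^ (ε / 2) * Real.exp (-(kbar.2.1 : ℝ) - (kbar.2.2 : ℝ)))

/-- `S^{Δ̄,𝒦}_{B₄,B₅,B₆}(a)` from the General set-up. -/
def SG (q : ℕ) (ε Q₁ : ℝ) (h : ℕ → ℝ) (Δ₁ Δ₂ Δ₃ Δ₄ Δ₅ Δ₆ : ℝ)
    (𝒦 : Finset (ℤ × ℤ × ℤ)) (B₄ B₅ B₆ : Set ((ZMod q)ˣ)) (a : (ZMod q)ˣ) : ℝ :=
  ∑ kbar ∈ 𝒦, (1 / Skbar q ε Q₁ kbar) *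
    conv6Sum q (fG q ε h Δ₁ kbar.1) (fG q ε h Δ₂ kbar.2.1) (fG q ε h Δ₃ kbar.2.2)
      (ind (QG q Q₁ h B₄ Δ₄)) (ind (UG q ε h B₅ Δ₅ (-kbar.1)))
      (ind (MG q ε Q₁ h B₆ Δ₆ (-kbar.2.1 - kbar.2.2))) ((a : (ZMod q)ˣ) : ZMod q)

/-- `E_h^Δ(x)`: residues represented by a squarefree `n ≤ x` with `sgn(h(n)) = Δ`. -/
def EhSet (q : ℕ) (h : ℕ → ℝ) (Δ x : ℝ) : Set ((ZMod q)ˣ) :=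
  {a : (ZMod q)ˣ | ∃ n : ℕ, Squarefree n ∧ (n : ℝ) ≤ x ∧
    ((n : ZMod q) = (a : ZMod q)) ∧ 0 < Δ * h n}

/-! ### Estimates of Mertens -/

/-- Sum of `log p / p` over primes `p ≤ N` (Mertens' first theorem, upper bound). -/
lemma sum_log_div_prime_le (N : ℕ) (hN : 1 ≤ N) :
    ∑ p ∈ (Finset.range (N + 1)).filter Nat.Prime, Real.log p / p ≤ Real.log N + 2 := by
  have hN0 : (0 : ℝ) < N := by exact_mod_cast hN
  -- `∑_p log p · ⌊N/p⌋ ≤ log N!`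
  have h1 : ∑ p ∈ (Finset.range (N + 1)).filter Nat.Prime, Real.log p * ((N / p : ℕ) : ℝ)
      ≤ N * Real.log N := by
    have hA : ∀ p ∈ (Finset.range (N + 1)).filter Nat.Prime,
        Real.log p * ((N / p : ℕ) : ℝ) =
          ∑ k ∈ Finset.Ioc 0 N, if p ∣ k then Real.log p else 0 := by
      intro p hp
      rw [← Finset.sum_filter, Finset.sum_const, Nat.Ioc_filter_dvd_card_eq_div, nsmul_eq_mul,
        mul_comm]
    rw [Finset.sum_congr rfl hA, Finset.sum_comm]
    have hB : ∀ k ∈ Finset.Ioc 0 N,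
        (∑ p ∈ (Finset.range (N + 1)).filter Nat.Prime, if p ∣ k then Real.log p else 0)
          ≤ Real.log N := by
      intro k hk
      rw [Finset.mem_Ioc] at hk
      rw [← Finset.sum_filter]
      calc _ ≤ ∑ d ∈ k.divisors, ArithmeticFunction.vonMangoldt d := by
            calc _ = ∑ p ∈ ((Finset.range (N + 1)).filter Nat.Prime).filter (· ∣ k),
                  ArithmeticFunction.vonMangoldt p := by
                  apply Finset.sum_congr rfl
                  intro p hp
                  simp only [Finset.mem_filter] at hp
                  rw [ArithmeticFunction.vonMangoldt_apply_prime hp.1.2]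
              _ ≤ _ := by
                  apply Finset.sum_le_sum_of_subset_of_nonneg
                  · intro p hp
                    simp only [Finset.mem_filter] at hp
                    exact Nat.mem_divisors.2 ⟨hp.2, by omega⟩
                  · intros
                    exact ArithmeticFunction.vonMangoldt_nonneg
        _ = Real.log k := ArithmeticFunction.vonMangoldt_sum
        _ ≤ Real.log N := by
            apply Real.log_le_log
            · exact_mod_cast hk.1
            · exact_mod_cast hk.2
    calc _ ≤ ∑ k ∈ Finset.Ioc 0 N, Real.log N := Finset.sum_le_sum hB
      _ = _ := by simp
  have h2 : ∑ p ∈ (Finset.range (N + 1)).filter Nat.Prime, Real.log p ≤ Real.log 4 * N := by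
    have := Chebyshev.theta_le_log4_mul_x hN0.le
    rw [Chebyshev.theta_eq_sum_Icc] at this
    refine le_trans (le_of_eq ?_) this
    rw [Nat.floor_natCast]
    apply Finset.sum_congr _ (fun _ _ => rfl)
    ext p
    simp
  have h3 : ∀ p ∈ (Finset.range (N + 1)).filter Nat.Prime,
      N * (Real.log p / p) ≤ Real.log p * ((N / p : ℕ) : ℝ) + Real.log p := by
    intro p hp
    simp only [Finset.mem_filter] at hp
    have hp0 : (0 : ℝ) < p := by exact_mod_cast hp.2.pos
    have hl : 0 ≤ Real.log p := Real.log_natCast_nonneg p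
    have : (N : ℝ) / p ≤ ((N / p : ℕ) : ℝ) + 1 := by
      have := Nat.lt_floor_add_one ((N : ℝ) / p)
      rw [Nat.floor_div_natCast, Nat.floor_natCast] at this
      exact this.le
    calc N * (Real.log p / p) = Real.log p * (N / p) := by ring
      _ ≤ Real.log p * (((N / p : ℕ) : ℝ) + 1) := by gcongr
      _ = _ := by ring
  have h4 := Finset.sum_le_sum h3
  rw [← Finset.mul_sum, Finset.sum_add_distrib] at h4
  have h5 : Real.log 4 ≤ 2 := by
    rw [show (4 : ℝ) = 2 ^ 2 by norm_num, Real.log_pow]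
    have := Real.log_two_lt_d9
    push_cast; linarith
  have h6 : N * ∑ p ∈ (Finset.range (N + 1)).filter Nat.Prime, Real.log p / p
      ≤ N * (Real.log N + 2) := by nlinarith
  exact le_of_mul_le_mul_left h6 hN0

/-- Mertens' second theorem, upper bound, by partial summation. -/
lemma sum_inv_prime_le (N : ℕ) (hN : 2 ≤ N) :
    ∑ p ∈ (Finset.range (N + 1)).filter Nat.Prime, (1 : ℝ) / p ≤
      Real.log (Real.log N) + 10 := by
  set S : ℕ → ℝ := fun n => ∑ p ∈ (Finset.range (n + 1)).filter Nat.Prime, Real.log p / p with hS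
  have hlog2 : (0.6931471803 : ℝ) < Real.log 2 := Real.log_two_gt_d9
  have hll2 : -1 ≤ Real.log (Real.log 2) := by
    have : 1 - (Real.log 2)⁻¹ ≤ Real.log (Real.log 2) := Real.one_sub_inv_le_log_of_pos (by linarith)
    have h2 : (Real.log 2)⁻¹ ≤ 2 := by
      rw [inv_le_comm₀ (by linarith) (by norm_num)]; linarith
    linarith
  have key : ∀ n : ℕ, 2 ≤ n → ∑ p ∈ (Finset.range (n + 1)).filter Nat.Prime, (1 : ℝ) / p ≤
      S n / Real.log n + (Real.log (Real.log n) + 4 - 2 / Real.log n) := by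
    intro n hn
    induction n, hn using Nat.le_induction with
    | base =>
      have e : (Finset.range (2 + 1)).filter Nat.Prime = {2} := by decide
      simp only [hS, e, Finset.sum_singleton]
      have hl : Real.log 2 ≠ 0 := by linarith
      have : Real.log (2:ℕ) / (2:ℕ) / Real.log (2:ℕ) = 1 / 2 := by
        push_cast; field_simp
      rw [this]
      have : 2 / Real.log (2:ℕ) ≤ 3 := by
        push_cast
        rw [div_le_iff₀ (by linarith)]; linarith
      push_cast at *
      linarith
    | succ n hn ih =>
      have hln : 0 < Real.log n := Real.log_pos (by exact_mod_cast (by omega : 1 < n))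
      have hln1 : Real.log n < Real.log (n + 1 : ℕ) :=
        Real.log_lt_log (by exact_mod_cast (by omega : 0 < n)) (by push_cast; linarith)
      have hl1 : 0 < Real.log (n + 1 : ℕ) := hln.trans hln1
      have hSn := sum_log_div_prime_le n (by omega)
      have hstep : Real.log n / Real.log (n+1:ℕ) ≥ 1 - (Real.log (Real.log (n+1:ℕ)) - Real.log (Real.log n)) := by
        have := Real.one_sub_inv_le_log_of_pos (div_pos hl1 hln)
        rw [Real.log_div hl1.ne' hln.ne', inv_div] at this
        linarith
      have hinv : 0 ≤ 1 / Real.log n - 1 / Real.log (n+1:ℕ) := by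
        rw [sub_nonneg]; exact one_div_le_one_div_of_le hln hln1.le
      have hmul : S n * (1 / Real.log n - 1 / Real.log (n+1:ℕ)) ≤
          (Real.log n + 2) * (1 / Real.log n - 1 / Real.log (n+1:ℕ)) :=
        mul_le_mul_of_nonneg_right hSn hinv
      have hexp : (Real.log n + 2) * (1 / Real.log n - 1 / Real.log (n+1:ℕ)) =
          1 - Real.log n / Real.log (n+1:ℕ) + 2 / Real.log n - 2 / Real.log (n+1:ℕ) := by
        field_simp; ring
      have hexp2 : S n * (1 / Real.log n - 1 / Real.log (n+1:ℕ)) =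
        S n / Real.log n - S n / Real.log (n+1:ℕ) := by ring
      have hsum : ∀ f : ℕ → ℝ, ∑ p ∈ (Finset.range (n + 1 + 1)).filter Nat.Prime, f p =
          ∑ p ∈ (Finset.range (n + 1)).filter Nat.Prime, f p +
            if (n+1).Prime then f (n+1) else 0 := by
        intro f
        rw [Finset.range_add_one, Finset.filter_insert]
        split_ifs
        · rw [Finset.sum_insert (by simp)]; ring
        · simp
      have hS1 : S (n+1) / Real.log (n+1:ℕ) = S n / Real.log (n+1:ℕ) +
          if (n+1).Prime then (1:ℝ) / (n+1:ℕ) else 0 := by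
        simp only [hS]
        rw [hsum]
        split_ifs
        · field_simp
        · simp
      rw [hsum, hS1]
      linarith
  have h := key N hN
  have hlN : Real.log 2 ≤ Real.log N := Real.log_le_log (by norm_num) (by exact_mod_cast hN)
  have hlN0 : 0 < Real.log N := by linarith
  have hSN : S N / Real.log N ≤ (Real.log N + 2) / Real.log N := by
    have := sum_log_div_prime_le N (by omega)
    gcongr
  have : (Real.log N + 2) / Real.log N = 1 + 2 / Real.log N := by field_simp
  linarith

/-- Mertens' third theorem, upper bound: `∏_{p ≤ N} (1 - 1/p)⁻¹ ≪ log N`. -/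
lemma prod_prime_le (N : ℕ) (hN : 2 ≤ N) :
    ∏ p ∈ (Finset.range (N + 1)).filter Nat.Prime, (1 - 1 / (p : ℝ))⁻¹ ≤
      Real.exp 11 * Real.log N := by
  have hlN0 : 0 < Real.log N := Real.log_pos (by exact_mod_cast hN)
  have h1 : ∀ p ∈ (Finset.range (N + 1)).filter Nat.Prime, (1 - 1 / (p : ℝ))⁻¹ ≤
      Real.exp (1 / p + (1 / ((p : ℝ) - 1) - 1 / p)) := by
    intro p hp
    simp only [Finset.mem_filter] at hp
    have hp2 : (2 : ℝ) ≤ p := by exact_mod_cast hp.2.two_le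
    have : (1 - 1 / (p : ℝ))⁻¹ = 1 / ((p : ℝ) - 1) + 1 := by
      have : (p : ℝ) - 1 ≠ 0 := by linarith
      have : (p : ℝ) ≠ 0 := by linarith
      field_simp
      ring
    rw [this, add_sub_cancel]
    exact Real.add_one_le_exp _
  have h2 : ∑ p ∈ (Finset.range (N + 1)).filter Nat.Prime, (1 / ((p : ℝ) - 1) - 1 / p) ≤ 1 := by
    have hsub : (Finset.range (N + 1)).filter Nat.Prime ⊆ Finset.Ico 2 (N + 1) := by
      intro p hp
      simp only [Finset.mem_filter, Finset.mem_range] at hp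
      exact Finset.mem_Ico.2 ⟨hp.2.two_le, hp.1⟩
    have htel : ∀ n : ℕ, 2 ≤ n → ∑ p ∈ Finset.Ico 2 n, (1 / ((p : ℝ) - 1) - 1 / p) =
        1 - 1 / ((n : ℝ) - 1) := by
      intro n hn
      induction n, hn using Nat.le_induction with
      | base => norm_num
      | succ n hn ih =>
        rw [Finset.sum_Ico_succ_top hn, ih]
        push_cast
        ring
    calc _ ≤ ∑ p ∈ Finset.Ico 2 (N + 1), (1 / ((p : ℝ) - 1) - 1 / p) := by
          apply Finset.sum_le_sum_of_subset_of_nonneg hsub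
          intro p hp _
          have hp2 : (2 : ℝ) ≤ p := by exact_mod_cast (Finset.mem_Ico.1 hp).1
          rw [sub_nonneg]
          exact one_div_le_one_div_of_le (by linarith) (by linarith)
      _ = 1 - 1 / (((N + 1 : ℕ) : ℝ) - 1) := htel _ (by omega)
      _ ≤ 1 := by
          have : 0 ≤ 1 / (((N + 1 : ℕ) : ℝ) - 1) := by
            push_cast
            rw [add_sub_cancel_right]
            positivity
          linarith
  calc _ ≤ ∏ p ∈ (Finset.range (N + 1)).filter Nat.Prime,
        Real.exp (1 / p + (1 / ((p : ℝ) - 1) - 1 / p)) := by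
        apply Finset.prod_le_prod _ h1
        intro p hp
        simp only [Finset.mem_filter] at hp
        have hp2 : (2 : ℝ) ≤ p := by exact_mod_cast hp.2.two_le
        rw [inv_nonneg, sub_nonneg, div_le_one (by linarith)]
        linarith
    _ = Real.exp (∑ p ∈ (Finset.range (N + 1)).filter Nat.Prime,
          (1 / (p:ℝ) + (1 / ((p : ℝ) - 1) - 1 / p))) := (Real.exp_sum _ _).symm
    _ ≤ Real.exp (Real.log (Real.log N) + 11) := by
        apply Real.exp_le_exp.2
        rw [Finset.sum_add_distrib]
        have := sum_inv_prime_le N hN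
        linarith
    _ = _ := by rw [Real.exp_add, Real.exp_log hlN0]; ring

/-- A partial Euler product dominates any finite sum of `1/d` over `d` composed of its primes. -/
lemma sum_inv_le_prod (s : Finset ℕ) (hs : ∀ p ∈ s, p.Prime) (t : Finset ℕ)
    (ht : ∀ d ∈ t, d ≠ 0 ∧ ∀ p, p.Prime → p ∣ d → p ∈ s) :
    ∑ d ∈ t, (1 : ℝ) / d ≤ ∏ p ∈ s, (1 - 1 / (p : ℝ))⁻¹ := by
  let f : ℕ →* ℝ :=
    { toFun := fun n => ((n : ℝ))⁻¹
      map_one' := by simp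
      map_mul' := by intro a b; push_cast; rw [mul_inv] }
  have hf : ∀ {p : ℕ}, p.Prime → ‖f p‖ < 1 := by
    intro p hp
    have : (1 : ℝ) < p := by exact_mod_cast hp.one_lt
    change ‖((p : ℝ))⁻¹‖ < 1
    rw [norm_inv, Real.norm_natCast]
    exact inv_lt_one_of_one_lt₀ this
  have h := (EulerProduct.summable_and_hasSum_factoredNumbers_prod_filter_prime_geometric hf s).2
  have hfil : s.filter Nat.Prime = s := Finset.filter_true_of_mem hs
  rw [hfil] at h
  have hp : ∏ p ∈ s, (1 - 1 / (p : ℝ))⁻¹ = ∏ p ∈ s, (1 - f p)⁻¹ := by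
    apply Finset.prod_congr rfl
    intro p _
    simp [f]
  rw [hp]
  have hmem : ∀ d ∈ t, d ∈ Nat.factoredNumbers s := by
    intro d hd
    rw [Nat.mem_factoredNumbers']
    intro p hpp hpd
    exact (ht d hd).2 p hpp hpd
  let t' : Finset (Nat.factoredNumbers s) := t.subtype (· ∈ Nat.factoredNumbers s)
  have := sum_le_hasSum t' (fun i _ => by change (0:ℝ) ≤ ((i.1 : ℝ))⁻¹; positivity) h
  refine le_trans (le_of_eq ?_) this
  have h3 := Finset.sum_subtype_of_mem (p := (· ∈ Nat.factoredNumbers s)) (fun d : ℕ => f d) hmem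
  rw [show (∑ i ∈ t', f i) = ∑ d ∈ t, f d from h3]
  apply Finset.sum_congr rfl
  intro d _
  simp [f]

/-- Mertens' third theorem, lower bound: `∏_{p < z} (1 - 1/p)⁻¹ ≥ log z`. -/
lemma log_le_prod_prime (z : ℝ) (hz : 1 ≤ z) :
    Real.log z ≤ ∏ p ∈ (Finset.range ⌈z⌉₊).filter Nat.Prime, (1 - 1 / (p : ℝ))⁻¹ := by
  have h1 := sum_inv_le_prod ((Finset.range ⌈z⌉₊).filter Nat.Prime)
    (fun p hp => (Finset.mem_filter.1 hp).2) (Finset.Ico 1 ⌈z⌉₊) (by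
      intro d hd
      rw [Finset.mem_Ico] at hd
      refine ⟨by omega, fun p hp hpd => ?_⟩
      have := Nat.le_of_dvd (by omega) hpd
      simp only [Finset.mem_filter, Finset.mem_range]
      exact ⟨by omega, hp⟩)
  refine le_trans ?_ h1
  have hc : 1 ≤ ⌈z⌉₊ := Nat.one_le_ceil_iff.2 (by linarith)
  obtain ⟨m, hm⟩ : ∃ m, ⌈z⌉₊ = m + 1 := ⟨⌈z⌉₊ - 1, by omega⟩
  have h2 := log_add_one_le_harmonic m
  rw [harmonic_eq_sum_Icc] at h2
  rw [hm]
  have h3 : Finset.Ico 1 (m + 1) = Finset.Icc 1 m := by ext; simp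
  rw [h3]
  push_cast at h2
  calc Real.log z ≤ Real.log ((m + 1 : ℕ) : ℝ) := by
        apply Real.log_le_log (by linarith)
        rw [← hm]; exact Nat.le_ceil z
    _ ≤ _ := by push_cast; simpa using h2

/-! ### Moments of restricted divisor functions -/

/-- All prime factors of `d` lie in `P`. -/
def PS (P : Set ℕ) (d : ℕ) : Prop := ∀ p : ℕ, p.Prime → p ∣ d → p ∈ P

lemma PS.of_dvd {P : Set ℕ} {d e : ℕ} (h : PS P e) (hd : d ∣ e) : PS P d :=
  fun p hp hpd => h p hp (hpd.trans hd)

lemma PS.mul {P : Set ℕ} {d e : ℕ} (h : PS P d) (he : PS P e) : PS P (d * e) := by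
  intro p hp hpd
  rcases (Nat.Prime.dvd_mul hp).1 hpd with h1 | h1
  · exact h p hp h1
  · exact he p hp h1

/-- The number of divisors of `n` composed of primes in `P`. -/
def tauP (P : Set ℕ) (n : ℕ) : ℕ := (n.divisors.filter (PS P)).card

lemma tauP_mul_le (P : Set ℕ) (m n : ℕ) : tauP P (m * n) ≤ tauP P m * tauP P n := by
  unfold tauP
  rw [← Finset.card_product]
  refine Finset.card_le_card_of_surjOn (fun x => x.1 * x.2) ?_
  intro d hd
  simp only [Finset.coe_filter, Set.mem_ofPred_eq] at hd
  rw [Nat.divisors_mul] at hd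
  obtain ⟨⟨x, hx, y, hy, hxy⟩, hP⟩ := (⟨Finset.mem_mul.1 hd.1, hd.2⟩ : _ ∧ _)
  refine ⟨(x, y), ?_, hxy⟩
  simp only [Finset.coe_product, Finset.coe_filter, Set.mem_prod, Set.mem_ofPred_eq]
  rw [← hxy] at hP
  exact ⟨⟨hx, hP.of_dvd (Dvd.intro _ rfl)⟩, ⟨hy, hP.of_dvd (Dvd.intro_left _ rfl)⟩⟩

/-- Rearrangement of `∑_{n ≤ N} τ_P(n) f(n)` according to the divisors counted by `τ_P`. -/
lemma sum_tauP_mul (P : Set ℕ) (f : ℕ → ℝ) (N : ℕ) :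
    ∑ n ∈ Finset.Icc 1 N, (tauP P n : ℝ) * f n =
      ∑ d ∈ (Finset.Icc 1 N).filter (PS P), ∑ m ∈ Finset.Icc 1 (N / d), f (d * m) := by
  have h1 : ∀ n ∈ Finset.Icc 1 N, (tauP P n : ℝ) * f n =
      ∑ d ∈ (Finset.Icc 1 N).filter (PS P), if d ∣ n then f n else 0 := by
    intro n hn
    rw [Finset.mem_Icc] at hn
    rw [← Finset.sum_filter, Finset.sum_const, nsmul_eq_mul]
    congr 2
    unfold tauP
    congr 1
    ext d
    simp only [Finset.mem_filter, Nat.mem_divisors, Finset.mem_Icc]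
    constructor
    · rintro ⟨⟨h1, h2⟩, h3⟩
      exact ⟨⟨⟨Nat.pos_of_dvd_of_pos h1 (by omega), (Nat.le_of_dvd (by omega) h1).trans hn.2⟩, h3⟩,
        h1⟩
    · rintro ⟨⟨h1, h2⟩, h3⟩
      exact ⟨⟨h3, by omega⟩, h2⟩
  rw [Finset.sum_congr rfl h1, Finset.sum_comm]
  apply Finset.sum_congr rfl
  intro d hd
  simp only [Finset.mem_filter, Finset.mem_Icc] at hd
  have hd0 : 0 < d := by omega
  rw [← Finset.sum_filter]
  symm
  apply Finset.sum_bij (fun m _ => d * m)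
  · intro m hm
    simp only [Finset.mem_Icc, Finset.mem_filter] at hm ⊢
    refine ⟨⟨Nat.mul_pos hd0 hm.1, ?_⟩, Dvd.intro _ rfl⟩
    calc d * m ≤ d * (N / d) := Nat.mul_le_mul_left _ hm.2
      _ ≤ N := Nat.mul_div_le N d
  · intro m _ m' _ h
    exact Nat.eq_of_mul_eq_mul_left hd0 h
  · intro n hn
    simp only [Finset.mem_Icc, Finset.mem_filter] at hn
    obtain ⟨m, rfl⟩ := hn.2
    refine ⟨m, ?_, rfl⟩
    rw [Finset.mem_Icc]
    refine ⟨Nat.pos_of_mul_pos_left (by omega : 0 < d * m), ?_⟩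
    rw [Nat.le_div_iff_mul_le hd0, mul_comm]; exact hn.1.2
  · intros; rfl

/-- `∑_{d ≤ q, d ∈ ⟨P⟩} 1/d`. -/
def recipSum (P : Set ℕ) (q : ℕ) : ℝ := ∑ d ∈ (Finset.Icc 1 q).filter (PS P), (1 : ℝ) / d

lemma recipSum_nonneg (P : Set ℕ) (q : ℕ) : 0 ≤ recipSum P q :=
  Finset.sum_nonneg (fun _ _ => by positivity)

/-- Logarithmic moments of `τ_P` over integers composed of primes in `P`. -/
lemma sum_tauP_pow_div_le (P : Set ℕ) (q k : ℕ) :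
    ∑ d ∈ (Finset.Icc 1 q).filter (PS P), (tauP P d : ℝ) ^ k / d ≤ recipSum P q ^ (2 ^ k) := by
  induction k with
  | zero => simp [recipSum]
  | succ k ih =>
    set S := ∑ d ∈ (Finset.Icc 1 q).filter (PS P), (tauP P d : ℝ) ^ k / d with hS
    have hS0 : 0 ≤ S := Finset.sum_nonneg (fun _ _ => by positivity)
    have h1 : ∑ d ∈ (Finset.Icc 1 q).filter (PS P), (tauP P d : ℝ) ^ (k + 1) / d =
        ∑ n ∈ Finset.Icc 1 q, (tauP P n : ℝ) * (if PS P n then (tauP P n : ℝ) ^ k / n else 0) := by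
      rw [Finset.sum_filter]
      apply Finset.sum_congr rfl
      intro n _
      split_ifs
      · rw [pow_succ]; ring
      · simp
    rw [h1, sum_tauP_mul]
    calc _ ≤ ∑ d ∈ (Finset.Icc 1 q).filter (PS P), (tauP P d : ℝ) ^ k / d * S := by
          apply Finset.sum_le_sum
          intro d hd
          simp only [Finset.mem_filter, Finset.mem_Icc] at hd
          rw [hS, Finset.sum_filter, Finset.mul_sum]
          calc _ ≤ ∑ m ∈ Finset.Icc 1 (q / d), (tauP P d : ℝ) ^ k / d *
                (if PS P m then (tauP P m : ℝ) ^ k / m else 0) := by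
                apply Finset.sum_le_sum
                intro m hm
                split_ifs with h2 h3 h3
                · rw [div_mul_div_comm]
                  push_cast
                  gcongr
                  rw [← mul_pow]
                  gcongr
                  exact_mod_cast tauP_mul_le P d m
                · exact absurd (h2.of_dvd (Dvd.intro_left _ rfl)) h3
                · positivity
                · simp
            _ ≤ _ := by
                apply Finset.sum_le_sum_of_subset_of_nonneg
                · apply Finset.Icc_subset_Icc le_rfl (Nat.div_le_self q d)
                · intros
                  split_ifs <;> positivity
      _ = S * S := by rw [← Finset.sum_mul]
      _ ≤ recipSum P q ^ (2 ^ k) * recipSum P q ^ (2 ^ k) :=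
          mul_le_mul ih ih hS0 (pow_nonneg (recipSum_nonneg P q) _)
      _ = _ := by rw [← pow_add]; congr 1; ring

/-- Moments of `τ_P`: `∑_{n ≤ N} τ_P(n)^k ≤ N · D^(2^k - 1)`, where `D = ∑ 1/d`. -/
lemma sum_tauP_pow_le (P : Set ℕ) (q k : ℕ) (N : ℕ) (hN : N ≤ q) :
    ∑ n ∈ Finset.Icc 1 N, (tauP P n : ℝ) ^ k ≤ N * recipSum P q ^ (2 ^ k - 1) := by
  induction k generalizing N with
  | zero => simp
  | succ k ih =>
    have h1 : ∀ n, (tauP P n : ℝ) ^ (k + 1) = (tauP P n : ℝ) * (tauP P n : ℝ) ^ k := by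
      intro n; rw [pow_succ]; ring
    simp_rw [h1]
    rw [sum_tauP_mul P (fun n => (tauP P n : ℝ) ^ k)]
    have hD := recipSum_nonneg P q
    calc _ ≤ ∑ d ∈ (Finset.Icc 1 N).filter (PS P),
          (N * recipSum P q ^ (2 ^ k - 1)) * ((tauP P d : ℝ) ^ k / d) := by
          apply Finset.sum_le_sum
          intro d hd
          simp only [Finset.mem_filter, Finset.mem_Icc] at hd
          have hd0 : (0 : ℝ) < d := by exact_mod_cast hd.1.1
          calc _ ≤ ∑ m ∈ Finset.Icc 1 (N / d), (tauP P d : ℝ) ^ k * (tauP P m : ℝ) ^ k := by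
                apply Finset.sum_le_sum
                intro m _
                rw [← mul_pow]
                gcongr
                exact_mod_cast tauP_mul_le P d m
            _ = (tauP P d : ℝ) ^ k * ∑ m ∈ Finset.Icc 1 (N / d), (tauP P m : ℝ) ^ k := by
                rw [Finset.mul_sum]
            _ ≤ (tauP P d : ℝ) ^ k * (((N / d : ℕ) : ℝ) * recipSum P q ^ (2 ^ k - 1)) := by
                gcongr
                exact ih _ ((Nat.div_le_self _ _).trans hN)
            _ ≤ (tauP P d : ℝ) ^ k * (((N : ℝ) / d) * recipSum P q ^ (2 ^ k - 1)) := by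
                gcongr
                exact Nat.cast_div_le
            _ = _ := by ring
      _ ≤ ∑ d ∈ (Finset.Icc 1 q).filter (PS P),
          (N * recipSum P q ^ (2 ^ k - 1)) * ((tauP P d : ℝ) ^ k / d) := by
          apply Finset.sum_le_sum_of_subset_of_nonneg
          · exact Finset.filter_subset_filter _ (Finset.Icc_subset_Icc le_rfl hN)
          · intros; positivity
      _ = (N * recipSum P q ^ (2 ^ k - 1)) *
          ∑ d ∈ (Finset.Icc 1 q).filter (PS P), ((tauP P d : ℝ) ^ k / d) := by
          rw [Finset.mul_sum]
      _ ≤ (N * recipSum P q ^ (2 ^ k - 1)) * recipSum P q ^ (2 ^ k) := by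
          gcongr
          exact sum_tauP_pow_div_le P q k
      _ = _ := by
          rw [mul_assoc, ← pow_add]
          congr 2
          have : 1 ≤ 2 ^ k := Nat.one_le_two_pow
          rw [pow_succ]; omega

/-! ### Euler products over blocks of primes, and rough numbers -/

lemma one_le_inv_one_sub {p : ℕ} (hp : p.Prime) : 1 ≤ (1 - 1 / (p : ℝ))⁻¹ := by
  have hp2 : (2 : ℝ) ≤ p := by exact_mod_cast hp.two_le
  have h1 : 1 / (p : ℝ) ≤ 1 / 2 := one_div_le_one_div_of_le (by norm_num) hp2
  have h2 : 0 < 1 / (p : ℝ) := by positivity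
  exact (one_le_inv₀ (by linarith)).2 (by linarith)

lemma inv_one_sub_le_exp {p : ℕ} (hp : p.Prime) :
    (1 - 1 / (p : ℝ))⁻¹ ≤ Real.exp (2 * (1 / (p : ℝ))) := by
  have hp2 : (2 : ℝ) ≤ p := by exact_mod_cast hp.two_le
  have h1 : 1 / (p : ℝ) ≤ 1 / 2 := one_div_le_one_div_of_le (by norm_num) hp2
  have h2 : 0 < 1 / (p : ℝ) := by positivity
  refine le_trans ?_ (Real.add_one_le_exp _)
  rw [inv_le_iff_one_le_mul₀ (by linarith)]
  nlinarith

/-- The primes in an `e`-adic block contribute a bounded factor to the Euler product. -/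
lemma prod_block_le (a : ℝ) (ha : 1 ≤ a) (N : ℕ) :
    ∏ p ∈ (Finset.range (N + 1)).filter (fun p : ℕ => p.Prime ∧ a < p ∧ (p : ℝ) ≤ Real.exp 1 * a),
      (1 - 1 / (p : ℝ))⁻¹ ≤ Real.exp 6 := by
  set s := (Finset.range (N + 1)).filter
    (fun p : ℕ => p.Prime ∧ a < p ∧ (p : ℝ) ≤ Real.exp 1 * a) with hs
  have hcard : (s.card : ℝ) ≤ 3 * a := by
    have hsub : s ⊆ Finset.Ioc ⌊a⌋₊ ⌊Real.exp 1 * a⌋₊ := by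
      intro p hp
      simp only [hs, Finset.mem_filter] at hp
      rw [Finset.mem_Ioc]
      exact ⟨(Nat.floor_lt (by linarith)).2 hp.2.2.1, Nat.le_floor hp.2.2.2⟩
    have h1 := Finset.card_le_card hsub
    rw [Nat.card_Ioc] at h1
    have h2 : (⌊Real.exp 1 * a⌋₊ : ℝ) ≤ Real.exp 1 * a := Nat.floor_le (by positivity)
    have he := Real.exp_one_lt_d9
    calc (s.card : ℝ) ≤ ⌊Real.exp 1 * a⌋₊ := by exact_mod_cast h1.trans (Nat.sub_le _ _)
      _ ≤ 3 * a := by nlinarith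
  calc _ ≤ ∏ p ∈ s, Real.exp (2 * (1 / (p : ℝ))) := by
        apply Finset.prod_le_prod
        · intro p hp
          simp only [hs, Finset.mem_filter] at hp
          linarith [one_le_inv_one_sub hp.2.1]
        · intro p hp
          simp only [hs, Finset.mem_filter] at hp
          exact inv_one_sub_le_exp hp.2.1
    _ = Real.exp (∑ p ∈ s, 2 * (1 / (p : ℝ))) := (Real.exp_sum _ _).symm
    _ ≤ Real.exp 6 := by
        apply Real.exp_le_exp.2
        calc _ ≤ ∑ p ∈ s, 2 * (1 / a) := by
              apply Finset.sum_le_sum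
              intro p hp
              simp only [hs, Finset.mem_filter] at hp
              have := hp.2.2.1.le
              gcongr
          _ = s.card * (2 * (1 / a)) := by rw [Finset.sum_const, nsmul_eq_mul]
          _ ≤ 3 * a * (2 * (1 / a)) := by gcongr
          _ = 6 := by field_simp; norm_num

/-- The primes in `[z, N]` contribute `≪ log N / log z` to the Euler product. -/
lemma prod_rough_le (z : ℝ) (hz : 1 < z) (N : ℕ) (hN : z ≤ N) :
    ∏ p ∈ (Finset.range (N + 1)).filter (fun p : ℕ => p.Prime ∧ z ≤ p),
      (1 - 1 / (p : ℝ))⁻¹ ≤ Real.exp 11 * Real.log N / Real.log z := by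
  have hN2 : 2 ≤ N := by
    have : (1 : ℝ) < N := by linarith
    exact_mod_cast this
  have h1 := prod_prime_le N hN2
  have h2 := log_le_prod_prime z hz.le
  have hlz : 0 < Real.log z := Real.log_pos hz
  have hcl : ⌈z⌉₊ ≤ N := Nat.ceil_le.2 hN
  have h3 : ∏ p ∈ (Finset.range (N + 1)).filter Nat.Prime, (1 - 1 / (p : ℝ))⁻¹ =
      (∏ p ∈ (Finset.range ⌈z⌉₊).filter Nat.Prime, (1 - 1 / (p : ℝ))⁻¹) *
      ∏ p ∈ (Finset.range (N + 1)).filter (fun p : ℕ => p.Prime ∧ z ≤ p), (1 - 1 / (p : ℝ))⁻¹ := by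
    rw [← Finset.prod_union]
    · apply Finset.prod_congr _ (fun _ _ => rfl)
      ext p
      simp only [Finset.mem_filter, Finset.mem_union, Finset.mem_range, Nat.lt_ceil]
      constructor
      · rintro ⟨h, hp⟩
        rcases lt_or_ge (p : ℝ) z with h' | h'
        · exact Or.inl ⟨h', hp⟩
        · exact Or.inr ⟨h, hp, h'⟩
      · rintro (⟨h, hp⟩ | ⟨h, hp, h'⟩)
        · have : (p : ℝ) < N := by linarith
          have : p < N := by exact_mod_cast this
          exact ⟨by omega, hp⟩
        · exact ⟨h, hp⟩
    · rw [Finset.disjoint_left]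
      intro p h h'
      simp only [Finset.mem_filter, Finset.mem_range, Nat.lt_ceil] at h h'
      linarith [h.1, h'.2.2]
  rw [h3] at h1
  have h4 : 0 ≤ ∏ p ∈ (Finset.range (N + 1)).filter (fun p : ℕ => p.Prime ∧ z ≤ p),
      (1 - 1 / (p : ℝ))⁻¹ := by
    apply Finset.prod_nonneg
    intro p hp
    simp only [Finset.mem_filter] at hp
    linarith [one_le_inv_one_sub hp.2.1]
  rw [le_div_iff₀ hlz]
  calc _ ≤ (∏ p ∈ (Finset.range (N + 1)).filter (fun p : ℕ => p.Prime ∧ z ≤ p),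
      (1 - 1 / (p : ℝ))⁻¹) * ∏ p ∈ (Finset.range ⌈z⌉₊).filter Nat.Prime, (1 - 1 / (p : ℝ))⁻¹ := by
        gcongr
    _ ≤ _ := by linarith

/-- The primes allowed in the factor that absorbs `n₁` and the primes moved next to it: two `e`-adic
blocks, which contain these primes, and everything from `z` on. -/
def blockPrimes (a b z : ℝ) : Set ℕ :=
  {p : ℕ | (a < p ∧ (p : ℝ) ≤ Real.exp 1 * a) ∨ (b < p ∧ (p : ℝ) ≤ Real.exp 1 * b) ∨ z ≤ p}

lemma recipSum_le_prod (P : Set ℕ) (q : ℕ) :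
    recipSum P q ≤ ∏ p ∈ (Finset.range (q + 1)).filter (fun p : ℕ => p.Prime ∧ p ∈ P),
      (1 - 1 / (p : ℝ))⁻¹ := by
  apply sum_inv_le_prod
  · intro p hp
    exact (Finset.mem_filter.1 hp).2.1
  · intro d hd
    simp only [Finset.mem_filter, Finset.mem_Icc] at hd
    refine ⟨by omega, fun p hp hpd => ?_⟩
    have := Nat.le_of_dvd (by omega) hpd
    simp only [Finset.mem_filter, Finset.mem_range]
    exact ⟨by omega, hp, hd.2 p hp hpd⟩

lemma prod_union_le (s t : Finset ℕ) (hs : ∀ p ∈ s, p.Prime) (ht : ∀ p ∈ t, p.Prime) :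
    ∏ p ∈ s ∪ t, (1 - 1 / (p : ℝ))⁻¹ ≤
      (∏ p ∈ s, (1 - 1 / (p : ℝ))⁻¹) * ∏ p ∈ t, (1 - 1 / (p : ℝ))⁻¹ := by
  rw [← Finset.prod_union_inter]
  have h : ∀ p ∈ s ∪ t, 1 ≤ (1 - 1 / (p : ℝ))⁻¹ := by
    intro p hp
    rcases Finset.mem_union.1 hp with h | h
    · exact one_le_inv_one_sub (hs p h)
    · exact one_le_inv_one_sub (ht p h)
  apply le_mul_of_one_le_right
  · exact Finset.prod_nonneg (fun p hp => by linarith [h p hp])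
  · exact Finset.one_le_prod (fun p hp => by
      exact one_le_inv_one_sub (hs p (Finset.mem_inter.1 hp).1))

lemma recipSum_blockPrimes_le (a b z : ℝ) (q : ℕ) (ha : 1 ≤ a) (hb : 1 ≤ b) (hz : 1 < z)
    (hzq : z ≤ q) :
    recipSum (blockPrimes a b z) q ≤ Real.exp 23 * (Real.log q / Real.log z) := by
  refine (recipSum_le_prod _ q).trans ?_
  set A := (Finset.range (q + 1)).filter
    (fun p : ℕ => p.Prime ∧ a < p ∧ (p : ℝ) ≤ Real.exp 1 * a) with hA
  set B := (Finset.range (q + 1)).filter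
    (fun p : ℕ => p.Prime ∧ b < p ∧ (p : ℝ) ≤ Real.exp 1 * b) with hB
  set C := (Finset.range (q + 1)).filter (fun p : ℕ => p.Prime ∧ z ≤ p) with hC
  have he : (Finset.range (q + 1)).filter (fun p : ℕ => p.Prime ∧ p ∈ blockPrimes a b z) =
      A ∪ (B ∪ C) := by
    ext p
    rw [Finset.mem_filter]
    simp only [hA, hB, hC, Finset.mem_filter, Finset.mem_union, blockPrimes, Set.mem_ofPred_eq]
    tauto
  have hpA : ∀ p ∈ A, p.Prime := fun p hp => (Finset.mem_filter.1 hp).2.1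
  have hpB : ∀ p ∈ B, p.Prime := fun p hp => (Finset.mem_filter.1 hp).2.1
  have hpC : ∀ p ∈ C, p.Prime := fun p hp => (Finset.mem_filter.1 hp).2.1
  have hnn : ∀ s : Finset ℕ, (∀ p ∈ s, p.Prime) → 0 ≤ ∏ p ∈ s, (1 - 1 / (p : ℝ))⁻¹ :=
    fun s hs => Finset.prod_nonneg (fun p hp => by linarith [one_le_inv_one_sub (hs p hp)])
  have hA1 := prod_block_le a ha q
  have hB1 := prod_block_le b hb q
  have hC1 := prod_rough_le z hz q hzq
  rw [he]
  calc _ ≤ (∏ p ∈ A, (1 - 1 / (p : ℝ))⁻¹) * ∏ p ∈ B ∪ C, (1 - 1 / (p : ℝ))⁻¹ :=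
        prod_union_le _ _ hpA (by
          intro p hp
          rcases Finset.mem_union.1 hp with h | h
          · exact hpB p h
          · exact hpC p h)
    _ ≤ (∏ p ∈ A, (1 - 1 / (p : ℝ))⁻¹) * ((∏ p ∈ B, (1 - 1 / (p : ℝ))⁻¹) *
          ∏ p ∈ C, (1 - 1 / (p : ℝ))⁻¹) :=
        mul_le_mul_of_nonneg_left (prod_union_le _ _ hpB hpC) (hnn A hpA)
    _ ≤ Real.exp 6 * (Real.exp 6 * (Real.exp 11 * Real.log q / Real.log z)) := by
        apply mul_le_mul hA1 _ (mul_nonneg (hnn B hpB) (hnn C hpC)) (Real.exp_pos _).le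
        exact mul_le_mul hB1 hC1 (hnn C hpC) (Real.exp_pos _).le
    _ = _ := by
        rw [show (23 : ℝ) = 6 + 6 + 11 by norm_num, Real.exp_add, Real.exp_add]; ring

/-- Upper bound for the number of `z`-rough integers in `(w, N]`, weighted by `log w`.  It follows from
`log n = ∑_{d ∣ n} Λ(d)` and Chebyshev's bound for `ψ`. -/
lemma card_rough_le (z w : ℝ) (q N : ℕ) (hz : 1 < z) (hzq : z ≤ q) (hN : N ≤ q) (hw : 1 < w) :
    (((Finset.Icc 1 N).filter (fun n : ℕ => PS {p | z ≤ p} n ∧ w < n)).card : ℝ) * Real.log w ≤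
      (Real.log 4 + 4) * Real.exp 11 * (Real.log q / Real.log z) * N := by
  set P : Set ℕ := {p : ℕ | z ≤ p} with hP
  have hlw : 0 < Real.log w := Real.log_pos hw
  have hD : recipSum P q ≤ Real.exp 11 * (Real.log q / Real.log z) := by
    have := (recipSum_le_prod P q).trans (prod_rough_le z hz q hzq)
    rwa [mul_div_assoc] at this
  calc _ = ∑ n ∈ (Finset.Icc 1 N).filter (fun n : ℕ => PS P n ∧ w < n), Real.log w := by
        rw [Finset.sum_const, nsmul_eq_mul]
    _ ≤ ∑ n ∈ (Finset.Icc 1 N).filter (fun n : ℕ => PS P n ∧ w < n), Real.log n := by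
        apply Finset.sum_le_sum
        intro n hn
        simp only [Finset.mem_filter] at hn
        exact Real.log_le_log (by linarith) hn.2.2.le
    _ ≤ ∑ n ∈ (Finset.Icc 1 N).filter (PS P), Real.log n := by
        apply Finset.sum_le_sum_of_subset_of_nonneg
        · intro n hn
          simp only [Finset.mem_filter] at hn ⊢
          exact ⟨hn.1, hn.2.1⟩
        · intro n _ _
          exact Real.log_natCast_nonneg n
    _ = ∑ n ∈ (Finset.Icc 1 N).filter (PS P), ∑ m ∈ n.divisors,
          ArithmeticFunction.vonMangoldt (n / m) := by
        apply Finset.sum_congr rfl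
        intro n _
        rw [Nat.sum_div_divisors n (fun d => ArithmeticFunction.vonMangoldt d),
          ArithmeticFunction.vonMangoldt_sum]
    _ ≤ ∑ n ∈ Finset.Icc 1 N, ∑ m ∈ (Finset.Icc 1 N).filter (PS P),
          if m ∣ n then ArithmeticFunction.vonMangoldt (n / m) else 0 := by
        rw [Finset.sum_filter]
        apply Finset.sum_le_sum
        intro n hn
        rw [Finset.mem_Icc] at hn
        split_ifs with h
        · rw [← Finset.sum_filter]
          apply Finset.sum_le_sum_of_subset_of_nonneg
          · intro d hd
            rw [Nat.mem_divisors] at hd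
            simp only [Finset.mem_filter, Finset.mem_Icc]
            exact ⟨⟨⟨Nat.pos_of_dvd_of_pos hd.1 hn.1, (Nat.le_of_dvd hn.1 hd.1).trans hn.2⟩,
              h.of_dvd hd.1⟩, hd.1⟩
          · intros; exact ArithmeticFunction.vonMangoldt_nonneg
        · apply Finset.sum_nonneg
          intros
          split_ifs
          · exact ArithmeticFunction.vonMangoldt_nonneg
          · exact le_rfl
    _ ≤ ∑ m ∈ (Finset.Icc 1 N).filter (PS P), Chebyshev.psi ((N : ℝ) / m) := by
        rw [Finset.sum_comm]
        apply Finset.sum_le_sum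
        intro m hm
        simp only [Finset.mem_filter, Finset.mem_Icc] at hm
        have hm0 : 0 < m := hm.1.1
        rw [← Finset.sum_filter, Chebyshev.psi, Nat.floor_div_natCast, Nat.floor_natCast]
        apply le_of_eq
        symm
        apply Finset.sum_bij (fun d _ => m * d)
        · intro d hd
          simp only [Finset.mem_Ioc, Finset.mem_filter, Finset.mem_Icc] at hd ⊢
          refine ⟨⟨Nat.mul_pos hm0 hd.1, ?_⟩, Dvd.intro _ rfl⟩
          calc m * d ≤ m * (N / m) := Nat.mul_le_mul_left _ hd.2
            _ ≤ N := Nat.mul_div_le N m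
        · intro x _ y _ h
          exact Nat.eq_of_mul_eq_mul_left hm0 h
        · intro n hn
          simp only [Finset.mem_Icc, Finset.mem_filter] at hn
          obtain ⟨d, rfl⟩ := hn.2
          refine ⟨d, ?_, rfl⟩
          rw [Finset.mem_Ioc]
          refine ⟨Nat.pos_of_mul_pos_left (by omega : 0 < m * d), ?_⟩
          rw [Nat.le_div_iff_mul_le hm0, mul_comm]; exact hn.1.2
        · intro d _
          rw [Nat.mul_div_cancel_left _ hm0]
    _ ≤ ∑ m ∈ (Finset.Icc 1 N).filter (PS P), (Real.log 4 + 4) * N * (1 / (m : ℝ)) := by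
        apply Finset.sum_le_sum
        intro m _
        have := Chebyshev.psi_le_const_mul_self (x := (N : ℝ) / m) (by positivity)
        calc _ ≤ _ := this
          _ = _ := by ring
    _ = (Real.log 4 + 4) * N * ∑ m ∈ (Finset.Icc 1 N).filter (PS P), (1 / (m : ℝ)) := by
        rw [Finset.mul_sum]
    _ ≤ (Real.log 4 + 4) * N * recipSum P q := by
        have : 0 ≤ Real.log 4 := Real.log_nonneg (by norm_num)
        unfold recipSum
        gcongr
    _ ≤ (Real.log 4 + 4) * N * (Real.exp 11 * (Real.log q / Real.log z)) := by
        have : 0 ≤ Real.log 4 := Real.log_nonneg (by norm_num)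
        gcongr
    _ = _ := by ring

/-! ### The core counting estimate -/

/-- An integer with large prime factors times an integer with small prime factors determines
both factors. -/
lemma rough_smooth_unique (z : ℝ) {n m n' m' : ℕ} (hn : PS {p | z ≤ p} n) (hn' : PS {p | z ≤ p} n')
    (hmz : PS {p | (p : ℝ) < z} m) (hmz' : PS {p | (p : ℝ) < z} m')
    (h : n * m = n' * m') : n = n' ∧ m = m' := by
  have hcop : ∀ a b : ℕ, PS {p | z ≤ p} a → PS {p | (p : ℝ) < z} b → Nat.Coprime a b := by
    intro a b ha hb
    apply Nat.Coprime.symm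
    apply Nat.coprime_of_dvd
    intro p hp h1 h2
    have h3 : z ≤ p := ha p hp h2
    have h4 : (p : ℝ) < z := hb p hp h1
    linarith
  have h1 : n ∣ n' := (hcop n m' hn hmz').dvd_of_dvd_mul_right (h ▸ Dvd.intro _ rfl)
  have h2 : n' ∣ n := (hcop n' m hn' hmz).dvd_of_dvd_mul_right (h ▸ Dvd.intro _ rfl)
  have h3 := Nat.dvd_antisymm h1 h2
  subst h3
  refine ⟨rfl, ?_⟩
  rcases Nat.eq_zero_or_pos n with h0 | h0
  · have h5 := (hcop n m hn hmz)
    have h6 := (hcop n m' hn hmz')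
    rw [h0, Nat.coprime_zero_left] at h5 h6
    omega
  · exact Nat.eq_of_mul_eq_mul_left h0 h

/-- A Hölder-type inequality with exponents `(3, 3/2)` followed by Cauchy–Schwarz. -/
lemma holder_cube {ι : Type*} (s : Finset ι) (f w t : ι → ℝ) (hf : ∀ i ∈ s, 0 ≤ f i)
    (hw : ∀ i ∈ s, 0 ≤ w i) (hwt : ∀ i ∈ s, w i ≤ t i) :
    (∑ i ∈ s, f i * w i) ^ 3 ≤ (∑ i ∈ s, f i ^ 3) * (∑ i ∈ s, w i) * ∑ i ∈ s, t i ^ 2 := by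
  have hpq : Real.HolderConjugate (3 : ℝ) (3 / 2) := by
    rw [Real.holderConjugate_iff]; norm_num
  have h1 := Real.inner_le_Lp_mul_Lq_of_nonneg s hpq hf hw
  have hA : 0 ≤ ∑ i ∈ s, f i ^ (3 : ℝ) :=
    Finset.sum_nonneg (fun i hi => Real.rpow_nonneg (hf i hi) _)
  have hB : 0 ≤ ∑ i ∈ s, w i ^ (3 / 2 : ℝ) :=
    Finset.sum_nonneg (fun i hi => Real.rpow_nonneg (hw i hi) _)
  have h0 : 0 ≤ ∑ i ∈ s, f i * w i :=
    Finset.sum_nonneg (fun i hi => mul_nonneg (hf i hi) (hw i hi))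
  have h2 : (∑ i ∈ s, f i * w i) ^ 3 ≤
      (∑ i ∈ s, f i ^ (3 : ℝ)) * (∑ i ∈ s, w i ^ (3 / 2 : ℝ)) ^ 2 := by
    refine (pow_le_pow_left₀ h0 h1 3).trans (le_of_eq ?_)
    rw [mul_pow, ← Real.rpow_natCast, ← Real.rpow_mul hA, ← Real.rpow_natCast (_ ^ _) 3,
      ← Real.rpow_mul hB]
    norm_num
  have h3 : (∑ i ∈ s, w i ^ (3 / 2 : ℝ)) ^ 2 ≤ (∑ i ∈ s, w i) * ∑ i ∈ s, t i ^ 2 := by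
    have hcs := Finset.sum_mul_sq_le_sq_mul_sq s (fun i => Real.sqrt (w i)) w
    have e1 : ∑ i ∈ s, Real.sqrt (w i) * w i = ∑ i ∈ s, w i ^ (3 / 2 : ℝ) := by
      apply Finset.sum_congr rfl
      intro i hi
      rcases (hw i hi).eq_or_lt with h | h
      · rw [← h, Real.zero_rpow (by norm_num)]; simp
      · rw [Real.sqrt_eq_rpow]
        nth_rewrite 2 [← Real.rpow_one (w i)]
        rw [← Real.rpow_add h]; norm_num
    have e2 : ∑ i ∈ s, Real.sqrt (w i) ^ 2 = ∑ i ∈ s, w i :=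
      Finset.sum_congr rfl (fun i hi => Real.sq_sqrt (hw i hi))
    rw [e1, e2] at hcs
    refine hcs.trans ?_
    apply mul_le_mul_of_nonneg_left _ (Finset.sum_nonneg hw)
    apply Finset.sum_le_sum
    intro i hi
    exact pow_le_pow_left₀ (hw i hi) (hwt i hi) 2
  have e3 : ∑ i ∈ s, f i ^ (3 : ℝ) = ∑ i ∈ s, f i ^ 3 := by
    apply Finset.sum_congr rfl
    intro i _
    exact_mod_cast Real.rpow_natCast (f i) 3
  rw [e3] at h2 hA
  calc _ ≤ _ := h2
    _ ≤ (∑ i ∈ s, f i ^ 3) * ((∑ i ∈ s, w i) * ∑ i ∈ s, t i ^ 2) := by gcongr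
    _ = _ := by ring

/-- Two integers in `[1, q]` with the same residue coincide. -/
lemma eq_of_cast_eq {q m n : ℕ} (hm : 1 ≤ m) (hmq : m ≤ q) (hn : 1 ≤ n) (hnq : n ≤ q)
    (h : (m : ZMod q) = (n : ZMod q)) : m = n := by
  rw [ZMod.natCast_eq_natCast_iff] at h
  have key : ∀ a b : ℕ, 1 ≤ a → a ≤ b → b ≤ q → a ≡ b [MOD q] → a = b := by
    intro a b ha hab hb hc
    have := (Nat.modEq_iff_dvd' hab).1 hc
    by_contra hne
    have := Nat.le_of_dvd (by omega) this
    omega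
  rcases le_total m n with h' | h'
  · exact key m n hm h' hnq h
  · exact (key n m hn h' hmq h.symm).symm

set_option maxHeartbeats 800000 in
/-- Core counting estimate: quintuples `(e, u, n₂, n₃, m)` with `ρ·(e u)(n₂ n₃ m) ≡ a`, where
`e` is composed of primes in `P`, `e u ≤ x`, `n₂ n₃ m ≤ y` and `(n₂, n₃, m)` lies in a
prescribed finite set `W`.  Each of `e u`, `n₂ n₃ m` determines the other, and Hölder's
inequality converts this into a saving. -/
lemma core_count (q : ℕ) (P : Set ℕ) (z : ℝ) (hP : {p : ℕ | z ≤ p} ⊆ P) (a : ZMod q)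
    (ha : IsUnit a) (ρ x y : ℕ) (hx : x ≤ q) (hy : y ≤ q)
    (W : Finset (ℕ × ℕ × ℕ))
    (hW : ∀ t ∈ W, PS {p | z ≤ p} t.1 ∧ PS {p | z ≤ p} t.2.1 ∧ PS {p | (p : ℝ) < z} t.2.2 ∧
      1 ≤ t.1 * t.2.1 * t.2.2 ∧ t.1 * t.2.1 * t.2.2 ≤ y)
    (G : Finset ((ℕ × ℕ) × (ℕ × ℕ × ℕ)))
    (hG : ∀ g ∈ G, PS P g.1.1 ∧ 1 ≤ g.1.1 * g.1.2 ∧ g.1.1 * g.1.2 ≤ x ∧ g.2 ∈ W ∧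
      ((ρ * (g.1.1 * g.1.2) * (g.2.1 * g.2.2.1 * g.2.2.2) : ℕ) : ZMod q) = a) :
    (G.card : ℝ) ^ 3 ≤ W.card * recipSum P q ^ 10 * x * y := by
  set X : (ℕ × ℕ) × (ℕ × ℕ × ℕ) → ℕ := fun g => g.1.1 * g.1.2 with hXdef
  set Y' : ℕ × ℕ × ℕ → ℕ := fun t => t.1 * t.2.1 * t.2.2 with hYdef
  set Γ := G.image (fun g => (X g, Y' g.2)) with hΓ
  set w : ℕ → ℕ := fun Y => (W.filter (fun t => Y' t = Y)).card with hw
  -- the congruence makes both coordinate projections of `Γ` injective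
  have hmem : ∀ γ ∈ Γ, 1 ≤ γ.1 ∧ γ.1 ≤ x ∧ 1 ≤ γ.2 ∧ γ.2 ≤ y ∧
      ((ρ * γ.1 * γ.2 : ℕ) : ZMod q) = a := by
    intro γ hγ
    obtain ⟨g, hg, rfl⟩ := Finset.mem_image.1 hγ
    obtain ⟨-, h2, h3, h4, h5⟩ := hG g hg
    obtain ⟨-, -, -, h6, h7⟩ := hW _ h4
    exact ⟨h2, h3, h6, h7, h5⟩
  have hinj1 : Set.InjOn Prod.fst (Γ : Set (ℕ × ℕ)) := by
    intro γ hγ γ' hγ' he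
    obtain ⟨h1, h2, h3, h4, h5⟩ := hmem γ hγ
    obtain ⟨h1', h2', h3', h4', h5'⟩ := hmem γ' hγ'
    refine Prod.ext he ?_
    rw [← he] at h5'
    push_cast at h5 h5'
    have hu : IsUnit ((ρ : ZMod q) * (γ.1 : ZMod q)) := by
      rw [← h5] at ha; exact isUnit_of_mul_isUnit_left ha
    have := hu.mul_left_cancel (h5.trans h5'.symm)
    exact eq_of_cast_eq h3 (h4.trans hy) h3' (h4'.trans hy) this
  have hinj2 : Set.InjOn Prod.snd (Γ : Set (ℕ × ℕ)) := by
    intro γ hγ γ' hγ' he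
    obtain ⟨h1, h2, h3, h4, h5⟩ := hmem γ hγ
    obtain ⟨h1', h2', h3', h4', h5'⟩ := hmem γ' hγ'
    refine Prod.ext ?_ he
    rw [← he] at h5'
    push_cast at h5 h5'
    rw [mul_right_comm] at h5 h5'
    have hu : IsUnit ((ρ : ZMod q) * (γ.2 : ZMod q)) := by
      rw [← h5] at ha; exact isUnit_of_mul_isUnit_left ha
    have := hu.mul_left_cancel (h5.trans h5'.symm)
    exact eq_of_cast_eq h1 (h2.trans hx) h1' (h2'.trans hx) this
  -- Over a given pair of blocks, `e` is a divisor of the first block, and then `u` is determined.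
  have hfib : ∀ γ ∈ Γ, (G.filter (fun g => (X g, Y' g.2) = γ)).card ≤ tauP P γ.1 * w γ.2 := by
    intro γ hγ
    obtain ⟨hγ1, -⟩ := hmem γ hγ
    unfold tauP
    rw [hw, ← Finset.card_product]
    apply Finset.card_le_card_of_injOn (fun g => (g.1.1, g.2))
    · intro g hg
      rw [Finset.mem_coe, Finset.mem_filter] at hg
      obtain ⟨hg1, rfl⟩ := hg
      obtain ⟨h1, h2, h3, h4, h5⟩ := hG g hg1
      simp only [Finset.coe_product, Set.mem_prod, Finset.mem_coe, Finset.mem_filter,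
        Nat.mem_divisors]
      exact ⟨⟨⟨Dvd.intro _ rfl, by simp only [hXdef]; omega⟩, h1⟩, h4, trivial⟩
    · intro g hg g' hg' he
      rw [Finset.mem_coe, Finset.mem_filter] at hg hg'
      obtain ⟨h1, h2, h3, h4, h5⟩ := hG g hg.1
      have hXX : X g = X g' := by
        have := hg.2.trans hg'.2.symm
        exact (Prod.ext_iff.1 this).1
      simp only [Prod.mk.injEq] at he
      simp only [hXdef] at hXX
      rw [← he.1] at hXX
      have h0 : 0 < g.1.1 := Nat.pos_of_ne_zero (by rintro h; rw [h] at h2; omega)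
      exact Prod.ext (Prod.ext he.1 (Nat.eq_of_mul_eq_mul_left h0 hXX)) he.2
  -- `n₂` is a divisor of the second block, and then `n₃` and `m` are its rough and smooth part.
  have hwt : ∀ γ ∈ Γ, w γ.2 ≤ tauP P γ.2 := by
    intro γ hγ
    obtain ⟨-, -, h3, -⟩ := hmem γ hγ
    unfold tauP
    apply Finset.card_le_card_of_injOn (fun t => t.1)
    · intro t ht
      rw [Finset.mem_coe, Finset.mem_filter] at ht
      obtain ⟨h1, -⟩ := hW t ht.1
      rw [Finset.mem_coe, Finset.mem_filter, Nat.mem_divisors, ← ht.2]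
      refine ⟨⟨⟨t.2.1 * t.2.2, by simp only [hYdef]; ring⟩, by rw [ht.2]; omega⟩,
        fun p hp hpd => hP (h1 p hp hpd)⟩
    · intro t ht t' ht' he
      rw [Finset.mem_coe, Finset.mem_filter] at ht ht'
      obtain ⟨h1, h2, h4, h5, -⟩ := hW t ht.1
      obtain ⟨h1', h2', h4', h5', -⟩ := hW t' ht'.1
      have hYY : Y' t = Y' t' := ht.2.trans ht'.2.symm
      simp only at he
      simp only [hYdef] at hYY
      rw [← he, mul_assoc, mul_assoc] at hYY
      have h0 : 0 < t.1 := Nat.pos_of_ne_zero (by rintro h; rw [h] at h5; omega)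
      have := rough_smooth_unique z h2 h2' h4 h4' (Nat.eq_of_mul_eq_mul_left h0 hYY)
      exact Prod.ext he (Prod.ext this.1 this.2)
  have hcard : (G.card : ℝ) ≤ ∑ γ ∈ Γ, (tauP P γ.1 : ℝ) * (w γ.2 : ℝ) := by
    rw [Finset.card_eq_sum_card_image (fun g => (X g, Y' g.2)) G]
    push_cast
    apply Finset.sum_le_sum
    intro γ hγ
    exact_mod_cast hfib γ hγ
  have hH := holder_cube Γ (fun γ => (tauP P γ.1 : ℝ)) (fun γ => (w γ.2 : ℝ))
    (fun γ => (tauP P γ.2 : ℝ)) (fun _ _ => by positivity) (fun _ _ => by positivity)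
    (fun γ hγ => by exact_mod_cast hwt γ hγ)
  have h1 : ∑ γ ∈ Γ, (tauP P γ.1 : ℝ) ^ 3 ≤ x * recipSum P q ^ 7 := by
    calc _ = ∑ n ∈ Γ.image Prod.fst, (tauP P n : ℝ) ^ 3 := (Finset.sum_image hinj1).symm
      _ ≤ ∑ n ∈ Finset.Icc 1 x, (tauP P n : ℝ) ^ 3 := by
          apply Finset.sum_le_sum_of_subset_of_nonneg
          · intro n hn
            obtain ⟨γ, hγ, rfl⟩ := Finset.mem_image.1 hn
            obtain ⟨h1, h2, -⟩ := hmem γ hγ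
            exact Finset.mem_Icc.2 ⟨h1, h2⟩
          · intros; positivity
      _ ≤ _ := by simpa using sum_tauP_pow_le P q 3 x hx
  have h2 : ∑ γ ∈ Γ, (tauP P γ.2 : ℝ) ^ 2 ≤ y * recipSum P q ^ 3 := by
    calc _ = ∑ n ∈ Γ.image Prod.snd, (tauP P n : ℝ) ^ 2 := (Finset.sum_image hinj2).symm
      _ ≤ ∑ n ∈ Finset.Icc 1 y, (tauP P n : ℝ) ^ 2 := by
          apply Finset.sum_le_sum_of_subset_of_nonneg
          · intro n hn
            obtain ⟨γ, hγ, rfl⟩ := Finset.mem_image.1 hn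
            obtain ⟨-, -, h1, h2, -⟩ := hmem γ hγ
            exact Finset.mem_Icc.2 ⟨h1, h2⟩
          · intros; positivity
      _ ≤ _ := by simpa using sum_tauP_pow_le P q 2 y hy
  have h3 : ∑ γ ∈ Γ, (w γ.2 : ℝ) ≤ W.card := by
    calc _ = ∑ n ∈ Γ.image Prod.snd, (w n : ℝ) :=
          (Finset.sum_image (f := fun n => (w n : ℝ)) hinj2).symm
      _ = ((∑ n ∈ Γ.image Prod.snd, w n : ℕ) : ℝ) := by push_cast; rfl
      _ ≤ _ := by
          have : ∑ n ∈ Γ.image Prod.snd, w n ≤ W.card := by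
            rw [hw, ← Finset.card_biUnion]
            · apply Finset.card_le_card
              intro t ht
              obtain ⟨n, -, hn⟩ := Finset.mem_biUnion.1 ht
              exact (Finset.mem_filter.1 hn).1
            · intro n _ n' _ hne
              rw [Function.onFun, Finset.disjoint_left]
              intro t ht ht'
              exact hne ((Finset.mem_filter.1 ht).2.symm.trans (Finset.mem_filter.1 ht').2)
          exact_mod_cast this
  have hD := recipSum_nonneg P q
  have hs3 : 0 ≤ ∑ γ ∈ Γ, (w γ.2 : ℝ) := Finset.sum_nonneg (fun _ _ => by positivity)
  have hs2 : 0 ≤ ∑ γ ∈ Γ, (tauP P γ.2 : ℝ) ^ 2 := Finset.sum_nonneg (fun _ _ => by positivity)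
  have hx0 : (0 : ℝ) ≤ x * recipSum P q ^ 7 := mul_nonneg (Nat.cast_nonneg _) (pow_nonneg hD _)
  refine (pow_le_pow_left₀ (Nat.cast_nonneg _) hcard 3).trans (hH.trans ?_)
  refine (mul_le_mul (mul_le_mul h1 h3 hs3 hx0) h2 hs2
    (mul_nonneg hx0 (Nat.cast_nonneg _))).trans (le_of_eq ?_)
  ring

/-! ### Six-tuples -/

/-- The standing assumptions on `ε` and `q` used in the counting estimates. -/
structure Large (q : ℕ) (ε : ℝ) : Prop where
  pos : 0 < ε
  lt : ε < 1 / 100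
  log_ge : 1 ≤ ε ^ 2 * Real.log q

/-- A factorisation type `(n₁, n₂, n₃, p, u, m)`. -/
abbrev Tup : Type := ℕ × ℕ × ℕ × ℕ × ℕ × ℕ

/-- The product `n₁ n₂ n₃ p u m`. -/
def tupProd (t : Tup) : ℕ :=
  t.1 * t.2.1 * t.2.2.1 * t.2.2.2.1 * t.2.2.2.2.1 * t.2.2.2.2.2

/-- The arithmetic conditions (without signs and residue classes of the individual factors)
satisfied by the six-tuples counted in the `k̄`-th summand of `S`. -/
structure GoodK (q : ℕ) (ε Q₁ : ℝ) (a : ZMod q) (k₁ k₂ k₃ : ℤ) (t : Tup) : Prop where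
  hk₁ : |k₁| ≤ (⌊ε ^ 2 * Real.log q⌋₊ : ℤ)
  hk₂ : |k₂| ≤ (⌊ε ^ 2 * Real.log q⌋₊ : ℤ)
  hk₃ : |k₃| ≤ (⌊ε ^ 2 * Real.log q⌋₊ : ℤ)
  n₁I : inIyk ((q : ℝ) ^ ((1 : ℝ) / 2 - ε / 4)) k₁ t.1
  n₂I : inIyk ((q : ℝ) ^ ((1 : ℝ) / 2 - ε / 4)) k₂ t.2.1
  n₃I : inIyk ((q : ℝ) ^ ((1 : ℝ) / 2 - ε / 4)) k₃ t.2.2.1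
  n₁r : PS {p | (q : ℝ) ^ Real.sqrt ε ≤ p} t.1
  n₂r : PS {p | (q : ℝ) ^ Real.sqrt ε ≤ p} t.2.1
  n₃r : PS {p | (q : ℝ) ^ Real.sqrt ε ≤ p} t.2.2.1
  pp : t.2.2.2.1.Prime
  pl : Q₁ / Real.exp 1 < t.2.2.2.1
  pu : (t.2.2.2.1 : ℝ) ≤ Q₁
  uI : inIyk ((q : ℝ) ^ ((1 : ℝ) / 2 + ε / 4)) (-k₁) t.2.2.2.2.1
  usq : Squarefree t.2.2.2.2.1
  mI : inIyk ((q : ℝ) ^ (ε / 2)) (-k₂ - k₃) t.2.2.2.2.2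
  msq : Squarefree t.2.2.2.2.2
  mS : t.2.2.2.2.2 ∈ ladderSet q Q₁
  mr : PS {p | Q₁ ≤ p} t.2.2.2.2.2
  cong : ((tupProd t : ℕ) : ZMod q) = a

/-- `GoodK` for some admissible `k̄`. -/
def Good (q : ℕ) (ε Q₁ : ℝ) (a : ZMod q) (t : Tup) : Prop :=
  ∃ k₁ k₂ k₃ : ℤ, GoodK q ε Q₁ a k₁ k₂ k₃ t

namespace Large
variable {q : ℕ} {ε : ℝ}

lemma log_large (h : Large q ε) : 10000 ≤ Real.log q := by
  have h1 := h.log_ge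
  have h2 : ε ^ 2 ≤ 1 / 10000 := by nlinarith [h.pos, h.lt]
  have h3 : 0 < Real.log q := by
    by_contra hn
    nlinarith [sq_nonneg ε]
  nlinarith

lemma q_pos (h : Large q ε) : (0 : ℝ) < q := by
  rcases Nat.eq_zero_or_pos q with h0 | h0
  · have := h.log_large
    rw [h0] at this
    norm_num at this
  · exact_mod_cast h0

lemma one_le_q (h : Large q ε) : (1 : ℝ) ≤ q := by
  have := h.q_pos
  have : 0 < q := by exact_mod_cast this
  exact_mod_cast this

lemma rpow_eq (h : Large q ε) (c : ℝ) : (q : ℝ) ^ c = Real.exp (c * Real.log q) := by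
  rw [Real.rpow_def_of_pos h.q_pos, mul_comm]

lemma sqrt_bounds (h : Large q ε) : 10 * ε ≤ Real.sqrt ε ∧ Real.sqrt ε ≤ 1 / 10 := by
  have h0 := h.pos
  have h1 := h.lt
  have hs := Real.sq_sqrt h0.le
  have hs0 : 0 < Real.sqrt ε := Real.sqrt_pos.2 h0
  constructor
  · have : Real.sqrt ε ≤ 1 / 10 := by
      rw [Real.sqrt_le_left (by norm_num)]; norm_num; linarith
    nlinarith
  · rw [Real.sqrt_le_left (by norm_num)]; norm_num; linarith

lemma one_lt_z (h : Large q ε) : 1 < (q : ℝ) ^ Real.sqrt ε := by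
  rw [h.rpow_eq]
  apply Real.one_lt_exp_iff.2
  have := h.log_large
  have := Real.sqrt_pos.2 h.pos
  positivity

lemma z_le_q (h : Large q ε) : (q : ℝ) ^ Real.sqrt ε ≤ q := by
  calc (q : ℝ) ^ Real.sqrt ε ≤ (q : ℝ) ^ (1 : ℝ) := by
        apply Real.rpow_le_rpow_of_exponent_le h.one_le_q
        linarith [h.sqrt_bounds.2]
    _ = q := Real.rpow_one _

lemma log_z (h : Large q ε) : Real.log ((q : ℝ) ^ Real.sqrt ε) = Real.sqrt ε * Real.log q :=
  Real.log_rpow h.q_pos _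

lemma abs_le (h : Large q ε) {k : ℤ} (hk : |k| ≤ (⌊ε ^ 2 * Real.log q⌋₊ : ℤ)) :
    -(ε ^ 2 * Real.log q) ≤ (k : ℝ) ∧ (k : ℝ) ≤ ε ^ 2 * Real.log q := by
  have h1 : ((|k| : ℤ) : ℝ) ≤ ((⌊ε ^ 2 * Real.log q⌋₊ : ℤ) : ℝ) := by exact_mod_cast hk
  have h2 : ((⌊ε ^ 2 * Real.log q⌋₊ : ℕ) : ℝ) ≤ ε ^ 2 * Real.log q :=
    Nat.floor_le (by linarith [h.log_ge])
  push_cast at h1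
  exact _root_.abs_le.1 (h1.trans h2)

/-- `R·U = q`. -/
lemma RU (h : Large q ε) :
    (q : ℝ) ^ ((1 : ℝ) / 2 - ε / 4) * (q : ℝ) ^ ((1 : ℝ) / 2 + ε / 4) = q := by
  rw [← Real.rpow_add h.q_pos]; ring_nf; exact Real.rpow_one _

/-- `R²·M = q`. -/
lemma RRM (h : Large q ε) :
    (q : ℝ) ^ ((1 : ℝ) / 2 - ε / 4) * (q : ℝ) ^ ((1 : ℝ) / 2 - ε / 4) * (q : ℝ) ^ (ε / 2) = q := by
  rw [← Real.rpow_add h.q_pos, ← Real.rpow_add h.q_pos]; ring_nf; exact Real.rpow_one _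

lemma Q_lt_z (h : Large q ε) {Q₁ : ℝ} (hQ : Q₁ ≤ (q : ℝ) ^ (ε ^ 2)) :
    Q₁ < (q : ℝ) ^ Real.sqrt ε := by
  refine hQ.trans_lt ?_
  rw [h.rpow_eq, h.rpow_eq]
  apply Real.exp_lt_exp.2
  apply mul_lt_mul_of_pos_right _ (by linarith [h.log_large])
  nlinarith [h.pos, h.lt, h.sqrt_bounds.1]

end Large

namespace GoodK
variable {q : ℕ} {ε Q₁ : ℝ} {a : ZMod q} {k₁ k₂ k₃ : ℤ} {t : Tup}

lemma pos_of_I {y : ℝ} {k : ℤ} {n : ℕ} (hy : 0 ≤ y) (h : inIyk y k n) : 1 ≤ n := by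
  have : (0 : ℝ) < n := lt_of_le_of_lt (by positivity) h.1
  exact_mod_cast this

lemma n₁_pos (h : GoodK q ε Q₁ a k₁ k₂ k₃ t) : 1 ≤ t.1 := pos_of_I (by positivity) h.n₁I
lemma n₂_pos (h : GoodK q ε Q₁ a k₁ k₂ k₃ t) : 1 ≤ t.2.1 := pos_of_I (by positivity) h.n₂I
lemma n₃_pos (h : GoodK q ε Q₁ a k₁ k₂ k₃ t) : 1 ≤ t.2.2.1 := pos_of_I (by positivity) h.n₃I
lemma u_pos (h : GoodK q ε Q₁ a k₁ k₂ k₃ t) : 1 ≤ t.2.2.2.2.1 := pos_of_I (by positivity) h.uI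
lemma m_pos (h : GoodK q ε Q₁ a k₁ k₂ k₃ t) : 1 ≤ t.2.2.2.2.2 := pos_of_I (by positivity) h.mI

lemma n₁u_le (hL : Large q ε) (h : GoodK q ε Q₁ a k₁ k₂ k₃ t) :
    (t.1 : ℝ) * t.2.2.2.2.1 ≤ q := by
  have h1 := h.n₁I.2
  have h2 := h.uI.2
  calc (t.1 : ℝ) * t.2.2.2.2.1 ≤ (Real.exp k₁ * (q : ℝ) ^ ((1 : ℝ) / 2 - ε / 4)) *
        (Real.exp ((-k₁ : ℤ) : ℝ) * (q : ℝ) ^ ((1 : ℝ) / 2 + ε / 4)) := by gcongr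
    _ = (Real.exp k₁ * Real.exp ((-k₁ : ℤ) : ℝ)) *
        ((q : ℝ) ^ ((1 : ℝ) / 2 - ε / 4) * (q : ℝ) ^ ((1 : ℝ) / 2 + ε / 4)) := by ring
    _ = q := by rw [hL.RU, ← Real.exp_add]; push_cast; simp

lemma n₂n₃m_le (hL : Large q ε) (h : GoodK q ε Q₁ a k₁ k₂ k₃ t) :
    (t.2.1 : ℝ) * t.2.2.1 * t.2.2.2.2.2 ≤ q := by
  have h1 := h.n₂I.2
  have h2 := h.n₃I.2
  have h3 := h.mI.2
  calc (t.2.1 : ℝ) * t.2.2.1 * t.2.2.2.2.2 ≤ (Real.exp k₂ * (q : ℝ) ^ ((1 : ℝ) / 2 - ε / 4)) *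
        (Real.exp k₃ * (q : ℝ) ^ ((1 : ℝ) / 2 - ε / 4)) *
        (Real.exp ((-k₂ - k₃ : ℤ) : ℝ) * (q : ℝ) ^ (ε / 2)) := by gcongr
    _ = (Real.exp k₂ * Real.exp k₃ * Real.exp ((-k₂ - k₃ : ℤ) : ℝ)) *
        ((q : ℝ) ^ ((1 : ℝ) / 2 - ε / 4) * (q : ℝ) ^ ((1 : ℝ) / 2 - ε / 4) *
          (q : ℝ) ^ (ε / 2)) := by ring
    _ = q := by rw [hL.RRM, ← Real.exp_add, ← Real.exp_add]; push_cast; ring_nf; simp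

lemma m_le (hL : Large q ε) (h : GoodK q ε Q₁ a k₁ k₂ k₃ t) :
    (t.2.2.2.2.2 : ℝ) ≤ (q : ℝ) ^ (ε / 2 + 2 * ε ^ 2) := by
  refine h.mI.2.trans ?_
  have h2 := hL.abs_le h.hk₂
  have h3 := hL.abs_le h.hk₃
  rw [hL.rpow_eq, hL.rpow_eq, ← Real.exp_add]
  apply Real.exp_le_exp.2
  push_cast
  linarith [h2.1, h3.1]

lemma m_lt_z (hL : Large q ε) (h : GoodK q ε Q₁ a k₁ k₂ k₃ t) :
    (t.2.2.2.2.2 : ℝ) < (q : ℝ) ^ Real.sqrt ε := by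
  refine (h.m_le hL).trans_lt ?_
  rw [hL.rpow_eq, hL.rpow_eq]
  apply Real.exp_lt_exp.2
  apply mul_lt_mul_of_pos_right _ (by linarith [hL.log_large])
  nlinarith [hL.pos, hL.lt, hL.sqrt_bounds.1]

lemma I_le_sqrt (hL : Large q ε) {k : ℤ} (hk : |k| ≤ (⌊ε ^ 2 * Real.log q⌋₊ : ℤ)) {n : ℕ}
    (h : inIyk ((q : ℝ) ^ ((1 : ℝ) / 2 - ε / 4)) k n) : (n : ℝ) ≤ (q : ℝ) ^ ((1 : ℝ) / 2) := by
  refine h.2.trans ?_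
  have h2 := hL.abs_le hk
  rw [hL.rpow_eq, hL.rpow_eq, ← Real.exp_add]
  apply Real.exp_le_exp.2
  have : ε ^ 2 * Real.log q ≤ ε / 4 * Real.log q := by
    apply mul_le_mul_of_nonneg_right _ (by linarith [hL.log_large])
    nlinarith [hL.pos, hL.lt]
  linarith [h2.2]

lemma tupProd_le (hL : Large q ε) (h : GoodK q ε Q₁ a k₁ k₂ k₃ t) :
    (tupProd t : ℝ) ≤ (q : ℝ) ^ 2 * Q₁ := by
  have h1 := h.n₁u_le hL
  have h2 := h.n₂n₃m_le hL
  have h3 := h.pu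
  have hq := hL.q_pos
  calc (tupProd t : ℝ) = ((t.1 : ℝ) * t.2.2.2.2.1) * ((t.2.1 : ℝ) * t.2.2.1 * t.2.2.2.2.2) *
        t.2.2.2.1 := by unfold tupProd; push_cast; ring
    _ ≤ q * q * Q₁ := by gcongr
    _ = _ := by ring

end GoodK

/-! ### The core estimate for good tuples -/

/-- The constant in the rough-number count. -/
def roughConst : ℝ := (Real.log 4 + 4) * Real.exp 11

/-- The constant in the final form of the core counting estimate. -/
def coreConst : ℝ := 144 * roughConst ^ 2 * Real.exp 230

lemma one_le_roughConst : 1 ≤ roughConst := by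
  have h1 : 0 ≤ Real.log 4 := Real.log_nonneg (by norm_num)
  have h2 : 1 ≤ Real.exp 11 := Real.one_le_exp (by norm_num)
  unfold roughConst
  nlinarith

lemma one_le_coreConst : 1 ≤ coreConst := by
  have h1 := one_le_roughConst
  have h2 : 1 ≤ Real.exp 230 := Real.one_le_exp (by norm_num)
  unfold coreConst
  have h3 : 1 ≤ roughConst ^ 2 := one_le_pow₀ h1
  nlinarith

/-- The `z`-rough integers in the interval `I_R(k)`. -/
def roughSet (q : ℕ) (ε : ℝ) (k : ℤ) : Finset ℕ :=
  (Finset.Icc 1 ⌊Real.exp k * (q : ℝ) ^ ((1 : ℝ) / 2 - ε / 4)⌋₊).filter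
    (fun n : ℕ => PS {p | (q : ℝ) ^ Real.sqrt ε ≤ p} n ∧
      Real.exp ((k : ℝ) - 1) * (q : ℝ) ^ ((1 : ℝ) / 2 - ε / 4) < n)

lemma card_roughSet_le {q : ℕ} {ε : ℝ} (hL : Large q ε) {k : ℤ}
    (hk : |k| ≤ (⌊ε ^ 2 * Real.log q⌋₊ : ℤ)) :
    ((roughSet q ε k).card : ℝ) ≤ 4 * roughConst / (Real.sqrt ε * Real.log q) *
      (Real.exp k * (q : ℝ) ^ ((1 : ℝ) / 2 - ε / 4)) := by
  set R := (q : ℝ) ^ ((1 : ℝ) / 2 - ε / 4) with hR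
  have hlq := hL.log_large
  have hkb := hL.abs_le hk
  have hse : 0 < Real.sqrt ε := Real.sqrt_pos.2 hL.pos
  have hRexp : R = Real.exp (((1 : ℝ) / 2 - ε / 4) * Real.log q) := hL.rpow_eq _
  have hε2 : ε ^ 2 * Real.log q ≤ 1 / 10000 * Real.log q := by
    apply mul_le_mul_of_nonneg_right _ (by linarith)
    nlinarith [hL.pos, hL.lt]
  have hε1 : ε / 4 * Real.log q ≤ 1 / 400 * Real.log q := by
    apply mul_le_mul_of_nonneg_right _ (by linarith)
    linarith [hL.lt]
  have hε0 : 0 ≤ ε * Real.log q := mul_nonneg hL.pos.le (by linarith)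
  have hw : Real.log q / 4 ≤ Real.log (Real.exp ((k : ℝ) - 1) * R) := by
    rw [hRexp, ← Real.exp_add, Real.log_exp]
    linarith [hkb.1]
  have hw1 : 1 < Real.exp ((k : ℝ) - 1) * R := by
    by_contra hn
    have := Real.log_nonpos (by positivity) (not_lt.1 hn)
    linarith
  have hN : ⌊Real.exp k * R⌋₊ ≤ q := by
    have : Real.exp k * R ≤ q := by
      rw [hRexp, ← Real.exp_add]
      calc _ ≤ Real.exp (Real.log q) := by
            apply Real.exp_le_exp.2
            linarith [hkb.2]
        _ = q := Real.exp_log hL.q_pos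
    exact Nat.floor_le_of_le this
  have h1 := card_rough_le _ _ q _ hL.one_lt_z hL.z_le_q hN hw1
  rw [hL.log_z] at h1
  have h2 : ((roughSet q ε k).card : ℝ) * (Real.log q / 4) ≤
      roughConst * (Real.log q / (Real.sqrt ε * Real.log q)) * (Real.exp k * R) := by
    calc _ ≤ ((roughSet q ε k).card : ℝ) * Real.log (Real.exp ((k : ℝ) - 1) * R) := by gcongr
      _ ≤ _ := h1
      _ ≤ _ := by
          have : 0 ≤ roughConst := by linarith [one_le_roughConst]
          have h3 : ((⌊Real.exp k * R⌋₊ : ℕ) : ℝ) ≤ Real.exp k * R := Nat.floor_le (by positivity)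
          unfold roughConst at *
          gcongr
  rw [← le_div_iff₀ (by linarith)] at h2
  refine h2.trans (le_of_eq ?_)
  field_simp

/-- The triples `(n₂, n₃, m)` with `n₂ ∈ I_R(k₂)`, `n₃ ∈ I_R(k₃)` rough, `m` smooth, and
`m ≤ M e^(-k₂-k₃) / s`, for some `|k₂|, |k₃| ≤ K`. -/
def triples (q : ℕ) (ε s : ℝ) : Finset (ℕ × ℕ × ℕ) :=
  ((Finset.Icc (-(⌊ε ^ 2 * Real.log q⌋₊ : ℤ)) ⌊ε ^ 2 * Real.log q⌋₊) ×ˢ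
    (Finset.Icc (-(⌊ε ^ 2 * Real.log q⌋₊ : ℤ)) ⌊ε ^ 2 * Real.log q⌋₊)).biUnion
    (fun k => roughSet q ε k.1 ×ˢ roughSet q ε k.2 ×ˢ
      (Finset.Icc 1 ⌊Real.exp ((-k.1 - k.2 : ℤ) : ℝ) * (q : ℝ) ^ (ε / 2) / s⌋₊).filter
        (PS {p | (p : ℝ) < (q : ℝ) ^ Real.sqrt ε}))

lemma card_triples_le {q : ℕ} {ε s : ℝ} (hL : Large q ε) (hs : 1 ≤ s) :
    ((triples q ε s).card : ℝ) ≤ 144 * roughConst ^ 2 * ε ^ 3 * (q / s) := by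
  have hlq := hL.log_large
  have hse : 0 < Real.sqrt ε := Real.sqrt_pos.2 hL.pos
  have hC := one_le_roughConst
  set K := ⌊ε ^ 2 * Real.log q⌋₊ with hK
  set I := Finset.Icc (-(K : ℤ)) K with hI
  set c := 4 * roughConst / (Real.sqrt ε * Real.log q) with hc
  have hc0 : 0 ≤ c := by positivity
  have hbound : ∀ k ∈ I ×ˢ I, ((roughSet q ε k.1 ×ˢ roughSet q ε k.2 ×ˢ
      (Finset.Icc 1 ⌊Real.exp ((-k.1 - k.2 : ℤ) : ℝ) * (q : ℝ) ^ (ε / 2) / s⌋₊).filter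
        (PS {p | (p : ℝ) < (q : ℝ) ^ Real.sqrt ε})).card : ℝ) ≤ c ^ 2 * (q / s) := by
    rintro ⟨k, l⟩ hk
    rw [Finset.mem_product, hI, Finset.mem_Icc, Finset.mem_Icc] at hk
    have h1 := card_roughSet_le hL (k := k) (abs_le.2 hk.1)
    have h2 := card_roughSet_le hL (k := l) (abs_le.2 hk.2)
    have h3 : (((Finset.Icc 1 ⌊Real.exp ((-k - l : ℤ) : ℝ) * (q : ℝ) ^ (ε / 2) / s⌋₊).filter
        (PS {p | (p : ℝ) < (q : ℝ) ^ Real.sqrt ε})).card : ℝ) ≤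
        Real.exp ((-k - l : ℤ) : ℝ) * (q : ℝ) ^ (ε / 2) / s := by
      refine le_trans ?_ (Nat.floor_le (by positivity))
      have := Finset.card_filter_le (Finset.Icc 1 ⌊Real.exp ((-k - l : ℤ) : ℝ) *
        (q : ℝ) ^ (ε / 2) / s⌋₊) (PS {p | (p : ℝ) < (q : ℝ) ^ Real.sqrt ε})
      rw [Nat.card_Icc, Nat.add_sub_cancel] at this
      exact_mod_cast this
    rw [Finset.card_product, Finset.card_product]
    push_cast only [Nat.cast_mul]
    calc _ ≤ (c * (Real.exp k * (q : ℝ) ^ ((1 : ℝ) / 2 - ε / 4))) *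
          ((c * (Real.exp l * (q : ℝ) ^ ((1 : ℝ) / 2 - ε / 4))) *
            (Real.exp ((-k - l : ℤ) : ℝ) * (q : ℝ) ^ (ε / 2) / s)) := by
          gcongr
      _ = c ^ 2 * ((Real.exp k * Real.exp l * Real.exp ((-k - l : ℤ) : ℝ)) *
          ((q : ℝ) ^ ((1 : ℝ) / 2 - ε / 4) * (q : ℝ) ^ ((1 : ℝ) / 2 - ε / 4) *
            (q : ℝ) ^ (ε / 2)) / s) := by ring
      _ = _ := by
          rw [hL.RRM, ← Real.exp_add, ← Real.exp_add]
          push_cast; ring_nf; simp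
  have hIcard : ((I ×ˢ I).card : ℝ) ≤ (3 * (ε ^ 2 * Real.log q)) ^ 2 := by
    have h1 : I.card = 2 * K + 1 := by
      rw [hI, Int.card_Icc]; omega
    have h2 : (K : ℝ) ≤ ε ^ 2 * Real.log q := Nat.floor_le (by linarith [hL.log_ge])
    rw [Finset.card_product, h1]
    push_cast
    rw [← sq]
    gcongr
    linarith [hL.log_ge]
  calc ((triples q ε s).card : ℝ) ≤ ((∑ k ∈ I ×ˢ I, (roughSet q ε k.1 ×ˢ roughSet q ε k.2 ×ˢ
      (Finset.Icc 1 ⌊Real.exp ((-k.1 - k.2 : ℤ) : ℝ) * (q : ℝ) ^ (ε / 2) / s⌋₊).filter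
        (PS {p | (p : ℝ) < (q : ℝ) ^ Real.sqrt ε})).card : ℕ) : ℝ) := by
        exact_mod_cast Finset.card_biUnion_le
    _ ≤ ∑ k ∈ I ×ˢ I, c ^ 2 * (q / s) := by
        push_cast only [Nat.cast_sum]
        exact Finset.sum_le_sum hbound
    _ = (I ×ˢ I).card * (c ^ 2 * (q / s)) := by rw [Finset.sum_const, nsmul_eq_mul]
    _ ≤ (3 * (ε ^ 2 * Real.log q)) ^ 2 * (c ^ 2 * (q / s)) := by
        gcongr
    _ = _ := by
        rw [hc, div_pow, mul_pow (Real.sqrt ε), Real.sq_sqrt hL.pos.le]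
        have : ε ≠ 0 := hL.pos.ne'
        field_simp
        ring

/-- The core counting estimate in the form in which it is applied: `T` is a set of good tuples,
re-encoded injectively through `(e, u', n₂, n₃, m')`. -/
lemma core_apply {q : ℕ} {ε Q₁ : ℝ} {a : ZMod q} (hL : Large q ε) (ha : IsUnit a)
    (A B s x : ℝ) (hA : 1 ≤ A) (hB : 1 ≤ B) (hs : 1 ≤ s) (hx0 : 0 ≤ x) (hxq : x ≤ q) (ρ : ℕ)
    (T : Finset Tup) (hT : ∀ t ∈ T, Good q ε Q₁ a t) (e u' m' : Tup → ℕ)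
    (hinj : Set.InjOn (fun t : Tup => ((e t, u' t), (t.2.1, t.2.2.1, m' t))) (T : Set Tup))
    (h : ∀ t ∈ T, PS (blockPrimes A B ((q : ℝ) ^ Real.sqrt ε)) (e t) ∧ 1 ≤ e t * u' t ∧
      ((e t * u' t : ℕ) : ℝ) ≤ x ∧ m' t ∣ t.2.2.2.2.2 ∧
      s * (m' t : ℝ) ≤ t.2.2.2.2.2 ∧ ρ * (e t * u' t) * (t.2.1 * t.2.2.1 * m' t) = tupProd t) :
    (T.card : ℝ) ^ 3 ≤ (coreConst / ε) ^ 3 * x * (q / s) ^ 2 := by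
  set z := (q : ℝ) ^ Real.sqrt ε with hz
  set P := blockPrimes A B z with hP
  have hPz : {p : ℕ | z ≤ p} ⊆ P := fun p hp => Or.inr (Or.inr hp)
  have hs0 : 0 < s := by linarith
  have hq0 := hL.q_pos
  have hcore := core_count q P z hPz a ha ρ ⌊x⌋₊ ⌊(q : ℝ) / s⌋₊ (Nat.floor_le_of_le hxq)
    (Nat.floor_le_of_le (div_le_self hq0.le hs)) (triples q ε s) (by
      rintro ⟨n₂, n₃, m⟩ ht
      simp only [triples, Finset.mem_biUnion, Finset.mem_product, Finset.mem_filter, roughSet,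
        Finset.mem_Icc] at ht
      obtain ⟨⟨k, l⟩, -, ⟨⟨h1, h2⟩, h3, -⟩, ⟨⟨h4, h5⟩, h6, -⟩, ⟨h7, h8⟩, h9⟩ := ht
      refine ⟨h3, h6, h9, Nat.mul_pos (Nat.mul_pos h1 h4) h7, ?_⟩
      apply Nat.le_floor
      have h2' := (Nat.le_floor_iff (by positivity)).1 h2
      have h5' := (Nat.le_floor_iff (by positivity)).1 h5
      have h8' := (Nat.le_floor_iff (by positivity)).1 h8
      push_cast only [Nat.cast_mul]
      calc (n₂ : ℝ) * n₃ * m ≤ (Real.exp k * (q : ℝ) ^ ((1 : ℝ) / 2 - ε / 4)) *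
            (Real.exp l * (q : ℝ) ^ ((1 : ℝ) / 2 - ε / 4)) *
            (Real.exp ((-k - l : ℤ) : ℝ) * (q : ℝ) ^ (ε / 2) / s) := by gcongr
        _ = (Real.exp k * Real.exp l * Real.exp ((-k - l : ℤ) : ℝ)) *
            ((q : ℝ) ^ ((1 : ℝ) / 2 - ε / 4) * (q : ℝ) ^ ((1 : ℝ) / 2 - ε / 4) *
              (q : ℝ) ^ (ε / 2)) / s := by ring
        _ = q / s := by
            rw [hL.RRM, ← Real.exp_add, ← Real.exp_add]
            push_cast; ring_nf; simp)
    (T.image (fun t : Tup => ((e t, u' t), (t.2.1, t.2.2.1, m' t)))) (by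
      intro g hg
      obtain ⟨t, ht, rfl⟩ := Finset.mem_image.1 hg
      obtain ⟨k₁, k₂, k₃, hG⟩ := hT t ht
      obtain ⟨h1, h2, h3, h5, h6, h7⟩ := h t ht
      have h4 : 1 ≤ m' t := Nat.pos_of_dvd_of_pos h5 hG.m_pos
      refine ⟨h1, h2, Nat.le_floor h3, ?_, ?_⟩
      · simp only [triples, Finset.mem_biUnion, Finset.mem_product, Finset.mem_filter, roughSet,
          Finset.mem_Icc]
        refine ⟨(k₂, k₃), ⟨abs_le.1 hG.hk₂, abs_le.1 hG.hk₃⟩,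
          ⟨⟨hG.n₂_pos, Nat.le_floor hG.n₂I.2⟩, hG.n₂r, hG.n₂I.1⟩,
          ⟨⟨hG.n₃_pos, Nat.le_floor hG.n₃I.2⟩, hG.n₃r, hG.n₃I.1⟩, ⟨h4, ?_⟩, ?_⟩
        · apply Nat.le_floor
          rw [le_div_iff₀ hs0, mul_comm]
          exact h6.trans hG.mI.2
        · intro p hp hpd
          have h8 : (p : ℝ) ≤ t.2.2.2.2.2 := by
            exact_mod_cast Nat.le_of_dvd hG.m_pos (hpd.trans h5)
          exact h8.trans_lt (hG.m_lt_z hL)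
      · simp only
        rw [h7]; exact hG.cong)
  rw [Finset.card_image_of_injOn hinj] at hcore
  have hD := recipSum_blockPrimes_le A B z q hA hB hL.one_lt_z hL.z_le_q
  have hD0 := recipSum_nonneg P q
  have hse : 0 < Real.sqrt ε := Real.sqrt_pos.2 hL.pos
  have hlq := hL.log_large
  have hD' : recipSum P q ^ 10 ≤ Real.exp 230 / ε ^ 5 := by
    have e1 : Real.exp 23 * (Real.log q / Real.log z) = Real.exp 23 / Real.sqrt ε := by
      rw [hL.log_z]; field_simp
    rw [e1] at hD
    refine (pow_le_pow_left₀ hD0 hD 10).trans (le_of_eq ?_)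
    rw [div_pow, ← Real.exp_nat_mul, show Real.sqrt ε ^ 10 = (Real.sqrt ε ^ 2) ^ 5 by ring,
      Real.sq_sqrt hL.pos.le]
    norm_num
  have hW := card_triples_le hL hs
  have hε := hL.pos
  have hC := one_le_coreConst
  calc (T.card : ℝ) ^ 3 ≤ _ := hcore
    _ ≤ (144 * roughConst ^ 2 * ε ^ 3 * (q / s)) * (Real.exp 230 / ε ^ 5) * x * (q / s) := by
        have := Nat.floor_le hx0
        have := Nat.floor_le (show (0 : ℝ) ≤ q / s by positivity)
        gcongr
    _ = coreConst * (1 / ε ^ 2) * x * (q / s) ^ 2 := by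
        unfold coreConst
        field_simp
    _ ≤ (coreConst / ε) ^ 3 * x * (q / s) ^ 2 := by
        apply mul_le_mul_of_nonneg_right _ (by positivity)
        apply mul_le_mul_of_nonneg_right _ hx0
        rw [div_pow, ← mul_one_div (coreConst ^ 3)]
        have h1 : coreConst ≤ coreConst ^ 3 := le_self_pow₀ hC (by norm_num)
        have h2 : 1 / ε ^ 2 ≤ 1 / ε ^ 3 := by
          apply one_div_le_one_div_of_le (by positivity)
          exact pow_le_pow_of_le_one hε.le (by linarith [hL.lt]) (by norm_num)
        gcongr

/-! ### Tuples with a common prime factor -/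

lemma le_mul_rpow_third {x A w : ℝ} (hA : 0 ≤ A) (hw : 0 ≤ w) (h : x ^ 3 ≤ A ^ 3 * w) :
    x ≤ A * w ^ ((1 : ℝ) / 3) := by
  have h1 : (A * w ^ ((1 : ℝ) / 3)) ^ 3 = A ^ 3 * w := by
    rw [mul_pow, ← Real.rpow_natCast (w ^ ((1 : ℝ) / 3)), ← Real.rpow_mul hw]
    norm_num
  rw [← h1] at h
  exact le_of_pow_le_pow_left₀ (by norm_num) (by positivity) h

lemma PS.rough_block {A B z : ℝ} {n : ℕ} (h : PS {p | z ≤ p} n) : PS (blockPrimes A B z) n :=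
  fun p hp hpd => Or.inr (Or.inr (h p hp hpd))

lemma div_eq_inj {a b d : ℕ} (ha : d ∣ a) (hb : d ∣ b) (h : a / d = b / d) : a = b := by
  rw [← Nat.div_mul_cancel ha, ← Nat.div_mul_cancel hb, h]

lemma cast_div_eq {a d : ℕ} (hd : 0 < d) (h : d ∣ a) : ((a / d : ℕ) : ℝ) = (a : ℝ) / d :=
  Nat.cast_div h (by positivity)

section cases
variable {q : ℕ} {ε Q₁ : ℝ} {a : ZMod q}

/-- Summation over the prime `p ∈ (Q₁/e, Q₁]` of a tuple. -/
lemma sum_over_p (hL : Large q ε) (hQ : 3 ≤ Q₁) (T : Finset Tup)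
    (hT : ∀ t ∈ T, Good q ε Q₁ a t)
    (h : ∀ p : ℕ, p.Prime → Q₁ / 3 ≤ p → (p : ℝ) ≤ Q₁ →
      ((T.filter (fun t => t.2.2.2.1 = p)).card : ℝ) ^ 3 ≤
        (coreConst / ε * q) ^ 3 * (9 / Q₁)) :
    (T.card : ℝ) ≤ 3 * (coreConst / ε) * q * Q₁ ^ ((2 : ℝ) / 3) := by
  have hC := one_le_coreConst
  have hε := hL.pos
  have hQ0 : 0 < Q₁ := by linarith
  have hmap : ∀ t ∈ T, t.2.2.2.1 ∈ (Finset.Icc 1 ⌊Q₁⌋₊).filter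
      (fun p : ℕ => p.Prime ∧ Q₁ / 3 ≤ p) := by
    intro t ht
    obtain ⟨k₁, k₂, k₃, hG⟩ := hT t ht
    simp only [Finset.mem_filter, Finset.mem_Icc]
    refine ⟨⟨hG.pp.pos, Nat.le_floor hG.pu⟩, hG.pp, le_trans ?_ hG.pl.le⟩
    have := Real.exp_one_lt_d9
    exact div_le_div_of_nonneg_left hQ0.le (Real.exp_pos 1) (by linarith)
  have h9 : (9 / Q₁) ^ ((1 : ℝ) / 3) * Q₁ ≤ 3 * Q₁ ^ ((2 : ℝ) / 3) := by
    have e1 : Q₁ ^ ((2 : ℝ) / 3) = Q₁ / Q₁ ^ ((1 : ℝ) / 3) := by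
      rw [show (2 : ℝ) / 3 = 1 - 1 / 3 by norm_num, Real.rpow_sub hQ0, Real.rpow_one]
    have e2 : (9 : ℝ) ^ ((1 : ℝ) / 3) ≤ 3 := by
      calc (9 : ℝ) ^ ((1 : ℝ) / 3) ≤ (27 : ℝ) ^ ((1 : ℝ) / 3) := by gcongr; norm_num
        _ = 3 := by
          rw [show (27 : ℝ) = 3 ^ (3 : ℝ) by norm_num, ← Real.rpow_mul (by norm_num)]; norm_num
    rw [Real.div_rpow (by norm_num) hQ0.le, e1, div_mul_eq_mul_div, mul_div_assoc]
    gcongr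
  rw [Finset.card_eq_sum_card_fiberwise hmap]
  push_cast only [Nat.cast_sum]
  calc _ ≤ ∑ p ∈ (Finset.Icc 1 ⌊Q₁⌋₊).filter (fun p : ℕ => p.Prime ∧ Q₁ / 3 ≤ p),
        coreConst / ε * q * (9 / Q₁) ^ ((1 : ℝ) / 3) := by
        apply Finset.sum_le_sum
        intro p hp
        simp only [Finset.mem_filter, Finset.mem_Icc] at hp
        apply le_mul_rpow_third (by positivity) (by positivity)
        exact h p hp.2.1 hp.2.2 ((Nat.le_floor_iff hQ0.le).1 hp.1.2)
    _ = ((Finset.Icc 1 ⌊Q₁⌋₊).filter (fun p : ℕ => p.Prime ∧ Q₁ / 3 ≤ p)).card *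
        (coreConst / ε * q * (9 / Q₁) ^ ((1 : ℝ) / 3)) := by
        rw [Finset.sum_const, nsmul_eq_mul]
    _ ≤ Q₁ * (coreConst / ε * q * (9 / Q₁) ^ ((1 : ℝ) / 3)) := by
        gcongr
        have := Finset.card_filter_le (Finset.Icc 1 ⌊Q₁⌋₊) (fun p : ℕ => p.Prime ∧ Q₁ / 3 ≤ p)
        rw [Nat.card_Icc, Nat.add_sub_cancel] at this
        exact le_trans (by exact_mod_cast this) (Nat.floor_le hQ0.le)
    _ = coreConst / ε * q * ((9 / Q₁) ^ ((1 : ℝ) / 3) * Q₁) := by ring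
    _ ≤ coreConst / ε * q * (3 * Q₁ ^ ((2 : ℝ) / 3)) := by gcongr
    _ = _ := by ring

/-- Tuples with `p ∣ u`: for fixed `p`, taking `p²` out leaves a first block `n₁ (u/p) ≤ q/p`. -/
lemma count_p_dvd_u (hL : Large q ε) (ha : IsUnit a) (hQ : 3 ≤ Q₁) (T : Finset Tup)
    (hT : ∀ t ∈ T, Good q ε Q₁ a t) (hb : ∀ t ∈ T, t.2.2.2.1 ∣ t.2.2.2.2.1) :
    (T.card : ℝ) ≤ 3 * (coreConst / ε) * q * Q₁ ^ ((2 : ℝ) / 3) := by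
  apply sum_over_p hL hQ T hT
  intro p hp hpl hpu
  have hp1 : (1 : ℝ) ≤ p := by exact_mod_cast hp.one_lt.le
  have hq := hL.q_pos
  have hε := hL.pos
  have hC := one_le_coreConst
  refine (core_apply hL ha 1 1 1 (q / p) le_rfl le_rfl le_rfl (by positivity)
    (div_le_self hq.le hp1) (p ^ 2) (T.filter (fun t => t.2.2.2.1 = p))
    (fun t ht => hT t (Finset.mem_filter.1 ht).1) (fun t => t.1) (fun t => t.2.2.2.2.1 / p)
    (fun t => t.2.2.2.2.2) ?_ ?_).trans ?_
  · rintro ⟨n₁, n₂, n₃, p₁, u, m⟩ ht ⟨n₁', n₂', n₃', p₁', u', m'⟩ ht' he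
    rw [Finset.mem_coe, Finset.mem_filter] at ht ht'
    have h1 := hb _ ht.1
    have h2 := hb _ ht'.1
    simp only at ht ht' h1 h2
    simp only [Prod.mk.injEq] at he
    obtain ⟨⟨e1, e2⟩, e3, e4, e5⟩ := he
    rw [ht.2] at h1
    rw [ht'.2] at h2
    rw [e1, e3, e4, e5, ht.2, ht'.2, div_eq_inj h1 h2 e2]
  · rintro ⟨n₁, n₂, n₃, p₁, u, m⟩ ht
    rw [Finset.mem_filter] at ht
    have hdv := hb _ ht.1
    obtain ⟨k₁, k₂, k₃, hG⟩ := hT _ ht.1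
    obtain rfl : p₁ = p := ht.2
    simp only at hdv ⊢
    obtain ⟨v, rfl⟩ := hdv
    rw [Nat.mul_div_cancel_left _ hp.pos]
    have h1 := hG.n₁_pos
    have h2 := hG.u_pos
    have h3 := hG.n₁u_le hL
    simp only at h1 h2 h3
    push_cast at h3
    refine ⟨hG.n₁r.rough_block, ?_, ?_, dvd_rfl, by simp, ?_⟩
    · exact Nat.mul_pos h1 (Nat.pos_of_mul_pos_left h2)
    · rw [le_div_iff₀ (by positivity)]
      push_cast
      linarith
    · simp only [tupProd]; ring
  · rw [div_one]
    have : q / p ≤ q * (9 / Q₁) := by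
      rw [div_le_iff₀ (by positivity), mul_assoc]
      apply le_mul_of_one_le_right hq.le
      rw [div_mul_eq_mul_div, le_div_iff₀ (by linarith)]
      linarith
    calc _ ≤ (coreConst / ε) ^ 3 * (q * (9 / Q₁)) * (q : ℝ) ^ 2 := by gcongr
      _ = _ := by ring

/-- Tuples with `p ∣ m`: for fixed `p`, taking `p²` out leaves a second block
`n₂ n₃ (m/p) ≤ q/p`. -/
lemma count_p_dvd_m (hL : Large q ε) (ha : IsUnit a) (hQ : 3 ≤ Q₁) (T : Finset Tup)
    (hT : ∀ t ∈ T, Good q ε Q₁ a t) (hb : ∀ t ∈ T, t.2.2.2.1 ∣ t.2.2.2.2.2) :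
    (T.card : ℝ) ≤ 3 * (coreConst / ε) * q * Q₁ ^ ((2 : ℝ) / 3) := by
  apply sum_over_p hL hQ T hT
  intro p hp hpl hpu
  have hp1 : (1 : ℝ) ≤ p := by exact_mod_cast hp.one_lt.le
  have hq := hL.q_pos
  have hε := hL.pos
  have hC := one_le_coreConst
  refine (core_apply hL ha 1 1 p q le_rfl le_rfl hp1 (by positivity)
    le_rfl (p ^ 2) (T.filter (fun t => t.2.2.2.1 = p))
    (fun t ht => hT t (Finset.mem_filter.1 ht).1) (fun t => t.1) (fun t => t.2.2.2.2.1)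
    (fun t => t.2.2.2.2.2 / p) ?_ ?_).trans ?_
  · rintro ⟨n₁, n₂, n₃, p₁, u, m⟩ ht ⟨n₁', n₂', n₃', p₁', u', m'⟩ ht' he
    rw [Finset.mem_coe, Finset.mem_filter] at ht ht'
    have h1 := hb _ ht.1
    have h2 := hb _ ht'.1
    simp only at ht ht' h1 h2
    simp only [Prod.mk.injEq] at he
    obtain ⟨⟨e1, e2⟩, e3, e4, e5⟩ := he
    rw [ht.2] at h1
    rw [ht'.2] at h2
    rw [e1, e3, e4, e2, ht.2, ht'.2, div_eq_inj h1 h2 e5]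
  · rintro ⟨n₁, n₂, n₃, p₁, u, m⟩ ht
    rw [Finset.mem_filter] at ht
    have hdv := hb _ ht.1
    obtain ⟨k₁, k₂, k₃, hG⟩ := hT _ ht.1
    obtain rfl : p₁ = p := ht.2
    simp only at hdv ⊢
    obtain ⟨v, rfl⟩ := hdv
    rw [Nat.mul_div_cancel_left _ hp.pos]
    have h3 := hG.n₁u_le hL
    simp only at h3
    refine ⟨hG.n₁r.rough_block, Nat.mul_pos hG.n₁_pos hG.u_pos, ?_, Dvd.intro_left _ rfl,
      by push_cast; rfl, ?_⟩
    · exact_mod_cast h3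
    · simp only [tupProd]; ring
  · have h9 : 1 / (p : ℝ) ^ 2 ≤ 9 / Q₁ := by
      rw [div_le_div_iff₀ (by positivity) (by linarith)]
      nlinarith
    calc _ = (coreConst / ε) ^ 3 * (q : ℝ) ^ 3 * (1 / (p : ℝ) ^ 2) := by ring
      _ ≤ (coreConst / ε) ^ 3 * (q : ℝ) ^ 3 * (9 / Q₁) := by gcongr
      _ = _ := by ring

/-- Tuples with `r ∣ u` and `r ∣ m` for a given integer `r ≥ Q₁`.  Since `r` is taken out of `u`, there
is room to put `p` into the block of `n₁ u`. -/
lemma count_r (hL : Large q ε) (ha : IsUnit a) (hQ : 3 ≤ Q₁) (hQu : Q₁ ≤ (q : ℝ) ^ (ε ^ 2))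
    (r : ℕ) (hr : Q₁ ≤ r) (T : Finset Tup) (hT : ∀ t ∈ T, Good q ε Q₁ a t)
    (hb : ∀ t ∈ T, r ∣ t.2.2.2.2.1 ∧ r ∣ t.2.2.2.2.2) :
    (T.card : ℝ) ≤ coreConst / ε * q * Q₁ ^ ((1 : ℝ) / 3) * (1 / r) := by
  have hr0 : (0 : ℝ) < r := by linarith
  have hr1 : (1 : ℝ) ≤ r := by linarith
  have hrp : 0 < r := by exact_mod_cast hr0
  have hq := hL.q_pos
  have hε := hL.pos
  have hC := one_le_coreConst
  have he1 : 1 ≤ Q₁ / Real.exp 1 := by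
    rw [le_div_iff₀ (Real.exp_pos 1)]
    linarith [Real.exp_one_lt_d9]
  have key : (T.card : ℝ) ^ 3 ≤ (coreConst / ε) ^ 3 * (Q₁ * q / r) * (q / r) ^ 2 := by
    refine core_apply hL ha (Q₁ / Real.exp 1) 1 r (Q₁ * q / r) he1 le_rfl hr1 (by positivity)
      ?_ (r ^ 2) T hT (fun t => t.2.2.2.1 * t.1) (fun t => t.2.2.2.2.1 / r)
      (fun t => t.2.2.2.2.2 / r) ?_ ?_
    · rw [div_le_iff₀ hr0, mul_comm (q : ℝ)]; gcongr
    · rintro ⟨n₁, n₂, n₃, p, u, m⟩ ht ⟨n₁', n₂', n₃', p', u', m'⟩ ht' he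
      rw [Finset.mem_coe] at ht ht'
      obtain ⟨h1, h3⟩ := hb _ ht
      obtain ⟨h2, h4⟩ := hb _ ht'
      obtain ⟨_, _, _, hG⟩ := hT _ ht
      obtain ⟨_, _, _, hG'⟩ := hT _ ht'
      simp only at h1 h2 h3 h4
      simp only [Prod.mk.injEq] at he
      obtain ⟨⟨e1, e2⟩, e3, e4, e5⟩ := he
      have hsm : ∀ p : ℕ, p.Prime → (p : ℝ) ≤ Q₁ →
          PS {p | (p : ℝ) < (q : ℝ) ^ Real.sqrt ε} p := by
        intro p hp hpQ l hl hlp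
        rw [(Nat.prime_dvd_prime_iff_eq hl hp).1 hlp]
        exact lt_of_le_of_lt hpQ (hL.Q_lt_z hQu)
      rw [mul_comm p, mul_comm p'] at e1
      obtain ⟨e6, e7⟩ := rough_smooth_unique _ hG.n₁r hG'.n₁r (hsm p hG.pp hG.pu)
        (hsm p' hG'.pp hG'.pu) e1
      simp only at e6
      rw [e6, e3, e4, e7, div_eq_inj h1 h2 e2, div_eq_inj h3 h4 e5]
    · rintro ⟨n₁, n₂, n₃, p, u, m⟩ ht
      obtain ⟨h1, h2⟩ := hb _ ht
      obtain ⟨_, _, _, hG⟩ := hT _ ht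
      simp only at h1 h2 ⊢
      obtain ⟨v, rfl⟩ := h1
      obtain ⟨w, rfl⟩ := h2
      rw [Nat.mul_div_cancel_left _ hrp, Nat.mul_div_cancel_left _ hrp]
      have h3 := hG.n₁u_le hL
      have h5 := hG.n₁_pos
      have h6 := hG.u_pos
      have h7 := hG.pu
      simp only at h3 h5 h6 h7
      push_cast at h3
      refine ⟨PS.mul ?_ hG.n₁r.rough_block, ?_, ?_, Dvd.intro_left _ rfl, by push_cast; rfl, ?_⟩
      · intro l hl hlp
        rw [(Nat.prime_dvd_prime_iff_eq hl hG.pp).1 hlp]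
        refine Or.inl ⟨hG.pl, ?_⟩
        rw [mul_div_cancel₀ _ (Real.exp_pos 1).ne']
        exact hG.pu
      · exact Nat.mul_pos (Nat.mul_pos hG.pp.pos h5) (Nat.pos_of_mul_pos_left h6)
      · rw [le_div_iff₀ hr0]
        push_cast
        calc (p : ℝ) * n₁ * v * r = p * (n₁ * (r * v)) := by ring
          _ ≤ Q₁ * q := by gcongr
      · simp only [tupProd]; ring
  have key2 : (T.card : ℝ) ^ 3 ≤ (coreConst / ε * q * (1 / r)) ^ 3 * Q₁ := by
    refine key.trans (le_of_eq ?_); ring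
  refine (le_mul_rpow_third (by positivity) (by linarith) key2).trans (le_of_eq ?_)
  ring

/-- For a prime `r` and `i ∈ ℕ`, tuples with `r ∣ u`, `r ∣ m` and a further prime
`l ∣ m`, `l ∈ (e^i, e^(i+1)]`, which is moved over to `n₁`. -/
lemma count_r_i (hL : Large q ε) (ha : IsUnit a) (hQ : 3 ≤ Q₁) (hQu : Q₁ ≤ (q : ℝ) ^ (ε ^ 2))
    (r : ℕ) (hrp : r.Prime) (i : ℕ) (T : Finset Tup) (hT : ∀ t ∈ T, Good q ε Q₁ a t)
    (hb : ∀ t ∈ T, r ∣ t.2.2.2.2.1 ∧ r ∣ t.2.2.2.2.2 ∧ ∃ l : ℕ, l.Prime ∧ l ∣ t.2.2.2.2.2 ∧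
      l ≠ r ∧ Q₁ < l ∧ Q₁ * l < r ∧ Real.exp i < l ∧ (l : ℝ) ≤ Real.exp 1 * Real.exp i) :
    (T.card : ℝ) ≤ 2 * (coreConst / ε) * q * Q₁ ^ ((1 : ℝ) / 3) * (1 / r) *
      Real.exp (-(i / 3)) := by
  choose! h1 h2 l hl hlm hlr hQl hQlr hil hli using hb
  have hr0 : (0 : ℝ) < r := by exact_mod_cast hrp.pos
  have hr1 : (1 : ℝ) ≤ r := by exact_mod_cast hrp.one_lt.le
  have hq := hL.q_pos
  have hε := hL.pos
  have hC := one_le_coreConst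
  have hi1 : 1 ≤ Real.exp i := Real.one_le_exp (by positivity)
  have he1 : 1 ≤ Q₁ / Real.exp 1 := by
    rw [le_div_iff₀ (Real.exp_pos 1)]
    linarith [Real.exp_one_lt_d9]
  have hrl : ∀ t ∈ T, r * l t ∣ t.2.2.2.2.2 := fun t ht =>
    Nat.Coprime.mul_dvd_of_dvd_of_dvd ((Nat.coprime_primes hrp (hl t ht)).2 (hlr t ht).symm)
      (h2 t ht) (hlm t ht)
  have hlz : ∀ t ∈ T, (l t : ℝ) < (q : ℝ) ^ Real.sqrt ε := by
    intro t ht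
    obtain ⟨_, _, _, hG⟩ := hT _ ht
    have : (l t : ℝ) ≤ t.2.2.2.2.2 := by exact_mod_cast Nat.le_of_dvd hG.m_pos (hlm t ht)
    exact this.trans_lt (hG.m_lt_z hL)
  have key : (T.card : ℝ) ^ 3 ≤ (coreConst / ε) ^ 3 * (min (q : ℝ) (Q₁ * (Real.exp 1 * Real.exp i) * q / r))
      * (q / (r * Real.exp i)) ^ 2 := by
    refine core_apply hL ha (Q₁ / Real.exp 1) (Real.exp i) (r * Real.exp i)
      (min (q : ℝ) (Q₁ * (Real.exp 1 * Real.exp i) * q / r)) he1 hi1 ?_ (by positivity)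
      (min_le_left _ _) (r ^ 2) T hT (fun t => t.2.2.2.1 * l t * t.1) (fun t => t.2.2.2.2.1 / r)
      (fun t => t.2.2.2.2.2 / (r * l t)) ?_ ?_
    · nlinarith
    · intro t ht t' ht' he
      rw [Finset.mem_coe] at ht ht'
      obtain ⟨_, _, _, hG⟩ := hT _ ht
      obtain ⟨_, _, _, hG'⟩ := hT _ ht'
      simp only [Prod.mk.injEq] at he
      obtain ⟨⟨e1, e2⟩, e3, e4, e5⟩ := he
      have hsm : ∀ p : ℕ, p.Prime → (p : ℝ) < (q : ℝ) ^ Real.sqrt ε →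
          PS {p | (p : ℝ) < (q : ℝ) ^ Real.sqrt ε} p := by
        intro p hp hpQ l hl hlp
        rw [(Nat.prime_dvd_prime_iff_eq hl hp).1 hlp]
        exact hpQ
      have hQz := hL.Q_lt_z hQu
      rw [mul_comm _ t.1, mul_comm _ t'.1] at e1
      obtain ⟨e6, e7⟩ := rough_smooth_unique _ hG.n₁r hG'.n₁r
        ((hsm _ hG.pp (hG.pu.trans_lt hQz)).mul (hsm _ (hl t ht) (hlz t ht)))
        ((hsm _ hG'.pp (hG'.pu.trans_lt hQz)).mul (hsm _ (hl t' ht') (hlz t' ht'))) e1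
      have e8 : t.2.2.2.1 = t'.2.2.2.1 := by
        have hd : t.2.2.2.1 ∣ t'.2.2.2.1 * l t' := e7 ▸ Dvd.intro _ rfl
        -- `p` and `l` can be told apart in the product `p l` because `p ≤ Q₁ < l`.
        rcases (Nat.Prime.dvd_mul hG.pp).1 hd with h | h
        · exact (Nat.prime_dvd_prime_iff_eq hG.pp hG'.pp).1 h
        · have h' := (Nat.prime_dvd_prime_iff_eq hG.pp (hl t' ht')).1 h
          have h3 := hG.pu
          have h4 := hQl t' ht'
          rw [← h'] at h4
          linarith
      have e9 : l t = l t' := by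
        rw [← e8] at e7
        exact Nat.eq_of_mul_eq_mul_left hG.pp.pos e7
      rw [← e9] at e5
      have e10 := div_eq_inj (hrl t ht) (e9 ▸ hrl t' ht') e5
      exact Prod.ext e6 (Prod.ext e3 (Prod.ext e4 (Prod.ext e8 (Prod.ext
        (div_eq_inj (h1 t ht) (h1 t' ht') e2) e10))))
    · intro t ht
      obtain ⟨_, _, _, hG⟩ := hT _ ht
      have hn := hG.n₁u_le hL
      have hn1 := hG.n₁_pos
      have hpu := hG.pu
      have hu := hG.u_pos
      have hl0 := (hl t ht).pos
      have hl0' : (0 : ℝ) < l t := by exact_mod_cast hl0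
      have hudiv : 0 < t.2.2.2.2.1 / r := Nat.div_pos (Nat.le_of_dvd hu (h1 t ht)) hrp.pos
      have hval : ((t.2.2.2.1 * l t * t.1 * (t.2.2.2.2.1 / r) : ℕ) : ℝ) ≤ Q₁ * l t * q / r := by
        push_cast only [Nat.cast_mul]
        rw [cast_div_eq hrp.pos (h1 t ht), le_div_iff₀ hr0]
        calc (t.2.2.2.1 : ℝ) * l t * t.1 * (t.2.2.2.2.1 / r) * r =
              t.2.2.2.1 * l t * (t.1 * t.2.2.2.2.1) := by field_simp
          _ ≤ Q₁ * l t * q := by gcongr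
      refine ⟨PS.mul (PS.mul ?_ ?_) hG.n₁r.rough_block, ?_, hval.trans (le_min ?_ ?_),
        Nat.div_dvd_of_dvd (hrl t ht), ?_, ?_⟩
      · intro p hp hpd
        rw [(Nat.prime_dvd_prime_iff_eq hp hG.pp).1 hpd]
        refine Or.inl ⟨hG.pl, ?_⟩
        rw [mul_div_cancel₀ _ (Real.exp_pos 1).ne']
        exact hG.pu
      · intro p hp hpd
        rw [(Nat.prime_dvd_prime_iff_eq hp (hl t ht)).1 hpd]
        exact Or.inr (Or.inl ⟨hil t ht, hli t ht⟩)
      · exact Nat.mul_pos (Nat.mul_pos (Nat.mul_pos hG.pp.pos hl0) hn1) hudiv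
      · rw [div_le_iff₀ hr0, mul_comm (q : ℝ)]
        have := (hQlr t ht).le
        gcongr
      · have := hli t ht
        gcongr
      · rw [cast_div_eq (Nat.mul_pos hrp.pos hl0) (hrl t ht)]
        push_cast
        rw [mul_div_assoc', div_le_iff₀ (by positivity), mul_comm]
        have := (hil t ht).le
        gcongr
      · have e1 := Nat.div_mul_cancel (h1 t ht)
        have e2 := Nat.div_mul_cancel (hrl t ht)
        simp only [tupProd]
        conv_rhs => rw [← e1, ← e2]
        ring
  have key2 : (T.card : ℝ) ^ 3 ≤
      (coreConst / ε * q * (1 / r) * Real.exp (-(i / 3))) ^ 3 * (Real.exp 1 * Q₁) := by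
    have e1 : Real.exp (-((i : ℝ) / 3)) ^ 3 = 1 / Real.exp i := by
      rw [← Real.exp_nat_mul, one_div, ← Real.exp_neg]; congr 1; push_cast; ring
    refine key.trans ?_
    rw [mul_pow _ (Real.exp (-((i : ℝ) / 3))), e1]
    calc _ ≤ (coreConst / ε) ^ 3 * (Q₁ * (Real.exp 1 * Real.exp i) * q / r)
        * (q / (r * Real.exp i)) ^ 2 := by
          gcongr
          exact min_le_right _ _
      _ = _ := by field_simp
  have h8 : (Real.exp 1 * Q₁) ^ ((1 : ℝ) / 3) ≤ 2 * Q₁ ^ ((1 : ℝ) / 3) := by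
    rw [Real.mul_rpow (Real.exp_pos 1).le (by linarith)]
    gcongr
    calc Real.exp 1 ^ ((1 : ℝ) / 3) ≤ (8 : ℝ) ^ ((1 : ℝ) / 3) := by
          have := Real.exp_one_lt_d9
          gcongr
          linarith
      _ = 2 := by
        rw [show (8 : ℝ) = 2 ^ (3 : ℝ) by norm_num, ← Real.rpow_mul (by norm_num)]; norm_num
  refine (le_mul_rpow_third (by positivity) (by positivity) key2).trans ?_
  calc _ ≤ coreConst / ε * q * (1 / r) * Real.exp (-(i / 3)) * (2 * Q₁ ^ ((1 : ℝ) / 3)) := by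
        gcongr
    _ = _ := by ring

end cases

/-! ### Summation over common prime factors of `u` and `m` -/

lemma sum_inv_le_log (N : ℕ) (Y : ℝ) (h : Real.log N ≤ Y) :
    ∑ r ∈ Finset.Icc 1 N, (1 : ℝ) / r ≤ 1 + Y := by
  have h1 := harmonic_le_one_add_log N
  rw [harmonic_eq_sum_Icc] at h1
  push_cast at h1
  simp only [one_div]
  linarith

/-- Union bound: every element of `T` has a label in `S`, and the elements with a given label
are at most `b`. -/
lemma card_le_sum_of_label {α ι : Type*} (T : Finset α) (S : Finset ι) (R : α → ι → Prop)
    (b : ι → ℝ) (h : ∀ t ∈ T, ∃ i ∈ S, R t i)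
    (hb : ∀ i ∈ S, ∀ T' ⊆ T, (∀ t ∈ T', R t i) → (T'.card : ℝ) ≤ b i) :
    (T.card : ℝ) ≤ ∑ i ∈ S, b i := by
  have h1 : T ⊆ S.biUnion (fun i => T.filter (fun t => R t i)) := by
    intro t ht
    obtain ⟨i, hi, hR⟩ := h t ht
    exact Finset.mem_biUnion.2 ⟨i, hi, Finset.mem_filter.2 ⟨ht, hR⟩⟩
  calc (T.card : ℝ) ≤ ((∑ i ∈ S, (T.filter (fun t => R t i)).card : ℕ) : ℝ) := by
        exact_mod_cast (Finset.card_le_card h1).trans Finset.card_biUnion_le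
    _ ≤ _ := by
        push_cast only [Nat.cast_sum]
        exact Finset.sum_le_sum fun i hi => hb i hi _ (Finset.filter_subset _ _)
          fun t ht => (Finset.mem_filter.1 ht).2

/-- `log Q_j`. -/
def logQj (L : ℝ) (j : ℕ) : ℝ := 100 * (j : ℝ) ^ (4 * j + 2) * L ^ j

lemma le_logQj {L : ℝ} (hL : 1 ≤ L) {j : ℕ} (hj : 1 ≤ j) :
    (j : ℝ) ≤ logQj L j ∧ 100 * L ≤ logQj L j := by
  have hj1 : (1 : ℝ) ≤ j := by exact_mod_cast hj
  have h1 : (j : ℝ) ≤ (j : ℝ) ^ (4 * j + 2) := le_self_pow₀ hj1 (by omega)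
  have h2 : L ≤ L ^ j := le_self_pow₀ hL (by omega)
  unfold logQj
  constructor
  · have : (j : ℝ) * 1 ≤ (j : ℝ) ^ (4 * j + 2) * L ^ j := by
      apply mul_le_mul h1 (by linarith) (by norm_num) (by positivity)
    nlinarith
  · have : 1 * L ≤ (j : ℝ) ^ (4 * j + 2) * L ^ j := by
      apply mul_le_mul (by linarith) h2 (by linarith) (by positivity)
    nlinarith

/-- `9 log ((log Q_{j+1})²) + 1 ≤ log P_j`: consecutive rungs of the ladder are close enough. -/
lemma ladder_numeric {L : ℝ} (hL : 100 ≤ L) {j : ℕ} (hj : 2 ≤ j) :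
    18 * Real.log (logQj L (j + 1)) + 1 ≤ (j : ℝ) ^ (4 * j) * L ^ j := by
  have hj1 : (2 : ℝ) ≤ j := by exact_mod_cast hj
  have h1 : Real.log (logQj L (j + 1)) =
      Real.log 100 + ((4 * (j + 1) + 2 : ℕ) : ℝ) * Real.log (j + 1) +
        ((j + 1 : ℕ) : ℝ) * Real.log L := by
    unfold logQj
    rw [Real.log_mul (by positivity) (by positivity), Real.log_mul (by positivity) (by positivity),
      Real.log_pow, Real.log_pow]
    push_cast
    ring
  have h2 : Real.log 100 ≤ 100 - 1 := Real.log_le_sub_one_of_pos (by norm_num)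
  have h3 : Real.log ((j : ℝ) + 1) ≤ j := by
    have := Real.log_le_sub_one_of_pos (show (0 : ℝ) < j + 1 by positivity)
    linarith
  have h4 : Real.log L ≤ L := by
    have := Real.log_le_sub_one_of_pos (show (0 : ℝ) < L by linarith)
    linarith
  have h5 : (j : ℝ) ^ 2 ≤ (j : ℝ) ^ (4 * j) := pow_le_pow_right₀ (by linarith) (by omega)
  have h6 : L ^ 2 ≤ L ^ j := pow_le_pow_right₀ (by linarith) hj
  have h7 : (j : ℝ) ^ 2 * L ^ 2 ≤ (j : ℝ) ^ (4 * j) * L ^ j := by gcongr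
  refine le_trans ?_ h7
  rw [h1]
  push_cast
  have h8 : (4 * ((j : ℝ) + 1) + 2) * Real.log (j + 1) ≤ (4 * ((j : ℝ) + 1) + 2) * j := by gcongr
  have h9 : ((j : ℝ) + 1) * Real.log L ≤ ((j : ℝ) + 1) * L := by gcongr
  have h10 : (j : ℝ) * 2 ≤ j ^ 2 := by nlinarith
  have h11 : (j : ℝ) ^ 2 * L * 100 ≤ j ^ 2 * L ^ 2 := by
    have : (j : ℝ) ^ 2 * L * 100 ≤ j ^ 2 * L * L := by gcongr
    nlinarith
  have h12 : (j : ℝ) * L * 2 ≤ j ^ 2 * L := by nlinarith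
  have h13 : (j : ℝ) ^ 2 * 100 ≤ j ^ 2 * L := by gcongr
  nlinarith

/-- If `m` lies in the ladder set and `1 ≤ r ≤ q` is an integer with `log r` much larger than
`(log Q₁)⁴`, then `m` has a prime factor `l` well below `r` but not smaller than a power of
`log r`; the index `i` locates `l` on the `e`-adic scale. -/
lemma ladder_claim {q : ℕ} {Q₁ : ℝ} (hQ0 : 0 < Q₁) (hL : 100 ≤ Real.log Q₁) {m r : ℕ}
    (hm : m ∈ ladderSet q Q₁) (hr : 1 ≤ r) (hrq : (r : ℝ) ≤ q)
    (hbig : 10 ^ 11 * Real.log Q₁ ^ 4 < Real.log r) :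
    ∃ i l : ℕ, l.Prime ∧ l ∣ m ∧ l ≠ r ∧ Q₁ < l ∧ Q₁ * l < r ∧ Real.exp i < l ∧
      (l : ℝ) ≤ Real.exp 1 * Real.exp i ∧ Real.log r ≤ Real.exp (i / 9) := by
  set L := Real.log Q₁ with hLdef
  have hr0 : (0 : ℝ) < r := by exact_mod_cast hr
  have hlogrq : Real.log r ≤ Real.log q := Real.log_le_log hr0 hrq
  have hQexp : Q₁ = Real.exp L := (Real.exp_log hQ0).symm
  have hrexp : (r : ℝ) = Real.exp (Real.log r) := (Real.exp_log hr0).symm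
  have hL4 : (1 : ℝ) ≤ L ^ 4 := one_le_pow₀ (by linarith)
  have hlq0 : 0 < Real.log q := by linarith
  have hQj : ∀ j, Qj Q₁ j = Real.exp (logQj L j) := fun j => rfl
  set S := {j : ℕ | 2 ≤ j ∧ Qj Q₁ j ≤ Real.exp (Real.sqrt (Real.log q))} with hS
  have hSmem : ∀ j, j ∈ S ↔ 2 ≤ j ∧ logQj L j ≤ Real.sqrt (Real.log q) := by
    intro j
    rw [hS, Set.mem_ofPred_eq, hQj, Real.exp_le_exp]
  have hJ : Jmax q Q₁ = sSup S := rfl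
  have hbdd : BddAbove S := by
    refine ⟨⌈Real.sqrt (Real.log q)⌉₊, fun j hj => ?_⟩
    obtain ⟨h1, h2⟩ := (hSmem j).1 hj
    have h3 : (j : ℝ) ≤ ⌈Real.sqrt (Real.log q)⌉₊ :=
      ((le_logQj (by linarith) (by omega)).1.trans h2).trans (Nat.le_ceil _)
    exact_mod_cast h3
  have hlog2 : logQj L 2 = 102400 * L ^ 2 := by unfold logQj; norm_num
  have h2S : 2 ∈ S := by
    rw [hSmem]
    refine ⟨le_rfl, ?_⟩
    apply Real.le_sqrt_of_sq_le
    rw [hlog2]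
    nlinarith
  have hJ2 : 2 ≤ Jmax q Q₁ := hJ ▸ le_csSup hbdd h2S
  have hJS : Jmax q Q₁ + 1 ∉ S := by
    intro hmem
    have := le_csSup hbdd hmem
    rw [← hJ] at this
    omega
  -- `j` is the largest index with `Q₁ Q_j < r`.
  set P : ℕ → Prop := fun j => L + logQj L j < Real.log r with hP
  have hP2 : P 2 := by
    simp only [hP, hlog2]
    nlinarith [sq_nonneg (L ^ 2), sq_nonneg (L - 1), sq_nonneg (L ^ 2 - 1)]
  set j := Nat.findGreatest P (Jmax q Q₁) with hj
  have hj2 : 2 ≤ j := Nat.le_findGreatest hJ2 hP2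
  have hjJ : j ≤ Jmax q Q₁ := Nat.findGreatest_le _
  have hPj : P j := Nat.findGreatest_spec hJ2 hP2
  obtain ⟨l, hl, hlm, hPl, hlQ⟩ := hm j hj2 hjJ
  have hl0 : (0 : ℝ) < l := by exact_mod_cast hl.pos
  have hX := le_logQj (L := L) (by linarith) (show 1 ≤ j + 1 by omega)
  have hX1 : 1 ≤ logQj L (j + 1) := by linarith [hX.2]
  -- By maximality of `j`, either `r ≤ Q₁ Q_{j+1}`, or `j = J` and `(log q)^(1/2) < log Q_{J+1}`.
  have hlogr : Real.log r ≤ logQj L (j + 1) ^ 2 := by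
    rcases hjJ.eq_or_lt with h | h
    · rw [h]
      have h1 : ¬ logQj L (Jmax q Q₁ + 1) ≤ Real.sqrt (Real.log q) := fun h2 =>
        hJS ((hSmem _).2 ⟨by omega, h2⟩)
      have h2 := Real.sq_sqrt hlq0.le
      have h3 := Real.sqrt_nonneg (Real.log q)
      push Not at h1
      nlinarith
    · have h1 : ¬ P (j + 1) := Nat.findGreatest_is_greatest (Nat.lt_succ_self j) h
      simp only [hP, not_lt] at h1
      nlinarith [hX.2]
  have hnum := ladder_numeric hL hj2
  have hlogl : (j : ℝ) ^ (4 * j) * L ^ j < Real.log l := by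
    rw [Real.lt_log_iff_exp_lt hl0]; exact hPl
  have hLlogl : L < Real.log l := by
    refine lt_of_le_of_lt ?_ hlogl
    have h1 : (1 : ℝ) ≤ (j : ℝ) ^ (4 * j) := one_le_pow₀ (by exact_mod_cast (by omega : 1 ≤ j))
    have h2 : L ≤ L ^ j := le_self_pow₀ (by linarith) (by omega)
    nlinarith
  have hQl : Q₁ * l < r := by
    calc Q₁ * l ≤ Real.exp L * Real.exp (logQj L j) := by rw [← hQexp, ← hQj]; gcongr
      _ < r := by rw [← Real.exp_add, hrexp]; exact Real.exp_lt_exp.2 hPj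
  have hQ1 : 1 ≤ Q₁ := by rw [hQexp]; exact Real.one_le_exp (by linarith)
  have hQltl : Q₁ < l := by rw [hQexp]; exact (Real.lt_log_iff_exp_lt hl0).1 hLlogl
  have hceil : 0 < ⌈Real.log l⌉₊ := Nat.ceil_pos.2 (by linarith)
  obtain ⟨i, hi⟩ : ∃ i, ⌈Real.log l⌉₊ = i + 1 := ⟨_, (Nat.sub_add_cancel hceil).symm⟩
  have hi1 : (i : ℝ) < Real.log l := Nat.lt_ceil.1 (by omega)
  have hi2 : Real.log l ≤ i + 1 := by
    have := Nat.le_ceil (Real.log l)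
    rw [hi] at this
    exact_mod_cast this
  refine ⟨i, l, hl, hlm, ?_, hQltl, hQl, ?_, ?_, ?_⟩
  · rintro rfl
    nlinarith
  · exact (Real.lt_log_iff_exp_lt hl0).1 hi1
  · rw [← Real.exp_add, add_comm]
    exact (Real.log_le_iff_le_exp hl0).1 hi2
  · refine hlogr.trans ?_
    rw [← Real.exp_log (show 0 < logQj L (j + 1) ^ 2 by positivity), Real.log_pow]
    apply Real.exp_le_exp.2
    push_cast
    linarith

section

variable {q : ℕ} {ε Q₁ : ℝ} {a : ZMod q}

/-- Tuples for which `u` and `m` share a prime factor `r` with `log r ≤ Y`. -/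
lemma count_um_small (hL : Large q ε) (ha : IsUnit a) (hQ : 3 ≤ Q₁)
    (hQu : Q₁ ≤ (q : ℝ) ^ (ε ^ 2)) (Y : ℝ) (hY : 0 ≤ Y) (T : Finset Tup)
    (hT : ∀ t ∈ T, Good q ε Q₁ a t)
    (hb : ∀ t ∈ T, ∃ r : ℕ, r.Prime ∧ r ∣ t.2.2.2.2.1 ∧ r ∣ t.2.2.2.2.2 ∧ Real.log r ≤ Y) :
    (T.card : ℝ) ≤ coreConst / ε * q * Q₁ ^ ((1 : ℝ) / 3) * (1 + Y) := by
  have hq := hL.q_pos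
  have hε := hL.pos
  have hC := one_le_coreConst
  refine (card_le_sum_of_label T (Finset.Icc 1 ⌊Real.exp Y⌋₊)
    (fun t r => r.Prime ∧ r ∣ t.2.2.2.2.1 ∧ r ∣ t.2.2.2.2.2)
    (fun r => coreConst / ε * q * Q₁ ^ ((1 : ℝ) / 3) * (1 / r)) ?_ ?_).trans ?_
  · intro t ht
    obtain ⟨r, hr, h1, h2, h3⟩ := hb t ht
    refine ⟨r, Finset.mem_Icc.2 ⟨hr.pos, Nat.le_floor ?_⟩, hr, h1, h2⟩
    exact (Real.log_le_iff_le_exp (by exact_mod_cast hr.pos)).1 h3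
  · intro r _ T' hT' hR
    rcases T'.eq_empty_or_nonempty with rfl | ⟨t, ht⟩
    · rw [Finset.card_empty, Nat.cast_zero]
      positivity
    · obtain ⟨_, _, _, hG⟩ := hT t (hT' ht)
      exact count_r hL ha hQ hQu r (hG.mr r (hR t ht).1 (hR t ht).2.2) _
        (fun t ht => hT t (hT' ht)) (fun t ht => (hR t ht).2)
  · rw [← Finset.mul_sum]
    gcongr
    apply sum_inv_le_log
    have h := Nat.floor_pos.2 (Real.one_le_exp hY)
    rw [Real.log_le_iff_le_exp (by exact_mod_cast h)]
    exact Nat.floor_le (Real.exp_pos Y).le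

/-- Tuples for which `u` and `m` share a prime factor `r`, while `m` has another prime factor
`l ∈ (e^i, e^(i+1)]` with `log r ≤ e^(i/9)`. -/
lemma count_um_i (hL : Large q ε) (ha : IsUnit a) (hQ : 3 ≤ Q₁)
    (hQu : Q₁ ≤ (q : ℝ) ^ (ε ^ 2)) (i : ℕ) (T : Finset Tup)
    (hT : ∀ t ∈ T, Good q ε Q₁ a t)
    (hb : ∀ t ∈ T, ∃ r : ℕ, r.Prime ∧ Real.log r ≤ Real.exp (i / 9) ∧ r ∣ t.2.2.2.2.1 ∧
      r ∣ t.2.2.2.2.2 ∧ ∃ l : ℕ, l.Prime ∧ l ∣ t.2.2.2.2.2 ∧ l ≠ r ∧ Q₁ < l ∧ Q₁ * l < r ∧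
        Real.exp i < l ∧ (l : ℝ) ≤ Real.exp 1 * Real.exp i) :
    (T.card : ℝ) ≤ 4 * (coreConst / ε * q * Q₁ ^ ((1 : ℝ) / 3)) * (9 / 11) ^ i := by
  have hq := hL.q_pos
  have hε := hL.pos
  have hC := one_le_coreConst
  have hX : 1 ≤ Real.exp (i / 9) := Real.one_le_exp (by positivity)
  refine (card_le_sum_of_label T (Finset.Icc 1 ⌊Real.exp (Real.exp (i / 9))⌋₊)
    (fun t r => r.Prime ∧ r ∣ t.2.2.2.2.1 ∧
      r ∣ t.2.2.2.2.2 ∧ ∃ l : ℕ, l.Prime ∧ l ∣ t.2.2.2.2.2 ∧ l ≠ r ∧ Q₁ < l ∧ Q₁ * l < r ∧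
        Real.exp i < l ∧ (l : ℝ) ≤ Real.exp 1 * Real.exp i)
    (fun r => (2 * (coreConst / ε) * q * Q₁ ^ ((1 : ℝ) / 3) * Real.exp (-(i / 3))) * (1 / r))
    ?_ ?_).trans ?_
  · intro t ht
    obtain ⟨r, hr, h1, h2⟩ := hb t ht
    refine ⟨r, Finset.mem_Icc.2 ⟨hr.pos, Nat.le_floor ?_⟩, hr, h2⟩
    exact (Real.log_le_iff_le_exp (by exact_mod_cast hr.pos)).1 h1
  · intro r _ T' hT' hR
    rcases T'.eq_empty_or_nonempty with rfl | ⟨t, ht⟩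
    · rw [Finset.card_empty, Nat.cast_zero]
      positivity
    · refine (count_r_i hL ha hQ hQu r (hR t ht).1 i _ (fun t ht => hT t (hT' ht))
        (fun t ht => (hR t ht).2)).trans (le_of_eq ?_)
      ring
  · rw [← Finset.mul_sum]
    have h1 : ∑ r ∈ Finset.Icc 1 ⌊Real.exp (Real.exp (i / 9))⌋₊, (1 : ℝ) / r ≤
        1 + Real.exp (i / 9) := by
      apply sum_inv_le_log
      have h2 : 1 ≤ Real.exp (Real.exp (i / 9)) := Real.one_le_exp (by positivity)
      rw [Real.log_le_iff_le_exp (by exact_mod_cast Nat.floor_pos.2 h2)]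
      exact Nat.floor_le (by positivity)
    have h3 : Real.exp (-((i : ℝ) / 3)) * Real.exp (i / 9) ≤ (9 / 11) ^ i := by
      have h4 : Real.exp (-(2 / 9)) ≤ 9 / 11 := by
        rw [Real.exp_neg, inv_le_comm₀ (Real.exp_pos _) (by norm_num)]
        have := Real.add_one_le_exp (2 / 9 : ℝ)
        linarith
      calc Real.exp (-((i : ℝ) / 3)) * Real.exp (i / 9) = Real.exp (-(2 / 9)) ^ i := by
            rw [← Real.exp_add, ← Real.exp_nat_mul]; congr 1; ring
        _ ≤ _ := by gcongr
    calc _ ≤ (2 * (coreConst / ε) * q * Q₁ ^ ((1 : ℝ) / 3) * Real.exp (-(i / 3))) *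
          (2 * Real.exp (i / 9)) := by gcongr; linarith
      _ = 4 * (coreConst / ε * q * Q₁ ^ ((1 : ℝ) / 3)) *
          (Real.exp (-(i / 3)) * Real.exp (i / 9)) := by ring
      _ ≤ _ := by gcongr

/-- Tuples for which `u` and `m` are not coprime. -/
lemma count_um (hL : Large q ε) (ha : IsUnit a) (hQ : 100 ≤ Real.log Q₁) (hQ3 : 3 ≤ Q₁)
    (hQu : Q₁ ≤ (q : ℝ) ^ (ε ^ 2)) (T : Finset Tup) (hT : ∀ t ∈ T, Good q ε Q₁ a t)
    (hb : ∀ t ∈ T, ∃ r : ℕ, r.Prime ∧ r ∣ t.2.2.2.2.1 ∧ r ∣ t.2.2.2.2.2) :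
    (T.card : ℝ) ≤ coreConst / ε * q * Q₁ ^ ((1 : ℝ) / 3) *
      (10 ^ 12 * Real.log Q₁ ^ 4) := by
  have hq := hL.q_pos
  have hε := hL.pos
  have hC := one_le_coreConst
  set Y := 10 ^ 11 * Real.log Q₁ ^ 4 with hY
  have hL4 : (1 : ℝ) ≤ Real.log Q₁ ^ 4 := one_le_pow₀ (by linarith)
  set X := coreConst / ε * q * Q₁ ^ ((1 : ℝ) / 3) with hX
  have hX0 : 0 ≤ X := by positivity
  -- A common prime is either at most `e^Y`, or large enough for `ladder_claim` to apply.
  set R : Tup → Prop := fun t => ∃ r : ℕ, r.Prime ∧ r ∣ t.2.2.2.2.1 ∧ r ∣ t.2.2.2.2.2 ∧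
    Real.log r ≤ Y with hR
  have h1 := count_um_small hL ha hQ3 hQu Y (by positivity) (T.filter R)
    (fun t ht => hT t (Finset.mem_filter.1 ht).1) (fun t ht => (Finset.mem_filter.1 ht).2)
  have h2 : ((T.filter (fun t => ¬ R t)).card : ℝ) ≤
      ∑ i ∈ Finset.range q, 4 * X * (9 / 11) ^ i := by
    refine card_le_sum_of_label (T.filter (fun t => ¬ R t)) (Finset.range q)
      (fun t i => ∃ r : ℕ, r.Prime ∧ Real.log r ≤ Real.exp (i / 9) ∧ r ∣ t.2.2.2.2.1 ∧
      r ∣ t.2.2.2.2.2 ∧ ∃ l : ℕ, l.Prime ∧ l ∣ t.2.2.2.2.2 ∧ l ≠ r ∧ Q₁ < l ∧ Q₁ * l < r ∧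
        Real.exp i < l ∧ (l : ℝ) ≤ Real.exp 1 * Real.exp i) _ ?_ ?_
    · intro t ht
      rw [Finset.mem_filter] at ht
      obtain ⟨r, hr, hru, hrm⟩ := hb t ht.1
      obtain ⟨_, _, _, hG⟩ := hT t ht.1
      have hlog : Y < Real.log r := by
        by_contra hn
        exact ht.2 ⟨r, hr, hru, hrm, not_lt.1 hn⟩
      have hrq : (r : ℝ) ≤ q := by
        have h3 : (r : ℝ) ≤ t.2.2.2.2.2 := by exact_mod_cast Nat.le_of_dvd hG.m_pos hrm
        exact h3.trans ((hG.m_lt_z hL).le.trans hL.z_le_q)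
      obtain ⟨i, l, hl, hlm, hlr, h4, h5, h6, h7, h8⟩ :=
        ladder_claim (by linarith) hQ hG.mS hr.pos hrq hlog
      refine ⟨i, Finset.mem_range.2 ?_, r, hr, h8, hru, hrm, l, hl, hlm, hlr, h4, h5, h6, h7⟩
      have h9 := Real.add_one_le_exp (i : ℝ)
      have h10 : (l : ℝ) ≤ Q₁ * l := by
        have : (0 : ℝ) ≤ l := by positivity
        nlinarith
      have : (i : ℝ) < q := by linarith
      exact_mod_cast this
    · intro i _ T' hT' hR'
      exact count_um_i hL ha hQ3 hQu i T'
        (fun t ht => hT t (Finset.mem_filter.1 (hT' ht)).1) hR'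
  have h3 : ∑ i ∈ Finset.range q, 4 * X * (9 / 11 : ℝ) ^ i ≤ 22 * X := by
    rw [← Finset.mul_sum]
    have : ∑ i ∈ Finset.range q, (9 / 11 : ℝ) ^ i ≤ 11 / 2 := by
      refine (Summable.sum_le_tsum _ (fun _ _ => by positivity)
        (summable_geometric_of_lt_one (by norm_num) (by norm_num))).trans (le_of_eq ?_)
      rw [tsum_geometric_of_lt_one (by norm_num) (by norm_num)]
      norm_num
    nlinarith
  have h4 : (T.card : ℝ) = (T.filter R).card + (T.filter (fun t => ¬ R t)).card := by
    exact_mod_cast (Finset.card_filter_add_card_filter_not R).symm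
  rw [h4]
  nlinarith

end

/-! ### Squares of large primes -/

/-- An integer `n < z^(k+1)` has at most `2^k` divisors all of whose prime factors are `≥ z`. -/
lemma card_rough_divisors {z : ℝ} (hz : 1 < z) {n k : ℕ} (hn : n ≠ 0)
    (h : (n : ℝ) < z ^ (k + 1)) :
    (n.divisors.filter (PS {p | z ≤ p})).card ≤ 2 ^ k := by
  set l := n.primeFactorsList.filter (fun p : ℕ => z ≤ p) with hl
  have hlen : l.length ≤ k := by
    by_contra hk
    have h1 : z ^ l.length ≤ ((l.prod : ℕ) : ℝ) := by
      have : ∀ l' : List ℕ, (∀ p ∈ l', z ≤ (p : ℝ)) → z ^ l'.length ≤ ((l'.prod : ℕ) : ℝ) := by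
        intro l'
        induction l' with
        | nil => simp
        | cons x l' ih =>
          intro h
          rw [List.length_cons, List.prod_cons, pow_succ', Nat.cast_mul]
          have h2 := ih (fun p hp => h p (List.mem_cons_of_mem _ hp))
          have h3 := h x List.mem_cons_self
          gcongr
      apply this
      intro p hp
      simpa using (List.mem_filter.1 hp).2
    have h2 : l.prod ≤ n := by
      apply Nat.le_of_dvd (Nat.pos_of_ne_zero hn)
      conv_rhs => rw [← Nat.prod_primeFactorsList hn]
      exact List.filter_sublist.prod_dvd_prod
    have h3 : z ^ (k + 1) ≤ z ^ l.length := pow_le_pow_right₀ hz.le (by omega)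
    have h4 : ((l.prod : ℕ) : ℝ) ≤ n := by exact_mod_cast h2
    linarith
  have h1 : (n.divisors.filter (PS {p | z ≤ p})).card ≤ l.sublists.toFinset.card := by
    refine Finset.card_le_card_of_injOn Nat.primeFactorsList ?_ ?_
    · intro d hd
      rw [Finset.mem_coe, Finset.mem_filter, Nat.mem_divisors] at hd
      rw [Finset.mem_coe, List.mem_toFinset, List.mem_sublists]
      have h2 := Nat.primeFactorsList_sublist_of_dvd hd.1.1 hn
      have h3 := h2.filter (fun p : ℕ => decide (z ≤ p))
      rwa [List.filter_eq_self.2] at h3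
      intro p hp
      exact decide_eq_true (hd.2 p (Nat.prime_of_mem_primeFactorsList hp)
        (Nat.dvd_of_mem_primeFactorsList hp))
    · intro d hd d' hd' he
      rw [Finset.mem_coe, Finset.mem_filter, Nat.mem_divisors] at hd hd'
      have h2 := ne_zero_of_dvd_ne_zero hn hd.1.1
      have h3 := ne_zero_of_dvd_ne_zero hn hd'.1.1
      rw [← Nat.prod_primeFactorsList h2, ← Nat.prod_primeFactorsList h3, he]
  calc _ ≤ l.sublists.toFinset.card := h1
    _ ≤ l.sublists.length := List.toFinset_card_le _
    _ = 2 ^ l.length := List.length_sublists _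
    _ ≤ 2 ^ k := Nat.pow_le_pow_right (by norm_num) hlen

/-- Integers `n ≤ N` in a reduced class modulo `q` that are divisible by `r²`. -/
lemma card_class_sq_le {q : ℕ} {a : ZMod q} (ha : IsUnit a) {r : ℕ}
    (N : ℕ) (S : Finset ℕ) (hS : ∀ n ∈ S, n ≤ N ∧ ((n : ℕ) : ZMod q) = a ∧ r ^ 2 ∣ n) :
    S.card ≤ N / (q * r ^ 2) + 1 := by
  rw [← Finset.card_range (N / (q * r ^ 2) + 1)]
  refine Finset.card_le_card_of_injOn (fun n => n / (q * r ^ 2)) ?_ ?_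
  · intro n hn
    rw [Finset.mem_coe, Finset.mem_range, Nat.lt_succ_iff]
    exact Nat.div_le_div_right (hS n hn).1
  · intro n hn n' hn' he
    obtain ⟨-, h1, h2⟩ := hS n hn
    obtain ⟨-, h1', h2'⟩ := hS n' hn'
    have hcop : Nat.Coprime n q := by
      rw [← ZMod.isUnit_iff_coprime, h1]; exact ha
    have hcop2 : Nat.Coprime q (r ^ 2) := (hcop.coprime_dvd_left h2).symm
    have h3 : n ≡ n' [MOD q * r ^ 2] := by
      rw [← Nat.modEq_and_modEq_iff_modEq_mul hcop2]
      refine ⟨(ZMod.natCast_eq_natCast_iff _ _ _).1 (h1.trans h1'.symm), ?_⟩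
      exact ((Nat.modEq_zero_iff_dvd).2 h2).trans ((Nat.modEq_zero_iff_dvd).2 h2').symm
    simp only at he
    rw [← Nat.div_add_mod n (q * r ^ 2), ← Nat.div_add_mod n' (q * r ^ 2), he, h3]

section

variable {q : ℕ} {ε Q₁ : ℝ} {a : ZMod q}

/-- A prime `r ≥ z` with `r² ∣ n₁n₂n₃pum` divides one of the `n_i`, hence is `≤ √q`. -/
lemma GoodK.large_prime_le (hL : Large q ε) (hQu : Q₁ ≤ (q : ℝ) ^ (ε ^ 2)) {k₁ k₂ k₃ : ℤ}
    {t : Tup} (hG : GoodK q ε Q₁ a k₁ k₂ k₃ t) {r : ℕ} (hr : r.Prime)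
    (hrz : (q : ℝ) ^ Real.sqrt ε ≤ r) (hd : r ^ 2 ∣ tupProd t) :
    (r : ℝ) ≤ (q : ℝ) ^ ((1 : ℝ) / 2) := by
  have key : ∀ {k : ℤ} (_ : |k| ≤ (⌊ε ^ 2 * Real.log q⌋₊ : ℤ)) {n : ℕ}
      (_ : inIyk ((q : ℝ) ^ ((1 : ℝ) / 2 - ε / 4)) k n) (_ : 1 ≤ n) (_ : r ∣ n),
      (r : ℝ) ≤ (q : ℝ) ^ ((1 : ℝ) / 2) := by
    intro k hk n hn hn1 hrn
    have h1 : (r : ℝ) ≤ n := by exact_mod_cast Nat.le_of_dvd hn1 hrn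
    exact h1.trans (GoodK.I_le_sqrt hL hk hn)
  by_contra hcon
  have c1 : Nat.Coprime (r ^ 2) t.1 := ((Nat.Prime.coprime_iff_not_dvd hr).2 fun h =>
    hcon (key hG.hk₁ hG.n₁I hG.n₁_pos h)).pow_left 2
  have c2 : Nat.Coprime (r ^ 2) t.2.1 := ((Nat.Prime.coprime_iff_not_dvd hr).2 fun h =>
    hcon (key hG.hk₂ hG.n₂I hG.n₂_pos h)).pow_left 2
  have c3 : Nat.Coprime (r ^ 2) t.2.2.1 := ((Nat.Prime.coprime_iff_not_dvd hr).2 fun h =>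
    hcon (key hG.hk₃ hG.n₃I hG.n₃_pos h)).pow_left 2
  have c4 : Nat.Coprime (r ^ 2) t.2.2.2.1 := ((Nat.Prime.coprime_iff_not_dvd hr).2 fun h => by
    have h1 : (r : ℝ) ≤ t.2.2.2.1 := by exact_mod_cast Nat.le_of_dvd hG.pp.pos h
    linarith [hG.pu, hL.Q_lt_z hQu]).pow_left 2
  have c5 : Nat.Coprime (r ^ 2) t.2.2.2.2.2 := ((Nat.Prime.coprime_iff_not_dvd hr).2 fun h => by
    have h1 : (r : ℝ) ≤ t.2.2.2.2.2 := by exact_mod_cast Nat.le_of_dvd hG.m_pos h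
    linarith [hG.m_lt_z hL]).pow_left 2
  have h1 : r ^ 2 ∣ t.2.2.2.2.1 := by
    have h2 := c5.dvd_of_dvd_mul_right hd
    exact (((c1.mul_right c2).mul_right c3).mul_right c4).dvd_of_dvd_mul_left h2
  have h2 := hG.usq r (by rwa [sq] at h1)
  exact hr.one_lt.ne' (Nat.isUnit_iff.1 h2)

/-- Good tuples whose product is divisible by the square of a prime `r ≥ z`. -/
lemma count_large_prime (hL : Large q ε) (ha : IsUnit a) (hQ : 1 ≤ Q₁)
    (hQu : Q₁ ≤ (q : ℝ) ^ (ε ^ 2))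
    (hbig : 3 * (8 : ℝ) ^ ⌊3 / Real.sqrt ε⌋₊ ≤ (q : ℝ) ^ ε) (T : Finset Tup)
    (hT : ∀ t ∈ T, Good q ε Q₁ a t)
    (hb : ∀ t ∈ T, ∃ r : ℕ, r.Prime ∧ (q : ℝ) ^ Real.sqrt ε ≤ r ∧ r ^ 2 ∣ tupProd t) :
    (T.card : ℝ) ≤ q := by
  have hq := hL.q_pos
  have hqN : 0 < q := by exact_mod_cast hq
  have hε := hL.pos
  have hε1 := hL.lt
  set z := (q : ℝ) ^ Real.sqrt ε with hz
  have hz1 : 1 < z := hL.one_lt_z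
  have hse := Real.sqrt_pos.2 hε
  have hlq := hL.log_large
  set N := ⌊(q : ℝ) ^ 2 * Q₁⌋₊ with hN
  have hNle : (N : ℝ) ≤ (q : ℝ) ^ 2 * Q₁ := Nat.floor_le (by positivity)
  set k := ⌊3 / Real.sqrt ε⌋₊ with hk
  set V := (q : ℝ) ^ (ε / 2 + 2 * ε ^ 2) with hV
  have hV0 : 0 < V := by positivity
  -- The number of products: the sum over `r` converges, and `r ≤ √q` controls the terms `1`.
  have himg : ((T.image tupProd).card : ℝ) ≤ q * Q₁ * (2 / z) + (q : ℝ) ^ ((1 : ℝ) / 2) := by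
    set c := ⌈z⌉₊ with hc
    have hc1 : 1 ≤ c := Nat.one_le_iff_ne_zero.2 (Nat.ceil_pos.2 (by linarith)).ne'
    set d := ⌊(q : ℝ) ^ ((1 : ℝ) / 2)⌋₊ with hd
    have hdle : (d : ℝ) ≤ (q : ℝ) ^ ((1 : ℝ) / 2) := Nat.floor_le (by positivity)
    have h1 := card_le_sum_of_label (T.image tupProd) (Finset.Ioo (c - 1) (d + 1))
      (fun n r => r ^ 2 ∣ n) (fun r => q * Q₁ * ((r : ℝ) ^ 2)⁻¹ + 1) (by
        intro n hn
        obtain ⟨t, ht, rfl⟩ := Finset.mem_image.1 hn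
        obtain ⟨r, hr, hrz, hrd⟩ := hb t ht
        obtain ⟨_, _, _, hG⟩ := hT t ht
        refine ⟨r, Finset.mem_Ioo.2 ⟨?_, ?_⟩, hrd⟩
        · have : c ≤ r := Nat.ceil_le.2 hrz
          omega
        · have : r ≤ d := Nat.le_floor (hG.large_prime_le hL hQu hr hrz hrd)
          omega) (by
        intro r hr S hS hSr
        rw [Finset.mem_Ioo] at hr
        have hr0 : 0 < r := by omega
        have h2 := card_class_sq_le ha N S (by
          intro n hn
          obtain ⟨t, ht, rfl⟩ := Finset.mem_image.1 (hS hn)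
          obtain ⟨_, _, _, hG⟩ := hT t ht
          exact ⟨Nat.le_floor (hG.tupProd_le hL), hG.cong, hSr _ hn⟩)
        calc (S.card : ℝ) ≤ ((N / (q * r ^ 2) + 1 : ℕ) : ℝ) := by exact_mod_cast h2
          _ ≤ (N : ℝ) / (q * r ^ 2) + 1 := by
              push_cast
              gcongr
              exact_mod_cast Nat.cast_div_le (α := ℝ) (m := N) (n := q * r ^ 2)
          _ ≤ ((q : ℝ) ^ 2 * Q₁) / (q * r ^ 2) + 1 := by gcongr
          _ = _ := by field_simp)
    rw [Finset.sum_add_distrib, ← Finset.mul_sum, Finset.sum_const, Nat.card_Ioo, nsmul_eq_mul,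
      mul_one] at h1
    have h2 : ∑ i ∈ Finset.Ioo (c - 1) (d + 1), ((i : ℝ) ^ 2)⁻¹ ≤ 2 / z := by
      refine (sum_Ioo_inv_sq_le (c - 1) (d + 1)).trans ?_
      rw [show ((c - 1 : ℕ) : ℝ) + 1 = c by exact_mod_cast Nat.sub_add_cancel hc1]
      have := Nat.le_ceil z
      gcongr
    have h3 : ((d + 1 - (c - 1) - 1 : ℕ) : ℝ) ≤ d := by exact_mod_cast (by omega)
    refine h1.trans ?_
    have : 0 ≤ q * Q₁ := by positivity
    gcongr
    exact h3.trans hdle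
  -- Given the product `n`, there are at most `2^k` choices for each of `n₁, n₂, n₃`, trivially many
  -- for `p` and `m`, and `u` is determined.
  have hfib : ∀ n ∈ T.image tupProd, ((T.filter (fun t => tupProd t = n)).card : ℝ) ≤
      (8 : ℝ) ^ k * Q₁ * V := by
    intro n hn
    obtain ⟨t₀, ht₀, hn₀⟩ := Finset.mem_image.1 hn
    obtain ⟨_, _, _, hG₀⟩ := hT t₀ ht₀
    have hpos : ∀ t ∈ T, 0 < t.1 * t.2.1 * t.2.2.1 * t.2.2.2.1 * t.2.2.2.2.2 := by
      intro t ht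
      obtain ⟨_, _, _, hG⟩ := hT t ht
      exact Nat.mul_pos (Nat.mul_pos (Nat.mul_pos (Nat.mul_pos hG.n₁_pos hG.n₂_pos) hG.n₃_pos)
        hG.pp.pos) hG.m_pos
    have hprod : ∀ t : Tup, tupProd t =
        (t.1 * t.2.1 * t.2.2.1 * t.2.2.2.1 * t.2.2.2.2.2) * t.2.2.2.2.1 := by
      intro t; unfold tupProd; ring
    have hn0 : n ≠ 0 := by
      rw [← hn₀, hprod]
      exact (Nat.mul_pos (hpos t₀ ht₀) hG₀.u_pos).ne'
    have hnlt : (n : ℝ) < z ^ (k + 1) := by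
      rw [← hn₀]
      refine (hG₀.tupProd_le hL).trans_lt ?_
      calc (q : ℝ) ^ 2 * Q₁ ≤ (q : ℝ) ^ 2 * (q : ℝ) ^ (ε ^ 2) := by gcongr
        _ = Real.exp ((2 + ε ^ 2) * Real.log q) := by
            rw [← hL.rpow_eq, Real.rpow_add hq]; norm_cast
        _ < Real.exp (((k + 1 : ℕ) : ℝ) * (Real.sqrt ε * Real.log q)) := by
            apply Real.exp_lt_exp.2
            rw [← mul_assoc]
            apply mul_lt_mul_of_pos_right _ (by linarith)
            have := Nat.lt_floor_add_one (3 / Real.sqrt ε)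
            rw [div_lt_iff₀ hse] at this
            push_cast
            nlinarith
        _ = z ^ (k + 1) := by rw [Real.exp_nat_mul, ← hL.rpow_eq]
    set D := n.divisors.filter (PS {p | z ≤ p}) with hD
    have hDc : D.card ≤ 2 ^ k := card_rough_divisors hz1 hn0 hnlt
    have h1 : (T.filter (fun t => tupProd t = n)).card ≤
        (D ×ˢ D ×ˢ D ×ˢ Finset.Icc 1 ⌊Q₁⌋₊ ×ˢ Finset.Icc 1 ⌊V⌋₊).card := by
      refine Finset.card_le_card_of_injOn
        (fun t => (t.1, t.2.1, t.2.2.1, t.2.2.2.1, t.2.2.2.2.2)) ?_ ?_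
      · intro t ht
        rw [Finset.mem_coe, Finset.mem_filter] at ht
        obtain ⟨_, _, _, hG⟩ := hT t ht.1
        have hdv : t.1 ∣ n ∧ t.2.1 ∣ n ∧ t.2.2.1 ∣ n := by
          rw [← ht.2]; unfold tupProd
          exact ⟨⟨t.2.1 * t.2.2.1 * t.2.2.2.1 * t.2.2.2.2.1 * t.2.2.2.2.2, by ring⟩,
            ⟨t.1 * t.2.2.1 * t.2.2.2.1 * t.2.2.2.2.1 * t.2.2.2.2.2, by ring⟩,
            ⟨t.1 * t.2.1 * t.2.2.2.1 * t.2.2.2.2.1 * t.2.2.2.2.2, by ring⟩⟩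
        simp only [Finset.mem_coe, Finset.mem_product, hD, Finset.mem_filter, Nat.mem_divisors,
          Finset.mem_Icc]
        exact ⟨⟨⟨hdv.1, hn0⟩, hG.n₁r⟩, ⟨⟨hdv.2.1, hn0⟩, hG.n₂r⟩, ⟨⟨hdv.2.2, hn0⟩, hG.n₃r⟩,
          ⟨hG.pp.pos, Nat.le_floor hG.pu⟩, ⟨hG.m_pos, Nat.le_floor (hG.m_le hL)⟩⟩
      · intro t ht t' ht' he
        rw [Finset.mem_coe, Finset.mem_filter] at ht ht'
        simp only [Prod.mk.injEq] at he
        obtain ⟨e1, e2, e3, e4, e5⟩ := he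
        have h2 := ht.2.trans ht'.2.symm
        rw [hprod, hprod, e1, e2, e3, e4, e5] at h2
        exact Prod.ext e1 (Prod.ext e2 (Prod.ext e3 (Prod.ext e4 (Prod.ext
          (Nat.eq_of_mul_eq_mul_left (hpos t' ht'.1) h2) e5))))
    rw [Finset.card_product, Finset.card_product, Finset.card_product, Finset.card_product,
      Nat.card_Icc, Nat.card_Icc, Nat.add_sub_cancel, Nat.add_sub_cancel] at h1
    have hDr : (D.card : ℝ) ≤ 2 ^ k := by exact_mod_cast hDc
    calc _ ≤ ((D.card * (D.card * (D.card * (⌊Q₁⌋₊ * ⌊V⌋₊))) : ℕ) : ℝ) := by exact_mod_cast h1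
      _ ≤ 2 ^ k * (2 ^ k * (2 ^ k * (Q₁ * V))) := by
          push_cast
          have := Nat.floor_le (show 0 ≤ Q₁ by linarith)
          have := Nat.floor_le hV0.le
          gcongr
      _ = _ := by
          rw [show (8 : ℝ) = 2 * 2 * 2 by norm_num, mul_pow, mul_pow]; ring
  have htot : (T.card : ℝ) ≤ (q * Q₁ * (2 / z) + (q : ℝ) ^ ((1 : ℝ) / 2)) *
      ((8 : ℝ) ^ k * Q₁ * V) := by
    have h1 := Finset.card_eq_sum_card_image tupProd T
    calc (T.card : ℝ) = ∑ n ∈ T.image tupProd, ((T.filter (fun t => tupProd t = n)).card : ℝ) := by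
          rw [h1]; push_cast; rfl
      _ ≤ ∑ n ∈ T.image tupProd, (8 : ℝ) ^ k * Q₁ * V := Finset.sum_le_sum hfib
      _ = (T.image tupProd).card * ((8 : ℝ) ^ k * Q₁ * V) := by
          rw [Finset.sum_const, nsmul_eq_mul]
      _ ≤ _ := by gcongr
  refine htot.trans ?_
  have hsb := hL.sqrt_bounds.1
  have hε2 : ε ^ 2 ≤ ε / 100 := by nlinarith
  have e1 : q * Q₁ * (2 / z) * (Q₁ * V) ≤ 2 * (q : ℝ) ^ (1 - ε) := by
    calc q * Q₁ * (2 / z) * (Q₁ * V) ≤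
          q * (q : ℝ) ^ (ε ^ 2) * (2 / z) * ((q : ℝ) ^ (ε ^ 2) * V) := by gcongr
      _ = 2 * ((q : ℝ) ^ (1 : ℝ) * (q : ℝ) ^ (ε ^ 2) * (q : ℝ) ^ (ε ^ 2) *
            (q : ℝ) ^ (ε / 2 + 2 * ε ^ 2) / (q : ℝ) ^ Real.sqrt ε) := by
          rw [Real.rpow_one]; ring
      _ ≤ _ := by
          rw [← Real.rpow_add hq, ← Real.rpow_add hq, ← Real.rpow_add hq, ← Real.rpow_sub hq]
          apply mul_le_mul_of_nonneg_left _ (by norm_num)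
          apply Real.rpow_le_rpow_of_exponent_le hL.one_le_q
          linarith
  have e2 : (q : ℝ) ^ ((1 : ℝ) / 2) * (Q₁ * V) ≤ (q : ℝ) ^ (1 - ε) := by
    calc (q : ℝ) ^ ((1 : ℝ) / 2) * (Q₁ * V) ≤
          (q : ℝ) ^ ((1 : ℝ) / 2) * ((q : ℝ) ^ (ε ^ 2) * V) := by gcongr
      _ ≤ _ := by
          rw [hV, ← Real.rpow_add hq, ← Real.rpow_add hq]
          apply Real.rpow_le_rpow_of_exponent_le hL.one_le_q
          linarith
  calc (q * Q₁ * (2 / z) + (q : ℝ) ^ ((1 : ℝ) / 2)) * ((8 : ℝ) ^ k * Q₁ * V) =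
        (8 : ℝ) ^ k * (q * Q₁ * (2 / z) * (Q₁ * V) + (q : ℝ) ^ ((1 : ℝ) / 2) * (Q₁ * V)) := by
        ring
    _ ≤ (8 : ℝ) ^ k * (2 * (q : ℝ) ^ (1 - ε) + (q : ℝ) ^ (1 - ε)) := by gcongr
    _ = 3 * (8 : ℝ) ^ k * (q : ℝ) ^ (1 - ε) := by ring
    _ ≤ (q : ℝ) ^ ε * (q : ℝ) ^ (1 - ε) := by gcongr
    _ = q := by
        rw [← Real.rpow_add hq, add_sub_cancel, Real.rpow_one]

end

/-! ### Good tuples with non-squarefree product -/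

section

variable {q : ℕ} {ε Q₁ : ℝ} {a : ZMod q}

/-- The reasons for which the product of a good tuple may fail to be squarefree. -/
lemma GoodK.bad_cases {k₁ k₂ k₃ : ℤ} {t : Tup} (hG : GoodK q ε Q₁ a k₁ k₂ k₃ t)
    (hbad : ¬ Squarefree (tupProd t)) :
    (∃ r : ℕ, r.Prime ∧ (q : ℝ) ^ Real.sqrt ε ≤ r ∧ r ^ 2 ∣ tupProd t) ∨
      t.2.2.2.1 ∣ t.2.2.2.2.1 ∨ t.2.2.2.1 ∣ t.2.2.2.2.2 ∨
      ∃ r : ℕ, r.Prime ∧ r ∣ t.2.2.2.2.1 ∧ r ∣ t.2.2.2.2.2 := by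
  rw [Nat.squarefree_iff_prime_squarefree] at hbad
  push Not at hbad
  obtain ⟨r, hr, hd⟩ := hbad
  rw [← sq] at hd
  by_cases hrz : (q : ℝ) ^ Real.sqrt ε ≤ r
  · exact Or.inl ⟨r, hr, hrz, hd⟩
  right
  by_contra! hcon
  obtain ⟨h1, h2, h3⟩ := hcon
  have key : ∀ {n : ℕ}, PS {p | (q : ℝ) ^ Real.sqrt ε ≤ p} n → Nat.Coprime (r ^ 2) n :=
    fun hn => ((Nat.Prime.coprime_iff_not_dvd hr).2 fun h => hrz (hn r hr h)).pow_left 2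
  have h4 : r ^ 2 ∣ t.2.2.2.1 * t.2.2.2.2.1 * t.2.2.2.2.2 := by
    refine (((key hG.n₁r).mul_right (key hG.n₂r)).mul_right (key hG.n₃r)).dvd_of_dvd_mul_left ?_
    convert hd using 1
    unfold tupProd; ring
  have hum : Nat.Coprime t.2.2.2.2.1 t.2.2.2.2.2 :=
    Nat.coprime_of_dvd fun r hr h5 h6 => h3 r hr h5 h6
  have hsq : Squarefree (t.2.2.2.1 * t.2.2.2.2.1 * t.2.2.2.2.2) := by
    rw [Nat.squarefree_mul_iff, Nat.squarefree_mul_iff]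
    exact ⟨((Nat.Prime.coprime_iff_not_dvd hG.pp).2 h2).mul_left hum,
      ⟨(Nat.Prime.coprime_iff_not_dvd hG.pp).2 h1, hG.pp.squarefree, hG.usq⟩, hG.msq⟩
  have h5 := hsq r (by rwa [← sq])
  exact hr.one_lt.ne' (Nat.isUnit_iff.1 h5)

/-- The number of good tuples whose product is not squarefree. -/
lemma count_bad (hL : Large q ε) (ha : IsUnit a) (hQ : 100 ≤ Real.log Q₁) (hQ3 : 3 ≤ Q₁)
    (hQu : Q₁ ≤ (q : ℝ) ^ (ε ^ 2))
    (hbig : 3 * (8 : ℝ) ^ ⌊3 / Real.sqrt ε⌋₊ ≤ (q : ℝ) ^ ε) (T : Finset Tup)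
    (hT : ∀ t ∈ T, Good q ε Q₁ a t) (hb : ∀ t ∈ T, ¬ Squarefree (tupProd t)) :
    (T.card : ℝ) ≤ coreConst / ε * q * Q₁ ^ ((2 : ℝ) / 3) * (10 ^ 13 * Real.log Q₁ ^ 4) := by
  have hq := hL.q_pos
  have hε := hL.pos
  have hC := one_le_coreConst
  have h := card_le_sum_of_label T (Finset.univ : Finset (Fin 4))
    (fun t i => ![∃ r : ℕ, r.Prime ∧ (q : ℝ) ^ Real.sqrt ε ≤ r ∧ r ^ 2 ∣ tupProd t,
      t.2.2.2.1 ∣ t.2.2.2.2.1, t.2.2.2.1 ∣ t.2.2.2.2.2,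
      ∃ r : ℕ, r.Prime ∧ r ∣ t.2.2.2.2.1 ∧ r ∣ t.2.2.2.2.2] i)
    ![(q : ℝ), 3 * (coreConst / ε) * q * Q₁ ^ ((2 : ℝ) / 3),
      3 * (coreConst / ε) * q * Q₁ ^ ((2 : ℝ) / 3),
      coreConst / ε * q * Q₁ ^ ((1 : ℝ) / 3) * (10 ^ 12 * Real.log Q₁ ^ 4)] (by
      intro t ht
      obtain ⟨_, _, _, hG⟩ := hT t ht
      rcases hG.bad_cases (hb t ht) with h | h | h | h
      · exact ⟨0, Finset.mem_univ _, h⟩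
      · exact ⟨1, Finset.mem_univ _, h⟩
      · exact ⟨2, Finset.mem_univ _, h⟩
      · exact ⟨3, Finset.mem_univ _, h⟩) (by
      intro i _ T' hT' hR
      have hT'' : ∀ t ∈ T', Good q ε Q₁ a t := fun t ht => hT t (hT' ht)
      fin_cases i
      · exact count_large_prime hL ha (by linarith) hQu hbig T' hT'' hR
      · exact count_p_dvd_u hL ha hQ3 T' hT'' hR
      · exact count_p_dvd_m hL ha hQ3 T' hT'' hR
      · exact count_um hL ha hQ hQ3 hQu T' hT'' hR)
  have hsum : ∀ b₀ b₁ b₂ b₃ : ℝ, ∑ i : Fin 4, ![b₀, b₁, b₂, b₃] i = b₀ + b₁ + b₂ + b₃ := by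
    intro b₀ b₁ b₂ b₃
    rw [Fin.sum_univ_four]; rfl
  rw [hsum] at h
  refine h.trans ?_
  have hL4 : (1 : ℝ) ≤ Real.log Q₁ ^ 4 := one_le_pow₀ (by linarith)
  have h1 : (1 : ℝ) ≤ Q₁ ^ ((1 : ℝ) / 3) := Real.one_le_rpow (by linarith) (by norm_num)
  have h2 : Q₁ ^ ((1 : ℝ) / 3) ≤ Q₁ ^ ((2 : ℝ) / 3) :=
    Real.rpow_le_rpow_of_exponent_le (by linarith) (by norm_num)
  have h3 : 1 ≤ coreConst / ε := by
    rw [le_div_iff₀ hε]; linarith [hL.lt]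
  set X := coreConst / ε * q * Q₁ ^ ((2 : ℝ) / 3) with hX
  have h4 : (q : ℝ) ≤ X := by
    calc (q : ℝ) = 1 * q * 1 := by ring
      _ ≤ X := by rw [hX]; gcongr; linarith
  have h5 : coreConst / ε * q * Q₁ ^ ((1 : ℝ) / 3) ≤ X := by rw [hX]; gcongr
  have h6 : 3 * (coreConst / ε) * q * Q₁ ^ ((2 : ℝ) / 3) = 3 * X := by rw [hX]; ring
  have hX0 : 0 ≤ X := by linarith
  calc _ ≤ X + 3 * X + 3 * X + X * (10 ^ 12 * Real.log Q₁ ^ 4) := by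
        rw [h6]
        gcongr
    _ ≤ _ := by nlinarith

end

/-! ### The Mertens factor -/

lemma one_sub_sum_le_prod {ι : Type*} (s : Finset ι) (x : ι → ℝ)
    (h0 : ∀ i ∈ s, 0 ≤ x i) (h1 : ∀ i ∈ s, x i ≤ 1) :
    1 - ∑ i ∈ s, x i ≤ ∏ i ∈ s, (1 - x i) ∧ ∏ i ∈ s, (1 - x i) ≤ 1 := by
  induction s using Finset.induction_on with
  | empty => simp
  | insert i s hi ih =>
    rw [Finset.sum_insert hi, Finset.prod_insert hi]
    have ih' := ih (fun j hj => h0 j (Finset.mem_insert_of_mem hj))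
      (fun j hj => h1 j (Finset.mem_insert_of_mem hj))
    have a0 := h0 i (Finset.mem_insert_self _ _)
    have a1 := h1 i (Finset.mem_insert_self _ _)
    have b0 : 0 ≤ ∏ j ∈ s, (1 - x j) := Finset.prod_nonneg fun j hj =>
      sub_nonneg.2 (h1 j (Finset.mem_insert_of_mem hj))
    constructor <;> nlinarith

/-- The Mertens factor is at most a constant times `√ε log q · φ(q)/q`. -/
lemma mertens_bound {q : ℕ} {ε : ℝ} (hL : Large q ε)
    (hbig : 3 * (8 : ℝ) ^ ⌊3 / Real.sqrt ε⌋₊ ≤ (q : ℝ) ^ ε) :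
    mertensFactor q ((q : ℝ) ^ Real.sqrt ε) ≤
      2 * Real.exp 11 * Real.sqrt ε * Real.log q * ((Nat.totient q : ℝ) / q) := by
  have hq := hL.q_pos
  have hqN : 0 < q := by exact_mod_cast hq
  have hε := hL.pos
  have hse := Real.sqrt_pos.2 hε
  have hlq := hL.log_large
  have hsb := hL.sqrt_bounds
  set z := (q : ℝ) ^ Real.sqrt ε with hz
  have hz1 : 1 < z := hL.one_lt_z
  have hlogz : 0 < Real.sqrt ε * Real.log q := by positivity
  have hqz : (q : ℝ) ^ ε ≤ z := Real.rpow_le_rpow_of_exponent_le hL.one_le_q (by linarith)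
  have h8 : (1 : ℝ) ≤ 8 ^ ⌊3 / Real.sqrt ε⌋₊ := one_le_pow₀ (by norm_num)
  have hz3 : 3 ≤ z := by linarith
  set N := ⌈z⌉₊ - 1 with hN
  have hc3 : 3 ≤ ⌈z⌉₊ := by
    have := hz3.trans (Nat.le_ceil z)
    exact_mod_cast this
  have hN1 : ⌈z⌉₊ = N + 1 := by omega
  have hNz : (N : ℝ) ≤ z := (Nat.lt_ceil.1 (by omega)).le
  set F := fun p : ℕ => (1 : ℝ) - 1 / (p : ℝ) with hF
  have hFpos : ∀ p : ℕ, p.Prime → 0 < F p := by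
    intro p hp
    have : (1 : ℝ) < p := by exact_mod_cast hp.one_lt
    simp only [hF, sub_pos]
    rw [div_lt_one (by linarith)]
    exact this
  set A := (Finset.range ⌈z⌉₊).filter Nat.Prime with hA
  have hAll : ∏ p ∈ A, (F p)⁻¹ ≤ Real.exp 11 * (Real.sqrt ε * Real.log q) := by
    rw [hA, hN1]
    refine (prod_prime_le N (by omega)).trans ?_
    gcongr
    rw [← hL.log_z]
    apply Real.log_le_log _ hNz
    exact_mod_cast (by omega : 0 < N)
  -- Split the primes dividing `q` at `z`.
  set G := q.primeFactors.filter (fun p : ℕ => z ≤ p) with hG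
  set D := A.filter (fun p => p ∣ q) with hD
  have hDG : q.primeFactors.filter (fun p : ℕ => ¬ z ≤ p) = D := by
    ext p
    simp only [hD, hA, Finset.mem_filter, Finset.mem_range, Nat.mem_primeFactors, not_le,
      Nat.lt_ceil]
    have := hqN.ne'
    tauto
  have hphi : (Nat.totient q : ℝ) / q = (∏ p ∈ G, F p) * ∏ p ∈ D, F p := by
    have h := Nat.totient_eq_mul_prod_factors q
    have h' : (Nat.totient q : ℝ) = q * ∏ p ∈ q.primeFactors, F p := by
      have h2 := congrArg (fun x : ℚ => (x : ℝ)) h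
      push_cast at h2
      rw [h2]
      simp only [hF, one_div]
    rw [h', mul_div_cancel_left₀ _ hq.ne', ← hDG, hG,
      Finset.prod_filter_mul_prod_filter_not]
  -- Only boundedly many primes `≥ z` divide `q`, so they change `φ(q)/q` by at most a factor `2`.
  have hGcard : (G.card : ℝ) ≤ z / 2 := by
    set k := ⌊3 / Real.sqrt ε⌋₊ with hk
    have h1 : (q : ℝ) < z ^ (k + 1) := by
      rw [hz, ← Real.rpow_natCast, ← Real.rpow_mul hq.le]
      have h2 : 3 / Real.sqrt ε < k + 1 := Nat.lt_floor_add_one _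
      rw [div_lt_iff₀ hse] at h2
      calc (q : ℝ) = (q : ℝ) ^ (1 : ℝ) := (Real.rpow_one _).symm
        _ < _ := by
          rw [hL.rpow_eq, hL.rpow_eq]
          apply Real.exp_lt_exp.2
          apply mul_lt_mul_of_pos_right _ (by linarith)
          push_cast
          linarith
    have h2 := card_rough_divisors hz1 hqN.ne' h1
    have h3 : G ⊆ q.divisors.filter (PS {p | z ≤ p}) := by
      intro p hp
      rw [hG, Finset.mem_filter, Nat.mem_primeFactors] at hp
      rw [Finset.mem_filter, Nat.mem_divisors]
      refine ⟨⟨hp.1.2.1, hp.1.2.2⟩, fun r hr hrp => ?_⟩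
      rw [(Nat.prime_dvd_prime_iff_eq hr hp.1.1).1 hrp]
      exact hp.2
    have h4 : (G.card : ℝ) ≤ 2 ^ k := by exact_mod_cast (Finset.card_le_card h3).trans h2
    have h5 : (2 : ℝ) ^ k ≤ 8 ^ k := by gcongr; norm_num
    linarith
  have hGhalf : 1 / 2 ≤ ∏ p ∈ G, F p := by
    have h1 := (one_sub_sum_le_prod G (fun p : ℕ => 1 / (p : ℝ)) (fun p _ => by positivity)
      (fun p hp => by
        have : z ≤ p := (Finset.mem_filter.1 hp).2
        rw [div_le_one (by linarith)]
        linarith)).1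
    have h2 : ∑ p ∈ G, 1 / (p : ℝ) ≤ G.card • (1 / z) := by
      apply Finset.sum_le_card_nsmul
      intro p hp
      have : z ≤ p := (Finset.mem_filter.1 hp).2
      gcongr
    rw [nsmul_eq_mul] at h2
    have h3 : (G.card : ℝ) * (1 / z) ≤ z / 2 * (1 / z) := by gcongr
    have h4 : z / 2 * (1 / z) = 1 / 2 := by field_simp
    linarith
  have hDpos : 0 < ∏ p ∈ D, F p := Finset.prod_pos fun p hp =>
    hFpos p (Finset.mem_filter.1 (Finset.mem_filter.1 hp).1).2
  have hm : mertensFactor q z = (∏ p ∈ A, (F p)⁻¹) * ∏ p ∈ D, F p := by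
    have h1 : mertensFactor q z = ∏ p ∈ A.filter (fun p => ¬ p ∣ q), (F p)⁻¹ := by
      rw [hA, Finset.filter_filter]; rfl
    have h2 := Finset.prod_filter_mul_prod_filter_not A (fun p => p ∣ q) (fun p => (F p)⁻¹)
    rw [h1, ← h2, Finset.prod_inv_distrib (s := A.filter fun p => p ∣ q), ← hD]
    field_simp
  rw [hm, hphi]
  calc _ ≤ (Real.exp 11 * (Real.sqrt ε * Real.log q)) * ∏ p ∈ D, F p := by gcongr
    _ = 2 * Real.exp 11 * Real.sqrt ε * Real.log q * ((1 / 2) * ∏ p ∈ D, F p) := by ring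
    _ ≤ _ := by gcongr

/-- Third power of `mertens_bound`. -/
lemma mertens_cube {q : ℕ} {ε : ℝ} (hL : Large q ε)
    (hbig : 3 * (8 : ℝ) ^ ⌊3 / Real.sqrt ε⌋₊ ≤ (q : ℝ) ^ ε) :
    0 ≤ mertensFactor q ((q : ℝ) ^ Real.sqrt ε) ∧
    mertensFactor q ((q : ℝ) ^ Real.sqrt ε) ^ 3 ≤
      8 * Real.exp 33 * ε * Real.log q ^ 3 * ((Nat.totient q : ℝ) / q) := by
  have hq := hL.q_pos
  have hε := hL.pos
  have hlq := hL.log_large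
  have h0 : 0 ≤ mertensFactor q ((q : ℝ) ^ Real.sqrt ε) := by
    apply Finset.prod_nonneg
    intro p hp
    have := one_le_inv_one_sub (Finset.mem_filter.1 hp).2.1
    linarith
  refine ⟨h0, ?_⟩
  have hw0 : 0 ≤ (Nat.totient q : ℝ) / q := by positivity
  have hw1 : (Nat.totient q : ℝ) / q ≤ 1 := by
    rw [div_le_one hq]; exact_mod_cast Nat.totient_le q
  have hs : Real.sqrt ε ^ 3 ≤ ε := by
    have h1 := Real.sq_sqrt hε.le
    have h2 := hL.sqrt_bounds.2
    rw [pow_succ, h1]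
    nlinarith
  have hw3 : ((Nat.totient q : ℝ) / q) ^ 3 ≤ (Nat.totient q : ℝ) / q :=
    pow_le_of_le_one hw0 hw1 (by norm_num)
  have he : Real.exp 11 ^ 3 = Real.exp 33 := by rw [← Real.exp_nat_mul]; norm_num
  calc _ ≤ (2 * Real.exp 11 * Real.sqrt ε * Real.log q * ((Nat.totient q : ℝ) / q)) ^ 3 := by
        gcongr
        exact mertens_bound hL hbig
    _ = 8 * Real.exp 33 * Real.sqrt ε ^ 3 * Real.log q ^ 3 * ((Nat.totient q : ℝ) / q) ^ 3 := by
        rw [← he]; ring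
    _ ≤ _ := by gcongr

/-! ### Comparison of the bounds -/

lemma PS_of_gcd_primorial {z : ℝ} {n : ℕ} (h : Nat.gcd n (primorialLT z) = 1) :
    PS {p | z ≤ p} n := by
  intro p hp hpn
  rw [Set.mem_ofPred_eq]
  by_contra hlt
  have h1 : p ∣ primorialLT z := Finset.dvd_prod_of_mem (fun p => p)
    (Finset.mem_filter.2 ⟨Finset.mem_range.2 (Nat.lt_ceil.2 (not_le.1 hlt)), hp⟩)
  have h2 := Nat.dvd_gcd hpn h1
  rw [h] at h2
  exact hp.one_lt.ne' (Nat.dvd_one.1 h2)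

lemma fG_bounds {q : ℕ} {ε : ℝ} {h : ℕ → ℝ} {Δ : ℝ} {k : ℤ}
    (hW : 0 ≤ mertensFactor q ((q : ℝ) ^ Real.sqrt ε)) (n : ℕ) :
    0 ≤ fG q ε h Δ k n ∧ fG q ε h Δ k n ≤ mertensFactor q ((q : ℝ) ^ Real.sqrt ε) := by
  unfold fG
  split_ifs <;> simp [hW]

lemma fG_ne_zero {q : ℕ} {ε : ℝ} {h : ℕ → ℝ} {Δ : ℝ} {k : ℤ} {n : ℕ}
    (hn : fG q ε h Δ k n ≠ 0) :
    0 < Δ * h n ∧ PS {p | (q : ℝ) ^ Real.sqrt ε ≤ p} n ∧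
      inIyk ((q : ℝ) ^ ((1 : ℝ) / 2 - ε / 4)) k n := by
  unfold fG at hn
  split_ifs at hn with hc
  · exact ⟨hc.1, PS_of_gcd_primorial hc.2.1, hc.2.2.1⟩
  · simp at hn

lemma ind_bounds (S : Set ℕ) (n : ℕ) : 0 ≤ ind S n ∧ ind S n ≤ 1 := by
  unfold ind
  split_ifs <;> simp

lemma ind_ne_zero {S : Set ℕ} {n : ℕ} (h : ind S n ≠ 0) : n ∈ S := by
  unfold ind at h
  split_ifs at h with hc
  · exact hc
  · exact absurd rfl h

/-- On a six-tuple with square-free product a multiplicative function factors. -/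
lemma h_tupProd {h : ℕ → ℝ} (hm : IsMultFn h) {t : Tup} (hs : Squarefree (tupProd t)) :
    h (tupProd t) =
      h t.1 * h t.2.1 * h t.2.2.1 * h t.2.2.2.1 * h t.2.2.2.2.1 * h t.2.2.2.2.2 := by
  unfold tupProd at hs ⊢
  obtain ⟨c5, hs, -⟩ := Nat.squarefree_mul_iff.1 hs
  obtain ⟨c4, hs, -⟩ := Nat.squarefree_mul_iff.1 hs
  obtain ⟨c3, hs, -⟩ := Nat.squarefree_mul_iff.1 hs
  obtain ⟨c2, hs, -⟩ := Nat.squarefree_mul_iff.1 hs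
  obtain ⟨c1, hs, -⟩ := Nat.squarefree_mul_iff.1 hs
  rw [hm.2 _ _ c5, hm.2 _ _ c4, hm.2 _ _ c3, hm.2 _ _ c2, hm.2 _ _ c1]

/-- A box of six-tuples with all entries at most `B`. -/
def tupBox (B : ℕ) : Finset Tup :=
  Finset.range (B + 1) ×ˢ Finset.range (B + 1) ×ˢ Finset.range (B + 1) ×ˢ
    Finset.range (B + 1) ×ˢ Finset.range (B + 1) ×ˢ Finset.range (B + 1)

lemma mem_tupBox {t : Tup} {B : ℕ} (h0 : tupProd t ≠ 0) (h : tupProd t ≤ B) : t ∈ tupBox B := by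
  have key : ∀ d, d ∣ tupProd t → d ∈ Finset.range (B + 1) := fun d hd =>
    Finset.mem_range.2 (Nat.lt_succ_of_le ((Nat.le_of_dvd (Nat.pos_of_ne_zero h0) hd).trans h))
  simp only [tupBox, Finset.mem_product]
  unfold tupProd at key
  refine ⟨key _ ?_, key _ ?_, key _ ?_, key _ ?_, key _ ?_, key _ ?_⟩
  · exact ((((dvd_mul_right _ _).mul_right _).mul_right _).mul_right _).mul_right _
  · exact ((((dvd_mul_left _ _).mul_right _).mul_right _).mul_right _).mul_right _
  · exact (((dvd_mul_left _ _).mul_right _).mul_right _).mul_right _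
  · exact ((dvd_mul_left _ _).mul_right _).mul_right _
  · exact (dvd_mul_left _ _).mul_right _
  · exact dvd_mul_left _ _

/-- The six-tuples of type `k̄` whose product is not square-free. -/
def badSet (q : ℕ) (ε Q₁ : ℝ) (a : ZMod q) (kbar : ℤ × ℤ × ℤ) : Finset Tup :=
  (tupBox ⌊(q : ℝ) ^ 2 * Q₁⌋₊).filter
    (fun t => GoodK q ε Q₁ a kbar.1 kbar.2.1 kbar.2.2 t ∧ ¬ Squarefree (tupProd t))

/-- If `a ∉ E_h^Δ(q²Q₁)`, only six-tuples with non-square-free product contribute to the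
convolution, each with weight at most the cube of the Mertens factor. -/
lemma conv_le {q : ℕ} {ε Q₁ : ℝ} (hL : Large q ε) {h : ℕ → ℝ} (hm : IsMultFn h)
    (hW : 0 ≤ mertensFactor q ((q : ℝ) ^ Real.sqrt ε)) {Δ : ℝ} {a : (ZMod q)ˣ}
    {Δ₁ Δ₂ Δ₃ Δ₄ Δ₅ Δ₆ : ℝ} (hΔ : Δ₁ * Δ₂ * Δ₃ * Δ₄ * Δ₅ * Δ₆ = Δ)
    (ha : a ∉ EhSet q h Δ ((q : ℝ) ^ 2 * Q₁)) {kbar : ℤ × ℤ × ℤ}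
    (hk : |kbar.1| ≤ (⌊ε ^ 2 * Real.log q⌋₊ : ℤ) ∧
      |kbar.2.1| ≤ (⌊ε ^ 2 * Real.log q⌋₊ : ℤ) ∧ |kbar.2.2| ≤ (⌊ε ^ 2 * Real.log q⌋₊ : ℤ))
    (B₄ B₅ B₆ : Set ((ZMod q)ˣ)) :
    conv6Sum q (fG q ε h Δ₁ kbar.1) (fG q ε h Δ₂ kbar.2.1) (fG q ε h Δ₃ kbar.2.2)
      (ind (QG q Q₁ h B₄ Δ₄)) (ind (UG q ε h B₅ Δ₅ (-kbar.1)))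
      (ind (MG q ε Q₁ h B₆ Δ₆ (-kbar.2.1 - kbar.2.2))) ((a : (ZMod q)ˣ) : ZMod q) ≤
    mertensFactor q ((q : ℝ) ^ Real.sqrt ε) ^ 3 * (badSet q ε Q₁ a kbar).card := by
  have hq := hL.q_pos
  unfold conv6Sum
  rw [finsum_eq_sum_of_support_subset (s := badSet q ε Q₁ a kbar)]
  · rw [mul_comm, ← nsmul_eq_mul]
    apply Finset.sum_le_card_nsmul
    intro t _
    split_ifs
    · obtain ⟨a1, b1⟩ := fG_bounds (h := h) (Δ := Δ₁) (k := kbar.1) hW t.1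
      obtain ⟨a2, b2⟩ := fG_bounds (h := h) (Δ := Δ₂) (k := kbar.2.1) hW t.2.1
      obtain ⟨a3, b3⟩ := fG_bounds (h := h) (Δ := Δ₃) (k := kbar.2.2) hW t.2.2.1
      obtain ⟨a4, b4⟩ := ind_bounds (QG q Q₁ h B₄ Δ₄) t.2.2.2.1
      obtain ⟨a5, b5⟩ := ind_bounds (UG q ε h B₅ Δ₅ (-kbar.1)) t.2.2.2.2.1
      obtain ⟨a6, b6⟩ := ind_bounds (MG q ε Q₁ h B₆ Δ₆ (-kbar.2.1 - kbar.2.2)) t.2.2.2.2.2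
      set W := mertensFactor q ((q : ℝ) ^ Real.sqrt ε)
      calc _ ≤ W * W * W * 1 * 1 * 1 := by gcongr
        _ = W ^ 3 := by ring
    · positivity
  · intro t ht
    rw [Function.mem_support, ite_ne_right_iff] at ht
    obtain ⟨hcong, hne⟩ := ht
    rw [mul_ne_zero_iff, mul_ne_zero_iff, mul_ne_zero_iff, mul_ne_zero_iff, mul_ne_zero_iff] at hne
    obtain ⟨⟨⟨⟨⟨h1, h2⟩, h3⟩, h4⟩, h5⟩, h6⟩ := hne
    obtain ⟨s1, r1, i1⟩ := fG_ne_zero h1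
    obtain ⟨s2, r2, i2⟩ := fG_ne_zero h2
    obtain ⟨s3, r3, i3⟩ := fG_ne_zero h3
    obtain ⟨pp, pl, pu, -, s4⟩ := ind_ne_zero h4
    obtain ⟨uI, usq, -, s5⟩ := ind_ne_zero h5
    obtain ⟨mI, msq, mS, -, s6, mr⟩ := ind_ne_zero h6
    have hG : GoodK q ε Q₁ (a : ZMod q) kbar.1 kbar.2.1 kbar.2.2 t :=
      { hk₁ := hk.1, hk₂ := hk.2.1, hk₃ := hk.2.2, n₁I := i1, n₂I := i2, n₃I := i3,
        n₁r := r1, n₂r := r2, n₃r := r3, pp := pp, pl := pl, pu := pu, uI := uI, usq := usq,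
        mI := mI, msq := msq, mS := mS, mr := PS_of_gcd_primorial mr, cong := hcong }
    have hle := hG.tupProd_le hL
    have hpos : tupProd t ≠ 0 := by
      have a1 := hG.n₁_pos
      have a2 := hG.n₂_pos
      have a3 := hG.n₃_pos
      have a4 := hG.pp.pos
      have a5 := hG.u_pos
      have a6 := hG.m_pos
      unfold tupProd
      positivity
    rw [badSet, Finset.mem_coe, Finset.mem_filter]
    refine ⟨mem_tupBox hpos (Nat.le_floor hle), hG, fun hsq => ha ⟨_, hsq, hle, hcong, ?_⟩⟩
    rw [h_tupProd hm hsq, ← hΔ]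
    have := mul_pos (mul_pos (mul_pos (mul_pos (mul_pos s1 s2) s3) s4) s5) s6
    calc 0 < _ := this
      _ = _ := by ring

/-- The intervals `I_y(k)`, `k ∈ ℤ`, are disjoint. -/
lemma inIyk_unique {y : ℝ} (hy : 0 < y) {k k' : ℤ} {n : ℕ} (h : inIyk y k n)
    (h' : inIyk y k' n) : k = k' := by
  have key : ∀ {k k' : ℤ}, inIyk y k n → inIyk y k' n → k ≤ k' := by
    intro k k' h h'
    have h1 := lt_of_mul_lt_mul_right (h.1.trans_le h'.2) hy.le
    rw [Real.exp_lt_exp] at h1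
    have h2 : k - 1 < k' := by exact_mod_cast h1
    omega
  have hle := key h h'
  have hge := key h' h
  exact le_antisymm hle hge

/-- The bad tuples of all types together. -/
lemma sum_badSet_le {q : ℕ} {ε Q₁ : ℝ} {a : ZMod q} (hL : Large q ε) (ha : IsUnit a)
    (hQ : 100 ≤ Real.log Q₁) (hQ3 : 3 ≤ Q₁) (hQu : Q₁ ≤ (q : ℝ) ^ (ε ^ 2))
    (hbig : 3 * (8 : ℝ) ^ ⌊3 / Real.sqrt ε⌋₊ ≤ (q : ℝ) ^ ε) (𝒦 : Finset (ℤ × ℤ × ℤ)) :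
    ∑ kbar ∈ 𝒦, ((badSet q ε Q₁ a kbar).card : ℝ) ≤
      coreConst / ε * q * Q₁ ^ ((2 : ℝ) / 3) * (10 ^ 13 * Real.log Q₁ ^ 4) := by
  have hq := hL.q_pos
  have hR : 0 < (q : ℝ) ^ ((1 : ℝ) / 2 - ε / 4) := by positivity
  rw [← Nat.cast_sum, ← Finset.card_biUnion]
  · apply count_bad hL ha hQ hQ3 hQu hbig
    · intro t ht
      obtain ⟨k, _, ht⟩ := Finset.mem_biUnion.1 ht
      exact ⟨_, _, _, (Finset.mem_filter.1 ht).2.1⟩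
    · intro t ht
      obtain ⟨k, _, ht⟩ := Finset.mem_biUnion.1 ht
      exact (Finset.mem_filter.1 ht).2.2
  · intro k _ k' _ hne
    rw [Function.onFun, Finset.disjoint_left]
    intro t ht ht'
    have h1 := (Finset.mem_filter.1 ht).2.1
    have h2 := (Finset.mem_filter.1 ht').2.1
    exact hne (Prod.ext (inIyk_unique hR h1.n₁I h2.n₁I)
      (Prod.ext (inIyk_unique hR h1.n₂I h2.n₂I) (inIyk_unique hR h1.n₃I h2.n₃I)))

/-- The normalisation equals `(1 - 1/e)³ q² Q₁`, because `R·U = R²·M = q`; in particular it is at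
least `q² Q₁ / 8`. -/
lemma le_Skbar {q : ℕ} {ε Q₁ : ℝ} (hL : Large q ε) (hQ : 0 ≤ Q₁) (kbar : ℤ × ℤ × ℤ) :
    (q : ℝ) ^ 2 * Q₁ / 8 ≤ Skbar q ε Q₁ kbar := by
  have hlen : ∀ y : ℝ, ∀ k : ℤ, lenIyk y k = Real.exp k * y * (1 - Real.exp (-1)) := by
    intro y k
    unfold lenIyk
    rw [sub_eq_add_neg (k : ℝ), Real.exp_add]
    ring
  have hexp : Real.exp kbar.1 * Real.exp kbar.2.1 * Real.exp kbar.2.2 *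
      Real.exp (-(kbar.1 : ℝ)) * Real.exp (-(kbar.2.1 : ℝ) - (kbar.2.2 : ℝ)) = 1 := by
    rw [← Real.exp_add, ← Real.exp_add, ← Real.exp_add, ← Real.exp_add, ← Real.exp_zero]
    congr 1
    ring
  have h1 : Skbar q ε Q₁ kbar = (1 - Real.exp (-1)) ^ 3 * ((q : ℝ) ^ 2 * Q₁) := by
    unfold Skbar
    rw [hlen, hlen, hlen]
    calc _ = (1 - Real.exp (-1)) ^ 3 *
          ((((q : ℝ) ^ ((1 : ℝ) / 2 - ε / 4) * (q : ℝ) ^ ((1 : ℝ) / 2 + ε / 4)) *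
          ((q : ℝ) ^ ((1 : ℝ) / 2 - ε / 4) * (q : ℝ) ^ ((1 : ℝ) / 2 - ε / 4) *
            (q : ℝ) ^ (ε / 2))) * Q₁) *
          (Real.exp kbar.1 * Real.exp kbar.2.1 * Real.exp kbar.2.2 *
      Real.exp (-(kbar.1 : ℝ)) * Real.exp (-(kbar.2.1 : ℝ) - (kbar.2.2 : ℝ))) := by ring
      _ = _ := by rw [hexp, hL.RU, hL.RRM]; ring
  have h2 : (1 : ℝ) / 2 ≤ 1 - Real.exp (-1) := by
    have h3 : Real.exp (-1) ≤ 1 / 2 := by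
      rw [Real.exp_neg, inv_le_comm₀ (Real.exp_pos _) (by norm_num)]
      have := Real.add_one_le_exp (1 : ℝ)
      linarith
    linarith
  rw [h1]
  calc (q : ℝ) ^ 2 * Q₁ / 8 = (1 / 2) ^ 3 * ((q : ℝ) ^ 2 * Q₁) := by ring
    _ ≤ _ := by gcongr

/-- The constant in the final upper bound. -/
def finalConst : ℝ := 64 * Real.exp 33 * coreConst * 10 ^ 13

/-- If `a ∉ E_h^Δ(q²Q₁)`, then `S` is at most
`finalConst · φ(q)/q · (log q)³ Q₁^(2/3) (log Q₁)⁴ / (q Q₁)`. -/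
lemma SG_le {q : ℕ} {ε Q₁ : ℝ} (hL : Large q ε)
    (hQ : 100 ≤ Real.log Q₁) (hQ3 : 3 ≤ Q₁) (hQu : Q₁ ≤ (q : ℝ) ^ (ε ^ 2))
    (hbig : 3 * (8 : ℝ) ^ ⌊3 / Real.sqrt ε⌋₊ ≤ (q : ℝ) ^ ε)
    {h : ℕ → ℝ} (hm : IsMultFn h) {Δ : ℝ} {a : (ZMod q)ˣ}
    {Δ₁ Δ₂ Δ₃ Δ₄ Δ₅ Δ₆ : ℝ} (hΔ : Δ₁ * Δ₂ * Δ₃ * Δ₄ * Δ₅ * Δ₆ = Δ)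
    (ha : a ∉ EhSet q h Δ ((q : ℝ) ^ 2 * Q₁)) {𝒦 : Finset (ℤ × ℤ × ℤ)}
    (hk : ∀ kbar ∈ 𝒦, |kbar.1| ≤ (⌊ε ^ 2 * Real.log q⌋₊ : ℤ) ∧
      |kbar.2.1| ≤ (⌊ε ^ 2 * Real.log q⌋₊ : ℤ) ∧ |kbar.2.2| ≤ (⌊ε ^ 2 * Real.log q⌋₊ : ℤ))
    (B₄ B₅ B₆ : Set ((ZMod q)ˣ)) :
    SG q ε Q₁ h Δ₁ Δ₂ Δ₃ Δ₄ Δ₅ Δ₆ 𝒦 B₄ B₅ B₆ a ≤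
      finalConst * ((Nat.totient q : ℝ) / q) * Real.log q ^ 3 *
        (Q₁ ^ ((2 : ℝ) / 3) * Real.log Q₁ ^ 4) / (q * Q₁) := by
  have hq := hL.q_pos
  have hε := hL.pos
  have hlq := hL.log_large
  have hC := one_le_coreConst
  have hQ0 : 0 < Q₁ := by linarith
  obtain ⟨hW0, hW⟩ := mertens_cube hL hbig
  have hsum := sum_badSet_le hL a.isUnit hQ hQ3 hQu hbig 𝒦
  set W := mertensFactor q ((q : ℝ) ^ Real.sqrt ε) with hWdef
  have h1 : SG q ε Q₁ h Δ₁ Δ₂ Δ₃ Δ₄ Δ₅ Δ₆ 𝒦 B₄ B₅ B₆ a ≤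
      ∑ kbar ∈ 𝒦, 8 / ((q : ℝ) ^ 2 * Q₁) * (W ^ 3 * (badSet q ε Q₁ a kbar).card) := by
    unfold SG
    apply Finset.sum_le_sum
    intro kbar hkb
    have h2 := conv_le hL hm hW0 hΔ ha (hk kbar hkb) B₄ B₅ B₆
    have h3 := le_Skbar hL hQ0.le kbar
    have h5 : 0 < (q : ℝ) ^ 2 * Q₁ / 8 := by positivity
    have h4 : 1 / Skbar q ε Q₁ kbar ≤ 8 / ((q : ℝ) ^ 2 * Q₁) := by
      calc 1 / Skbar q ε Q₁ kbar ≤ 1 / ((q : ℝ) ^ 2 * Q₁ / 8) := by gcongr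
        _ = _ := one_div_div _ _
    have h6 : 0 ≤ 1 / Skbar q ε Q₁ kbar := by
      have : 0 < Skbar q ε Q₁ kbar := h5.trans_le h3
      positivity
    calc _ ≤ 1 / Skbar q ε Q₁ kbar * (W ^ 3 * (badSet q ε Q₁ a kbar).card) := by gcongr
      _ ≤ _ := by gcongr
  rw [← Finset.mul_sum, ← Finset.mul_sum] at h1
  refine h1.trans ?_
  have h2 : W ^ 3 * ∑ kbar ∈ 𝒦, ((badSet q ε Q₁ a kbar).card : ℝ) ≤
      (8 * Real.exp 33 * ε * Real.log q ^ 3 * ((Nat.totient q : ℝ) / q)) *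
        (coreConst / ε * q * Q₁ ^ ((2 : ℝ) / 3) * (10 ^ 13 * Real.log Q₁ ^ 4)) :=
    mul_le_mul hW hsum (Finset.sum_nonneg fun _ _ => Nat.cast_nonneg _) (by positivity)
  refine (mul_le_mul_of_nonneg_left h2 (by positivity)).trans (le_of_eq ?_)
  unfold finalConst
  generalize (10 : ℝ) ^ 13 = D
  field_simp
  ring

/-- For large `Q₁` the upper bound `SG_le` is smaller than the assumed lower bound. -/
lemma exists_Q₀ {c : ℝ} (hc : 0 < c) : ∃ Q₀ : ℝ, ∀ Q₁ ≥ Q₀, 3 ≤ Q₁ ∧ 100 ≤ Real.log Q₁ ∧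
    finalConst * Real.log Q₁ ^ 6 < c * Q₁ ^ ((1 : ℝ) / 4) := by
  have hF : 0 < finalConst := by
    have := one_le_coreConst
    unfold finalConst
    positivity
  have h1 := (isLittleO_log_rpow_rpow_atTop 6 (show (0 : ℝ) < 1 / 4 by norm_num)).def
    (show 0 < c / (2 * finalConst) by positivity)
  have h2 := Real.tendsto_log_atTop.eventually_ge_atTop 100
  obtain ⟨Q₀, hQ₀⟩ := Filter.eventually_atTop.1
    ((h1.and h2).and (Filter.eventually_ge_atTop 3))
  refine ⟨Q₀, fun Q₁ hQ₁ => ?_⟩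
  obtain ⟨⟨h3, h4⟩, h5⟩ := hQ₀ Q₁ hQ₁
  refine ⟨h5, h4, ?_⟩
  have h6 : Real.log Q₁ ^ (6 : ℝ) = Real.log Q₁ ^ 6 := by
    rw [show (6 : ℝ) = ((6 : ℕ) : ℝ) by norm_num, Real.rpow_natCast]
  have h7 : 0 < Q₁ ^ ((1 : ℝ) / 4) := by positivity
  rw [h6, Real.norm_of_nonneg (by positivity), Real.norm_of_nonneg h7.le] at h3
  calc finalConst * Real.log Q₁ ^ 6 ≤ finalConst * (c / (2 * finalConst) * Q₁ ^ ((1 : ℝ) / 4)) := by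
        gcongr
    _ = c * Q₁ ^ ((1 : ℝ) / 4) / 2 := by field_simp
    _ < _ := by linarith [mul_pos hc h7]

lemma exists_q₀ {ε : ℝ} (hε : 0 < ε) (hε1 : ε < 1 / 100) : ∃ q₀ : ℕ, ∀ q ≥ q₀, Large q ε ∧
    3 * (8 : ℝ) ^ ⌊3 / Real.sqrt ε⌋₊ ≤ (q : ℝ) ^ ε := by
  have h1 := (Real.tendsto_log_atTop.comp tendsto_natCast_atTop_atTop).eventually_ge_atTop
    (1 / ε ^ 2)
  have h2 := ((tendsto_rpow_atTop hε).comp tendsto_natCast_atTop_atTop).eventually_ge_atTop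
    (3 * (8 : ℝ) ^ ⌊3 / Real.sqrt ε⌋₊)
  obtain ⟨q₀, hq₀⟩ := Filter.eventually_atTop.1 (h1.and h2)
  refine ⟨q₀, fun q hq => ⟨⟨hε, hε1, ?_⟩, (hq₀ q hq).2⟩⟩
  have h3 : 1 / ε ^ 2 ≤ Real.log q := (hq₀ q hq).1
  rw [div_le_iff₀ (by positivity)] at h3
  linarith

/-- **Reduction to bounding `S` (General set-up).** If some choice of signs with
`Δ₁⋯Δ₆ = Δ`, some `𝒦 ⊆ (ℤ ∩ [-K,K])³` and some `B₄, B₅, B₆` make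
`S^{Δ̄,𝒦}_{B₄,B₅,B₆}(a)` at least `c (φ(q)/q) (log q)³ / (q Q₁^(1/100) (log Q₁)²)`, then
`a ∈ E_h^Δ(q² Q₁)`. -/
theorem reduction_to_S_general :
    ∃ ε₀ : ℝ, 0 < ε₀ ∧
      ∀ c : ℝ, 0 < c →
        ∃ Q₀ : ℝ,
          ∀ ε : ℝ, 0 < ε → ε < ε₀ →
            ∃ q₀ : ℕ,
              ∀ q : ℕ, q₀ ≤ q →
                ∀ Q₁ : ℝ, (Bq q : ℝ) ≤ Q₁ → Q₁ ≤ (q : ℝ) ^ (ε ^ 2) → Q₀ ≤ Q₁ →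
                  ∀ h : ℕ → ℝ, IsMultFn h → (∀ n : ℕ, h n ≠ 0) →
                    ∀ Δ : ℝ, (Δ = 1 ∨ Δ = -1) →
                      ∀ a : (ZMod q)ˣ,
                        (∃ Δ₁ Δ₂ Δ₃ Δ₄ Δ₅ Δ₆ : ℝ,
                          (Δ₁ = 1 ∨ Δ₁ = -1) ∧ (Δ₂ = 1 ∨ Δ₂ = -1) ∧ (Δ₃ = 1 ∨ Δ₃ = -1) ∧
                          (Δ₄ = 1 ∨ Δ₄ = -1) ∧ (Δ₅ = 1 ∨ Δ₅ = -1) ∧ (Δ₆ = 1 ∨ Δ₆ = -1) ∧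
                          Δ₁ * Δ₂ * Δ₃ * Δ₄ * Δ₅ * Δ₆ = Δ ∧
                          ∃ 𝒦 : Finset (ℤ × ℤ × ℤ),
                            (∀ kbar ∈ 𝒦,
                              |kbar.1| ≤ (⌊ε ^ 2 * Real.log q⌋₊ : ℤ) ∧
                              |kbar.2.1| ≤ (⌊ε ^ 2 * Real.log q⌋₊ : ℤ) ∧
                              |kbar.2.2| ≤ (⌊ε ^ 2 * Real.log q⌋₊ : ℤ)) ∧
                            ∃ B₄ B₅ B₆ : Set ((ZMod q)ˣ),
                              c * ((Nat.totient q : ℝ) / (q : ℝ)) * Real.log q ^ 3 /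
                                  ((q : ℝ) * Q₁ ^ ((1 : ℝ) / 100) * Real.log Q₁ ^ 2) ≤
                                SG q ε Q₁ h Δ₁ Δ₂ Δ₃ Δ₄ Δ₅ Δ₆ 𝒦 B₄ B₅ B₆ a) →
                        a ∈ EhSet q h Δ ((q : ℝ) ^ 2 * Q₁) := by
  refine ⟨1 / 100, by norm_num, fun c hc => ?_⟩
  obtain ⟨Q₀, hQ₀⟩ := exists_Q₀ hc
  refine ⟨Q₀, fun ε hε hε1 => ?_⟩
  obtain ⟨q₀, hq₀⟩ := exists_q₀ hε hε1
  refine ⟨q₀, fun q hq Q₁ _ hQu hQ h hm _ Δ _ a hex => ?_⟩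
  obtain ⟨Δ₁, Δ₂, Δ₃, Δ₄, Δ₅, Δ₆, -, -, -, -, -, -, hΔ, 𝒦, hk, B₄, B₅, B₆, hlow⟩ := hex
  obtain ⟨hL, hbig⟩ := hq₀ q hq
  obtain ⟨hQ3, hlog, hfin⟩ := hQ₀ Q₁ hQ
  by_contra ha
  have hup := hlow.trans (SG_le hL hlog hQ3 hQu hbig hm hΔ ha hk B₄ B₅ B₆)
  have hqpos := hL.q_pos
  have hlq := hL.log_large
  have hQ0 : 0 < Q₁ := by linarith
  have hw : 0 < (Nat.totient q : ℝ) / q := by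
    have : 0 < Nat.totient q := Nat.totient_pos.2 (by exact_mod_cast hqpos)
    positivity
  set X := (Nat.totient q : ℝ) / q * Real.log q ^ 3 / q with hX
  have hX0 : 0 < X := by positivity
  have h1 : X * (c / (Q₁ ^ ((1 : ℝ) / 100) * Real.log Q₁ ^ 2)) ≤
      X * (finalConst * (Q₁ ^ ((2 : ℝ) / 3) * Real.log Q₁ ^ 4) / Q₁) := by
    calc _ = _ := by rw [hX]; field_simp
      _ ≤ _ := hup
      _ = _ := by rw [hX]; field_simp
  have h2 := le_of_mul_le_mul_left h1 hX0
  rw [div_le_div_iff₀ (by positivity) hQ0] at h2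
  have hF : 0 ≤ finalConst := by
    have := one_le_coreConst
    unfold finalConst
    positivity
  have h3 : Q₁ ^ ((2 : ℝ) / 3) * Q₁ ^ ((1 : ℝ) / 100) ≤ Q₁ ^ ((3 : ℝ) / 4) := by
    rw [← Real.rpow_add hQ0]
    exact Real.rpow_le_rpow_of_exponent_le (by linarith) (by norm_num)
  have h4 : Q₁ ^ ((3 : ℝ) / 4) * Q₁ ^ ((1 : ℝ) / 4) = Q₁ := by
    rw [← Real.rpow_add hQ0]
    norm_num
  have h5 : c * Q₁ ≤ finalConst * Real.log Q₁ ^ 6 * Q₁ ^ ((3 : ℝ) / 4) := by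
    calc c * Q₁ ≤ _ := h2
      _ = finalConst * Real.log Q₁ ^ 6 * (Q₁ ^ ((2 : ℝ) / 3) * Q₁ ^ ((1 : ℝ) / 100)) := by ring
      _ ≤ _ := by gcongr
  have h6 : 0 < Q₁ ^ ((3 : ℝ) / 4) := by positivity
  have h7 := mul_lt_mul_of_pos_right hfin h6
  have h8 : c * Q₁ ^ ((1 : ℝ) / 4) * Q₁ ^ ((3 : ℝ) / 4) = c * Q₁ := by
    rw [mul_assoc, mul_comm (Q₁ ^ ((1 : ℝ) / 4)), h4]
  linarith
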